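/- arXiv:2412.00865 — 4 statements merged into one kernel-verified Lean document; each statement's English description precedes it below -/
import Mathlib

section
/- There exist λ₀ > 0 and C > 0, independent of λ and η, such that for every η > 0, every λ ∈ ℂ with |λ| ≤ λ₀, and every smooth compactly supported ψ : ℝ^d → ℂ, one has ‖ψ‖_{H_η} ≤ C · sup { |a(ψ,φ)| : φ : ℝ^d → ℂ smooth compactly supported with ‖φ‖_{H_η} ≤ 1 }. -/
open MeasureTheory Real

noncomputable section

/-- The sesquilinear form `a(ψ,φ)` of the paper:
`a(ψ,φ) = ∫ ∇(ψ/M)·∇(φ̄/M) M² + ∫ V ψ φ̄ + iη ∫ v₁ ψ φ̄ − λη^{2/3} ∫ ψ φ̄`,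
with `V(v) = ⟨v⟩^{-σ}`. -/
def aForm {d : ℕ} (h0 : 0 < d) (M : EuclideanSpace ℝ (Fin d) → ℝ) (σ η : ℝ) (l : ℂ)
    (ψ φ : EuclideanSpace ℝ (Fin d) → ℂ) : ℂ :=
  (∫ v, (∑ i : Fin d,
      fderiv ℝ (fun w => ψ w / (M w : ℂ)) v (EuclideanSpace.single i (1 : ℝ)) *
        fderiv ℝ (fun w => starRingEnd ℂ (φ w) / (M w : ℂ)) v (EuclideanSpace.single i (1 : ℝ)))
      * ((M v : ℂ)) ^ 2)
  + (∫ v, ((Real.sqrt (1 + ‖v‖ ^ 2) ^ (-σ) : ℝ) : ℂ) * (ψ v * starRingEnd ℂ (φ v)))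
  + Complex.I * (η : ℂ) * (∫ v, ((v (⟨0, h0⟩ : Fin d) : ℝ) : ℂ) * (ψ v * starRingEnd ℂ (φ v)))
  - l * ((η ^ ((2 : ℝ) / 3) : ℝ) : ℂ) * ∫ v, ψ v * starRingEnd ℂ (φ v)

/-- The squared norm `‖ψ‖²_{H_η}`. -/
def HnormSq {d : ℕ} (h0 : 0 < d) (M : EuclideanSpace ℝ (Fin d) → ℝ) (η : ℝ)
    (ψ : EuclideanSpace ℝ (Fin d) → ℂ) : ℝ :=
  (∫ v, ‖fderiv ℝ (fun w => ψ w / (M w : ℂ)) v‖ ^ 2 * (M v) ^ 2)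
  + (∫ v, ‖ψ v‖ ^ 2 / (1 + ‖v‖ ^ 2))
  + η * ∫ v, |v (⟨0, h0⟩ : Fin d)| * ‖ψ v‖ ^ 2

theorem int_of_zero {d : ℕ} {F : Type*} [NormedAddCommGroup F] {f : EuclideanSpace ℝ (Fin d) → F}
    {K : Set (EuclideanSpace ℝ (Fin d))}
    (hK : IsCompact K) (hf : Continuous f) (h : ∀ v, v ∉ K → f v = 0) : Integrable f :=
  hf.integrable_of_hasCompactSupport (HasCompactSupport.intro hK h)

theorem int_fderiv_zero {d : ℕ} {F : EuclideanSpace ℝ (Fin d) → ℝ} (hF : ContDiff ℝ 1 F)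
    (hc : HasCompactSupport F) (e : EuclideanSpace ℝ (Fin d)) :
    Integrable (fun v => fderiv ℝ F v e) ∧ ∫ v, fderiv ℝ F v e = 0 := by
  have h1 : Continuous (fun v => fderiv ℝ F v e) :=
    (hF.continuous_fderiv one_ne_zero).clm_apply continuous_const
  have h2 : Integrable (fun v => fderiv ℝ F v e) :=
    h1.integrable_of_hasCompactSupport (hc.fderiv_apply ℝ e)
  refine ⟨h2, ?_⟩
  have := integral_mul_fderiv_eq_neg_fderiv_mul_of_integrable (𝕜 := ℝ) (μ := volume)
    (f := fun _ : EuclideanSpace ℝ (Fin d) => (1 : ℝ)) (g := F) (v := e)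
    (by simp) (by simpa using h2)
    (by simpa using hF.continuous.integrable_of_hasCompactSupport hc)
    (fun x _ => differentiableAt_const _)
    (fun x _ => hF.differentiable one_ne_zero x)
  simpa using this

theorem hasFDerivAt_w {d : ℕ} (p : ℝ) (v : EuclideanSpace ℝ (Fin d)) :
    HasFDerivAt (fun v : EuclideanSpace ℝ (Fin d) => (1 + ‖v‖ ^ 2) ^ p)
      ((p * (1 + ‖v‖ ^ 2) ^ (p - 1)) • (2 • innerSL ℝ v)) v := by
  have h := (((hasFDerivAt_id v).norm_sq).const_add 1).rpow_const (p := p)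
    (Or.inl (by positivity))
  simpa using h

theorem contDiff_w {d : ℕ} (p : ℝ) :
    ContDiff ℝ 1 (fun v : EuclideanSpace ℝ (Fin d) => (1 + ‖v‖ ^ 2) ^ p) := by
  refine ContDiff.rpow_const_of_ne ?_ (fun v => by positivity)
  exact contDiff_const.add (contDiff_norm_sq ℝ)

theorem rpow_sub_one' {J : ℝ} (hJ : 0 < J) (p : ℝ) : J ^ (p - 1) = J ^ p / J :=
  Real.rpow_sub_one hJ.ne' p

theorem sqrt_rpow' {J : ℝ} (hJ : 0 ≤ J) (p : ℝ) : √J ^ p = J ^ (p / 2) := by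
  rw [Real.sqrt_eq_rpow, ← Real.rpow_mul hJ]; congr 1; ring

theorem eps_bound {a σ J : ℝ} (ha : 0 < a) (hσ : 2 < σ) (hJ : 1 ≤ J) :
    a / J ^ 2 ≤ (1 / 2) / J + (a * (2 * a) ^ (σ / 2)) * √J ^ (-σ) := by
  have hJ0 : 0 < J := by linarith
  rw [sqrt_rpow' hJ0.le]
  rcases le_or_gt (2 * a) J with h | h
  · have : a / J ^ 2 ≤ (1 / 2) / J := by
      rw [div_le_div_iff₀ (by positivity) hJ0]; nlinarith
    have h2 : 0 ≤ (a * (2 * a) ^ (σ / 2)) * J ^ (-σ / 2) := by positivity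
    linarith
  · have h1 : a / J ^ 2 ≤ a := div_le_self ha.le (by nlinarith)
    have h2 : J ^ (σ / 2) ≤ (2 * a) ^ (σ / 2) :=
      Real.rpow_le_rpow hJ0.le h.le (by linarith)
    have h3 : J ^ (σ / 2) * J ^ (-σ / 2) = 1 := by
      rw [← Real.rpow_add hJ0]; ring_nf; simp
    have h4 : 1 ≤ (2 * a) ^ (σ / 2) * J ^ (-σ / 2) := by
      rw [← h3]; gcongr
    have h5 : 0 ≤ (1 / 2) / J := by positivity
    nlinarith

theorem hasFDerivAt_q {d : ℕ} {g : EuclideanSpace ℝ (Fin d) → ℂ} (hg : ContDiff ℝ 1 g)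
    (v : EuclideanSpace ℝ (Fin d)) :
    HasFDerivAt (fun v => ‖g v‖ ^ 2) (2 • (innerSL ℝ (g v)).comp (fderiv ℝ g v)) v :=
  ((hg.differentiable one_ne_zero v).hasFDerivAt).norm_sq

theorem q_bound {d : ℕ} {g : EuclideanSpace ℝ (Fin d) → ℂ} 
    (v e : EuclideanSpace ℝ (Fin d)) :
    |(2 • (innerSL ℝ (g v)).comp (fderiv ℝ g v)) e| ≤ 2 * ‖g v‖ * ‖fderiv ℝ g v‖ * ‖e‖ := by
  have h1 := abs_real_inner_le_norm (g v) (fderiv ℝ g v e)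
  have h2 := (fderiv ℝ g v).le_opNorm e
  have h3 : (2 • (innerSL ℝ (g v)).comp (fderiv ℝ g v)) e = 2 * inner ℝ (g v) (fderiv ℝ g v e) := by
    simp [-Complex.inner]
  rw [h3, abs_mul, abs_two]
  have h4 := mul_le_mul_of_nonneg_left h2 (norm_nonneg (g v))
  nlinarith

theorem hardy_div {d : ℕ} (γ : ℝ) {g : EuclideanSpace ℝ (Fin d) → ℂ} (hg : ContDiff ℝ 1 g)
    (hc : HasCompactSupport g) :
    Integrable (fun v => (1 + ‖v‖ ^ 2) ^ (-γ) *
      ((d - 2 * (γ + 1)) / (1 + ‖v‖ ^ 2) * ‖g v‖ ^ 2 + 2 * (γ + 1) / (1 + ‖v‖ ^ 2) ^ 2 * ‖g v‖ ^ 2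
        + (2 • (innerSL ℝ (g v)).comp (fderiv ℝ g v)) v / (1 + ‖v‖ ^ 2))) ∧
    ∫ v, (1 + ‖v‖ ^ 2) ^ (-γ) *
      ((d - 2 * (γ + 1)) / (1 + ‖v‖ ^ 2) * ‖g v‖ ^ 2 + 2 * (γ + 1) / (1 + ‖v‖ ^ 2) ^ 2 * ‖g v‖ ^ 2
        + (2 • (innerSL ℝ (g v)).comp (fderiv ℝ g v)) v / (1 + ‖v‖ ^ 2)) = 0 := by
  let F : Fin d → EuclideanSpace ℝ (Fin d) → ℝ := fun i v => 
    v i * (1 + ‖v‖ ^ 2) ^ (-γ - 1) * ‖g v‖ ^ 2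
  have hFd : ∀ i, ContDiff ℝ 1 (F i) := fun i =>
    ((EuclideanSpace.proj (𝕜 := ℝ) i).contDiff.mul (contDiff_w _)).mul (hg.norm_sq ℝ)
  have hFc : ∀ i, HasCompactSupport (F i) := fun i =>
    HasCompactSupport.intro hc (fun v hv => by simp [F, image_eq_zero_of_notMem_tsupport hv])
  have key : ∀ v, (1 + ‖v‖ ^ 2) ^ (-γ) *
      ((d - 2 * (γ + 1)) / (1 + ‖v‖ ^ 2) * ‖g v‖ ^ 2 + 2 * (γ + 1) / (1 + ‖v‖ ^ 2) ^ 2 * ‖g v‖ ^ 2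
        + (2 • (innerSL ℝ (g v)).comp (fderiv ℝ g v)) v / (1 + ‖v‖ ^ 2)) =
      ∑ i, fderiv ℝ (F i) v (EuclideanSpace.single i (1 : ℝ)) := by
    intro v
    have hJ : 0 < 1 + ‖v‖ ^ 2 := by positivity
    have h1 : ∀ i, fderiv ℝ (F i) v (EuclideanSpace.single i (1 : ℝ)) =
        (1 + ‖v‖ ^ 2) ^ (-γ - 1) * ‖g v‖ ^ 2 
        + (v i) ^ 2 * (2 * (-γ - 1) * (1 + ‖v‖ ^ 2) ^ (-γ - 1 - 1) * ‖g v‖ ^ 2)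
        + (1 + ‖v‖ ^ 2) ^ (-γ - 1) * 
          (2 • (innerSL ℝ (g v)).comp (fderiv ℝ g v)) (v i • EuclideanSpace.single i (1 : ℝ)) := by
      intro i
      have := (((EuclideanSpace.proj (𝕜 := ℝ) i).hasFDerivAt (x := v)).mul 
        (hasFDerivAt_w (-γ - 1) v)).mul (hasFDerivAt_q hg v)
      have h2 : fderiv ℝ (F i) v = _ := this.fderiv
      rw [h2]
      rw [map_smul]
      simp [EuclideanSpace.inner_single_right]
      ring
    simp_rw [h1]
    rw [Finset.sum_add_distrib, Finset.sum_add_distrib, ← Finset.sum_mul (f := fun i => v i ^ 2), 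
      ← Finset.mul_sum (a := (1 + ‖v‖ ^ 2) ^ (-γ - 1)) (f := fun i => 
        (2 • (innerSL ℝ (g v)).comp (fderiv ℝ g v)) (v i • EuclideanSpace.single i (1 : ℝ))),
      ← map_sum]
    have h3 : ∑ i, v i • EuclideanSpace.single i (1 : ℝ) = v := by
      have := (EuclideanSpace.basisFun (Fin d) ℝ).sum_repr v
      simpa using this
    rw [h3, ← EuclideanSpace.real_norm_sq_eq, rpow_sub_one' hJ (-γ - 1), rpow_sub_one' hJ (-γ)]
    simp only [Finset.sum_const, Finset.card_univ, Fintype.card_fin, nsmul_eq_mul]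
    generalize (2 • (innerSL ℝ (g v)).comp (fderiv ℝ g v)) v = z
    field_simp
    ring
  simp_rw [key]
  refine ⟨integrable_finsetSum _ fun i _ => (int_fderiv_zero (hFd i) (hFc i) _).1, ?_⟩
  rw [integral_finsetSum _ fun i _ => (int_fderiv_zero (hFd i) (hFc i) _).1]
  exact Finset.sum_eq_zero fun i _ => (int_fderiv_zero (hFd i) (hFc i) _).2

theorem mono_div {d : ℕ} {f h D : EuclideanSpace ℝ (Fin d) → ℝ} (c : ℝ) (hf : Integrable f)
    (hh : Integrable h) (hD : Integrable D) (h0 : ∫ v, D v = 0) 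
    (H : ∀ v, f v ≤ h v + c * D v) : ∫ v, f v ≤ ∫ v, h v := by
  have h1 : ∫ v, f v ≤ ∫ v, (h v + c * D v) := integral_mono hf (hh.add (hD.const_mul c)) H
  rw [integral_add hh (hD.const_mul c), integral_const_mul, h0] at h1
  linarith

theorem aux_cancel {a b c I : ℝ} (hc : c ≠ 0) : a * (b * I) = a * b / c * (c * I) := by
  field_simp

theorem theta_deriv (r x : ℝ) : HasDerivAt (fun x : ℝ => x / (1 + (r * x) ^ 2)) 
        ((1 - (r * x) ^ 2) / (1 + (r * x) ^ 2) ^ 2) x := by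
  have h0 : 0 < 1 + (r * x) ^ 2 := by positivity
  have h2 : HasDerivAt (fun x : ℝ => 1 + (r * x) ^ 2) (2 * (r * x) * r) x := by
    have := (((hasDerivAt_id x).const_mul r).pow 2).const_add 1
    simpa using this
  have h1 := (hasDerivAt_id' x).fun_div h2 h0.ne'
  refine h1.congr_deriv ?_
  congr 1
  ring

theorem fderiv_zero_of {d : ℕ} {g : EuclideanSpace ℝ (Fin d) → ℂ}
    {v : EuclideanSpace ℝ (Fin d)} (hv : v ∉ tsupport g) : fderiv ℝ g v = 0 := by
  by_contra h
  exact hv (support_fderiv_subset ℝ h)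

theorem cont_V {d : ℕ} (σ : ℝ) :
    Continuous (fun v : EuclideanSpace ℝ (Fin d) => √(1 + ‖v‖ ^ 2) ^ (-σ)) := by
  refine Continuous.rpow_const (by fun_prop) (fun v => Or.inl ?_)
  have : 0 < √(1 + ‖v‖ ^ 2) := Real.sqrt_pos.2 (by positivity)
  exact this.ne'

theorem hardy {d : ℕ} {γ σ : ℝ} (hγ : (d : ℝ) / 2 < γ) (hσ : 2 < σ) :
    ∃ K : ℝ, 0 < K ∧ ∀ g : EuclideanSpace ℝ (Fin d) → ℂ, ContDiff ℝ 1 g → HasCompactSupport g →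
      ∫ v, (1 + ‖v‖ ^ 2) ^ (-γ) * (‖g v‖ ^ 2 / (1 + ‖v‖ ^ 2)) ≤
        K * ∫ v, (1 + ‖v‖ ^ 2) ^ (-γ) *
          (‖fderiv ℝ g v‖ ^ 2 + √(1 + ‖v‖ ^ 2) ^ (-σ) * ‖g v‖ ^ 2) := by
  have hd : (0 : ℝ) ≤ d := Nat.cast_nonneg d
  have ha : 0 < 2 * (γ + 1) := by linarith
  refine ⟨(2 * (γ + 1)) * (2 * (2 * (γ + 1))) ^ (σ / 2) + 2, by positivity, ?_⟩
  intro g hg hc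
  obtain ⟨hi, h0⟩ := hardy_div γ hg hc
  have hw : Continuous (fun v : EuclideanSpace ℝ (Fin d) => (1 + ‖v‖ ^ 2) ^ (-γ)) :=
    (contDiff_w (-γ)).continuous
  have hDg := hg.continuous_fderiv one_ne_zero
  have hgc := hg.continuous
  have hV := cont_V (d := d) σ
  have i1 : Integrable (fun v => (1 + ‖v‖ ^ 2) ^ (-γ) * (‖g v‖ ^ 2 / (1 + ‖v‖ ^ 2))) := by
    refine int_of_zero hc ?_ (fun v hv => by simp [image_eq_zero_of_notMem_tsupport hv])
    refine hw.mul (Continuous.div (by fun_prop) (by fun_prop) (fun v => by positivity))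
  have i2 : Integrable (fun v => (1 + ‖v‖ ^ 2) ^ (-γ) *
          (‖fderiv ℝ g v‖ ^ 2 + √(1 + ‖v‖ ^ 2) ^ (-σ) * ‖g v‖ ^ 2)) := by
    refine int_of_zero hc ?_ (fun v hv => by 
      simp [image_eq_zero_of_notMem_tsupport hv, fderiv_zero_of hv])
    exact hw.mul ((hDg.norm.pow 2).add (hV.mul (hgc.norm.pow 2)))
  rw [← integral_const_mul]
  refine mono_div (-1) i1 (i2.const_mul _) hi h0 (fun v => ?_)
  simp only
  have hz := q_bound (g := g) v v
  generalize (2 • (innerSL ℝ (g v)).comp (fderiv ℝ g v)) v = z at *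
  have hn := norm_nonneg v
  have hJJ : ‖v‖ ^ 2 ≤ 1 + ‖v‖ ^ 2 := by linarith
  have hJ1 : 1 ≤ 1 + ‖v‖ ^ 2 := by nlinarith
  generalize ‖v‖ = n at *
  generalize 1 + n ^ 2 = J at *
  have hJ : 0 < J := by linarith
  have hwp : 0 < J ^ (-γ) := by positivity
  have he := eps_bound ha hσ hJ1
  have hVp : 0 ≤ √J ^ (-σ) := by positivity
  generalize √J ^ (-σ) = V at *
  have hK1 : 0 ≤ (2 * (γ + 1)) * (2 * (2 * (γ + 1))) ^ (σ / 2) := by positivity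
  generalize (2 * (γ + 1)) * (2 * (2 * (γ + 1))) ^ (σ / 2) = K1 at *
  have hx := norm_nonneg (g v)
  have hy := norm_nonneg (fderiv ℝ g v)
  generalize ‖g v‖ = x at *
  generalize ‖fderiv ℝ g v‖ = y at *
  have e1 : z / J ≤ x ^ 2 / J / 2 + 2 * y ^ 2 := by
    have : z ≤ 2 * x * y * n := le_trans (le_abs_self z) hz
    have e2 : x ^ 2 * n ^ 2 / J ^ 2 ≤ x ^ 2 / J := by
      rw [div_le_div_iff₀ (by positivity) hJ]
      have : x ^ 2 * J * n ^ 2 ≤ x ^ 2 * J * J := by gcongr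
      linarith
    have e3 : 2 * x * y * n / J ≤ x ^ 2 * n ^ 2 / J ^ 2 / 2 + 2 * y ^ 2 := by
      have := sq_nonneg (x * n / J - 2 * y)
      have e4 : (x * n / J - 2 * y) ^ 2 = x ^ 2 * n ^ 2 / J ^ 2 - 2 * (2 * x * y * n / J) + 4 * y ^ 2 := by
        field_simp
        ring
      linarith
    have e5 : z / J ≤ 2 * x * y * n / J := by gcongr
    linarith
  have e6 := mul_le_mul_of_nonneg_right he (sq_nonneg x)
  have e7 : 0 ≤ (2 * (γ + 1) - d - 2) * (x ^ 2 / J) := mul_nonneg (by linarith) (by positivity)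
  have hK : 0 ≤ K1 * y ^ 2 := by positivity
  have e8 : (x ^ 2 / J) ≤ (K1 + 2) * (y ^ 2 + V * x ^ 2) - 
    ((d - 2 * (γ + 1)) / J * x ^ 2 + 2 * (γ + 1) / J ^ 2 * x ^ 2 + z / J) := by
    have e9 : (d - 2 * (γ + 1)) / J * x ^ 2 = (d - 2 * (γ + 1)) * (x ^ 2 / J) := by ring
    have e10 : 1 / 2 / J * x ^ 2 = x ^ 2 / J / 2 := by ring
    have e11 : 0 ≤ V * x ^ 2 := by positivity
    rw [e9]
    rw [add_mul, e10] at e6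
    nlinarith
  have := mul_le_mul_of_nonneg_left e8 hwp.le
  linarith

theorem nest {d : ℕ} (h0 : 0 < d) {γ r : ℝ} (hγ : 0 < γ) (hr : 0 < r) 
    {g : EuclideanSpace ℝ (Fin d) → ℂ} (hg : ContDiff ℝ 1 g) (hc : HasCompactSupport g) :
      r ^ 2 * ∫ v, (1 + ‖v‖ ^ 2) ^ (-γ) * ‖g v‖ ^ 2 ≤
        (6 + 4 * γ) * ∫ v, (1 + ‖v‖ ^ 2) ^ (-γ) *
          (‖fderiv ℝ g v‖ ^ 2 + ‖g v‖ ^ 2 / (1 + ‖v‖ ^ 2) 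
            + r ^ 2 * ((r * v ⟨0, h0⟩) ^ 2 / √(1 + (r * v ⟨0, h0⟩) ^ 2)) * ‖g v‖ ^ 2) := by
  let e : EuclideanSpace ℝ (Fin d) := EuclideanSpace.single ⟨0, h0⟩ 1
  let F : EuclideanSpace ℝ (Fin d) → ℝ := fun v => 
    (v ⟨0, h0⟩ / (1 + (r * v ⟨0, h0⟩) ^ 2)) * (1 + ‖v‖ ^ 2) ^ (-γ) * ‖g v‖ ^ 2
  have hp : ContDiff ℝ 1 (fun v : EuclideanSpace ℝ (Fin d) => v ⟨0, h0⟩) :=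
    (EuclideanSpace.proj (𝕜 := ℝ) (⟨0, h0⟩ : Fin d)).contDiff
  have hF : ContDiff ℝ 1 F := by
    refine ((hp.div (contDiff_const.add ((contDiff_const.mul hp).pow 2)) 
      (fun v => by positivity)).mul (contDiff_w _)).mul (hg.norm_sq ℝ)
  have hFc : HasCompactSupport F := 
    HasCompactSupport.intro hc (fun v hv => by simp [F, image_eq_zero_of_notMem_tsupport hv])
  obtain ⟨hi, hI⟩ := int_fderiv_zero hF hFc e
  have key : ∀ v, fderiv ℝ F v e = (1 + ‖v‖ ^ 2) ^ (-γ) * 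
      ((1 - (r * v ⟨0, h0⟩) ^ 2) / (1 + (r * v ⟨0, h0⟩) ^ 2) ^ 2 * ‖g v‖ ^ 2 
      - 2 * γ * ((v ⟨0, h0⟩) ^ 2 / (1 + (r * v ⟨0, h0⟩) ^ 2)) * ‖g v‖ ^ 2 / (1 + ‖v‖ ^ 2)
      + v ⟨0, h0⟩ / (1 + (r * v ⟨0, h0⟩) ^ 2) * 
          (2 • (innerSL ℝ (g v)).comp (fderiv ℝ g v)) e) := by
    intro v
    have hJ : 0 < 1 + ‖v‖ ^ 2 := by positivity
    have hth : HasDerivAt (fun x : ℝ => x / (1 + (r * x) ^ 2)) 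
        ((1 - (r * v ⟨0, h0⟩) ^ 2) / (1 + (r * v ⟨0, h0⟩) ^ 2) ^ 2) (v ⟨0, h0⟩) := theta_deriv r _
    have hth2 := hth.comp_hasFDerivAt v 
      ((EuclideanSpace.proj (𝕜 := ℝ) (⟨0, h0⟩ : Fin d)).hasFDerivAt (x := v))
    have := (hth2.mul (hasFDerivAt_w (-γ) v)).mul (hasFDerivAt_q hg v)
    have h2 : fderiv ℝ F v = _ := this.fderiv
    rw [h2]
    have h3 : inner ℝ v e = v ⟨0, h0⟩ := by simp [e, EuclideanSpace.inner_single_right]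
    have h4 : e ⟨0, h0⟩ = 1 := by simp [e]
    simp [h3, h4, -Complex.inner]
    rw [rpow_sub_one' hJ]
    ring
  have hw : Continuous (fun v : EuclideanSpace ℝ (Fin d) => (1 + ‖v‖ ^ 2) ^ (-γ)) :=
    (contDiff_w (-γ)).continuous
  have hDg := hg.continuous_fderiv one_ne_zero
  have hgc := hg.continuous
  have i1 : Integrable (fun v => (1 + ‖v‖ ^ 2) ^ (-γ) * ‖g v‖ ^ 2) := by
    refine int_of_zero hc ?_ (fun v hv => by simp [image_eq_zero_of_notMem_tsupport hv])
    exact hw.mul (by fun_prop)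
  have i2 : Integrable (fun v => (1 + ‖v‖ ^ 2) ^ (-γ) *
          (‖fderiv ℝ g v‖ ^ 2 + ‖g v‖ ^ 2 / (1 + ‖v‖ ^ 2) 
            + r ^ 2 * ((r * v ⟨0, h0⟩) ^ 2 / √(1 + (r * v ⟨0, h0⟩) ^ 2)) * ‖g v‖ ^ 2)) := by
    refine int_of_zero hc ?_ (fun v hv => by 
      simp [image_eq_zero_of_notMem_tsupport hv, fderiv_zero_of hv])
    have hpc := hp.continuous
    refine hw.mul (((hDg.norm.pow 2).add (Continuous.div (by fun_prop) (by fun_prop) 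
      (fun v => by positivity))).add (Continuous.mul (continuous_const.mul 
        (Continuous.div (by fun_prop) (by fun_prop) (fun v => ?_))) (by fun_prop)))
    exact (Real.sqrt_pos.2 (by positivity)).ne'
  rw [← integral_const_mul, ← integral_const_mul]
  refine mono_div (2 * r ^ 2) (i1.const_mul _) (i2.const_mul _) hi hI (fun v => ?_)
  simp only
  rw [key]
  have hz := q_bound (g := g) v e
  have he1 : ‖e‖ = 1 := by simp [e]
  rw [he1, mul_one] at hz
  generalize (2 • (innerSL ℝ (g v)).comp (fderiv ℝ g v)) e = z at *
  have hJ : 0 < 1 + ‖v‖ ^ 2 := by positivity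
  generalize 1 + ‖v‖ ^ 2 = J at *
  have hwp : 0 < J ^ (-γ) := by positivity
  generalize J ^ (-γ) = w at *
  have hx := norm_nonneg (g v)
  have hy := norm_nonneg (fderiv ℝ g v)
  generalize ‖g v‖ = x at *
  generalize ‖fderiv ℝ g v‖ = y at *
  obtain ⟨s, hs⟩ : ∃ s, s = r * v ⟨0, h0⟩ := ⟨_, rfl⟩
  have hv1 : v ⟨0, h0⟩ = s / r := by rw [hs]; field_simp
  rw [← hs, hv1]
  have hS : 1 ≤ √(1 + s ^ 2) := by rw [Real.one_le_sqrt]; nlinarith [sq_nonneg s]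
  have hS2 : √(1 + s ^ 2) ^ 2 = 1 + s ^ 2 := Real.sq_sqrt (by positivity)
  have b1 : 1 ≤ (1 - s ^ 2) / (1 + s ^ 2) ^ 2 + 3 * (s ^ 2 / √(1 + s ^ 2)) := by
    have : s ^ 2 / (1 + s ^ 2) ≤ s ^ 2 / √(1 + s ^ 2) := by
      apply div_le_div_of_nonneg_left (by positivity) (by linarith); nlinarith
    have h2 : 1 - (1 - s ^ 2) / (1 + s ^ 2) ^ 2 ≤ 3 * (s ^ 2 / (1 + s ^ 2)) := by
      have e3 : 3 * (s ^ 2 / (1 + s ^ 2)) - (1 - (1 - s ^ 2) / (1 + s ^ 2) ^ 2) 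
        = 2 * s ^ 4 / (1 + s ^ 2) ^ 2 := by field_simp; ring
      have : 0 ≤ 2 * s ^ 4 / (1 + s ^ 2) ^ 2 := by positivity
      linarith
    linarith
  have hB : 0 ≤ s ^ 2 / √(1 + s ^ 2) := by positivity
  have b2 : r ^ 2 * (2 * γ * ((s / r) ^ 2 / (1 + s ^ 2)) * x ^ 2 / J) ≤ 2 * γ * (x ^ 2 / J) := by
    have e1 : r ^ 2 * (2 * γ * ((s / r) ^ 2 / (1 + s ^ 2)) * x ^ 2 / J) = 
      (s ^ 2 / (1 + s ^ 2)) * (2 * γ * (x ^ 2 / J)) := by field_simp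
    rw [e1]
    refine mul_le_of_le_one_left (by positivity) ?_
    rw [div_le_one (by positivity)]; linarith
  have b3 : - (r ^ 2 * (s / r / (1 + s ^ 2) * z)) ≤ (r ^ 2 * x ^ 2 + y ^ 2) / 2 := by
    have e1 : r ^ 2 * (s / r / (1 + s ^ 2) * z) = r * ((s / (1 + s ^ 2)) * z) := by field_simp
    have e2 : |s / (1 + s ^ 2)| ≤ 1 / 2 := by
      rw [abs_le]; constructor
      · rw [le_div_iff₀ (by positivity)]; nlinarith [sq_nonneg (s + 1)]
      · rw [div_le_iff₀ (by positivity)]; nlinarith [sq_nonneg (s - 1)]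
    have e3 : |(s / (1 + s ^ 2)) * z| ≤ 1 / 2 * (2 * x * y) := by
      rw [abs_mul]; exact mul_le_mul e2 hz (abs_nonneg _) (by norm_num)
    rw [e1]
    have e4 := mul_le_mul_of_nonneg_left (neg_le_of_abs_le e3) hr.le
    nlinarith [sq_nonneg (r * x - y)]
  generalize s ^ 2 / √(1 + s ^ 2) = B at *
  generalize (1 - s ^ 2) / (1 + s ^ 2) ^ 2 = T at *
  generalize (2 * γ * ((s / r) ^ 2 / (1 + s ^ 2)) * x ^ 2 / J) = U at *
  generalize s / r / (1 + s ^ 2) * z = Z at *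
  have hq : 0 ≤ x ^ 2 / J := by positivity
  generalize x ^ 2 / J = Q at *
  have b4 := mul_le_mul_of_nonneg_left b1 (show 0 ≤ r ^ 2 * x ^ 2 by positivity)
  have fin : r ^ 2 * x ^ 2 ≤ (6 + 4 * γ) * (y ^ 2 + Q + r ^ 2 * B * x ^ 2) 
     + 2 * r ^ 2 * (T * x ^ 2 - U + Z) := by
    have c1 : 0 ≤ γ * y ^ 2 := by positivity
    have c2 : 0 ≤ γ * (r ^ 2 * B * x ^ 2) := by positivity
    nlinarith
  have := mul_le_mul_of_nonneg_left fin hwp.le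
  linarith

theorem g_contDiff {d : ℕ} {M : EuclideanSpace ℝ (Fin d) → ℝ} (hMpos : ∀ v, 0 < M v)
    (hM : ContDiff ℝ 1 M) {ψ : EuclideanSpace ℝ (Fin d) → ℂ} (hψ : ContDiff ℝ (⊤ : ℕ∞) ψ) :
    ContDiff ℝ 1 (fun w => ψ w / (M w : ℂ)) := by
  have h1 : ContDiff ℝ 1 (fun w => (M w)⁻¹ • ψ w) :=
    (hM.inv (fun v => (hMpos v).ne')).smul (hψ.of_le (by exact_mod_cast le_top))
  convert h1 using 2 with w
  rw [Complex.real_smul, Complex.ofReal_inv, div_eq_inv_mul]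

theorem g_zero {d : ℕ} {M : EuclideanSpace ℝ (Fin d) → ℝ} 
    {ψ : EuclideanSpace ℝ (Fin d) → ℂ} {v : EuclideanSpace ℝ (Fin d)} (hv : v ∉ tsupport ψ) : 
    ψ v = 0 ∧ fderiv ℝ (fun w => ψ w / (M w : ℂ)) v = 0 := by
  refine ⟨image_eq_zero_of_notMem_tsupport hv, fderiv_zero_of (fun h => hv ?_)⟩
  refine closure_mono ?_ h
  intro x hx
  rw [Function.mem_support] at hx ⊢
  intro h; simp [h] at hx

theorem g_compact {d : ℕ} {M : EuclideanSpace ℝ (Fin d) → ℝ} 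
    {ψ : EuclideanSpace ℝ (Fin d) → ℂ} (hc : HasCompactSupport ψ) : 
    HasCompactSupport (fun w => ψ w / (M w : ℂ)) :=
  HasCompactSupport.intro hc (fun v hv => by simp [image_eq_zero_of_notMem_tsupport hv])

/-- Dirichlet energy. -/
def qE {d : ℕ} (M : EuclideanSpace ℝ (Fin d) → ℝ) (ψ : EuclideanSpace ℝ (Fin d) → ℂ) : ℝ :=
  ∫ v, ‖fderiv ℝ (fun w => ψ w / (M w : ℂ)) v‖ ^ 2 * (M v) ^ 2
/-- Hardy term. -/
def qH {d : ℕ} (ψ : EuclideanSpace ℝ (Fin d) → ℂ) : ℝ := ∫ v, ‖ψ v‖ ^ 2 / (1 + ‖v‖ ^ 2)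
/-- Weighted mass. -/
def qZ {d : ℕ} (h0 : 0 < d) (ψ : EuclideanSpace ℝ (Fin d) → ℂ) : ℝ :=
  ∫ v, |v (⟨0, h0⟩ : Fin d)| * ‖ψ v‖ ^ 2
/-- Potential term. -/
def qW {d : ℕ} (σ : ℝ) (ψ : EuclideanSpace ℝ (Fin d) → ℂ) : ℝ :=
  ∫ v, √(1 + ‖v‖ ^ 2) ^ (-σ) * ‖ψ v‖ ^ 2
/-- Mass. -/
def qN {d : ℕ} (ψ : EuclideanSpace ℝ (Fin d) → ℂ) : ℝ := ∫ v, ‖ψ v‖ ^ 2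
/-- Regularised weighted mass. -/
def qB {d : ℕ} (h0 : 0 < d) (r : ℝ) (ψ : EuclideanSpace ℝ (Fin d) → ℂ) : ℝ :=
  ∫ v, (r * v (⟨0, h0⟩ : Fin d)) ^ 2 / √(1 + (r * v (⟨0, h0⟩ : Fin d)) ^ 2) * ‖ψ v‖ ^ 2

section ints
variable {d : ℕ} {M : EuclideanSpace ℝ (Fin d) → ℝ} {ψ : EuclideanSpace ℝ (Fin d) → ℂ}

theorem iE (hMpos : ∀ v, 0 < M v) (hM : ContDiff ℝ 1 M)
    (hψ : ContDiff ℝ (⊤ : ℕ∞) ψ) (hc : HasCompactSupport ψ) :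
    Integrable (fun v => ‖fderiv ℝ (fun w => ψ w / (M w : ℂ)) v‖ ^ 2 * (M v) ^ 2) := by
  have hD := (g_contDiff hMpos hM hψ).continuous_fderiv one_ne_zero
  exact int_of_zero hc ((hD.norm.pow 2).mul (hM.continuous.pow 2)) 
    (fun v hv => by simp [g_zero (M := M) hv])

theorem iH (hψ : ContDiff ℝ (⊤ : ℕ∞) ψ) (hc : HasCompactSupport ψ) :
    Integrable (fun v => ‖ψ v‖ ^ 2 / (1 + ‖v‖ ^ 2)) := by
  have h := hψ.continuous
  exact int_of_zero hc (Continuous.div (by fun_prop) (by fun_prop) (fun v => by positivity))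
    (fun v hv => by simp [image_eq_zero_of_notMem_tsupport hv])

theorem iZ (h0 : 0 < d) (hψ : ContDiff ℝ (⊤ : ℕ∞) ψ) (hc : HasCompactSupport ψ) :
    Integrable (fun v => |v (⟨0, h0⟩ : Fin d)| * ‖ψ v‖ ^ 2) := by
  have h := hψ.continuous
  exact int_of_zero hc (by fun_prop)
    (fun v hv => by simp [image_eq_zero_of_notMem_tsupport hv])

theorem iW (σ : ℝ) (hψ : ContDiff ℝ (⊤ : ℕ∞) ψ) (hc : HasCompactSupport ψ) :
    Integrable (fun v => √(1 + ‖v‖ ^ 2) ^ (-σ) * ‖ψ v‖ ^ 2) := by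
  have h := hψ.continuous
  exact int_of_zero hc ((cont_V σ).mul (by fun_prop))
    (fun v hv => by simp [image_eq_zero_of_notMem_tsupport hv])

theorem iN (hψ : ContDiff ℝ (⊤ : ℕ∞) ψ) (hc : HasCompactSupport ψ) :
    Integrable (fun v => ‖ψ v‖ ^ 2) := by
  have h := hψ.continuous
  exact int_of_zero hc (by fun_prop)
    (fun v hv => by simp [image_eq_zero_of_notMem_tsupport hv])

theorem sqrt_ne (x : ℝ) : √(1 + x ^ 2) ≠ 0 := (Real.sqrt_pos.2 (by positivity)).ne'

theorem iB (h0 : 0 < d) (r : ℝ) (hψ : ContDiff ℝ (⊤ : ℕ∞) ψ) (hc : HasCompactSupport ψ) :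
    Integrable (fun v => (r * v (⟨0, h0⟩ : Fin d)) ^ 2 / √(1 + (r * v (⟨0, h0⟩ : Fin d)) ^ 2) 
      * ‖ψ v‖ ^ 2) := by
  have h := hψ.continuous
  exact int_of_zero hc (Continuous.mul (Continuous.div (by fun_prop) (by fun_prop) 
    (fun v => sqrt_ne _)) (by fun_prop)) (fun v hv => by simp [image_eq_zero_of_notMem_tsupport hv])

theorem qE_nonneg : 0 ≤ qE M ψ := integral_nonneg fun v => by positivity
theorem qH_nonneg : 0 ≤ qH ψ := integral_nonneg fun v => by positivity
theorem qZ_nonneg (h0 : 0 < d) : 0 ≤ qZ h0 ψ := integral_nonneg fun v => by positivity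
theorem qW_nonneg (σ : ℝ) : 0 ≤ qW σ ψ := integral_nonneg fun v => by positivity
theorem qN_nonneg : 0 ≤ qN ψ := integral_nonneg fun v => by positivity
theorem qB_nonneg (h0 : 0 < d) (r : ℝ) : 0 ≤ qB h0 r ψ := integral_nonneg fun v => by positivity

theorem norm_psi (hMpos : ∀ v, 0 < M v) (v : EuclideanSpace ℝ (Fin d)) : 
    ‖ψ v‖ ^ 2 = (M v) ^ 2 * ‖ψ v / (M v : ℂ)‖ ^ 2 := by
  have := hMpos v
  rw [norm_div, Complex.norm_real, Real.norm_of_nonneg this.le]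
  field_simp

theorem M_w {γ C₁ C₂ : ℝ} (hC₁ : 0 < C₁) 
    (hA1 : ∀ v, C₁ * Real.sqrt (1 + ‖v‖ ^ 2) ^ (-γ) ≤ M v ∧
              M v ≤ C₂ * Real.sqrt (1 + ‖v‖ ^ 2) ^ (-γ)) (v : EuclideanSpace ℝ (Fin d)) :
    C₁ ^ 2 * (1 + ‖v‖ ^ 2) ^ (-γ) ≤ (M v) ^ 2 ∧ (M v) ^ 2 ≤ C₂ ^ 2 * (1 + ‖v‖ ^ 2) ^ (-γ) := by
  have hJ : 0 < 1 + ‖v‖ ^ 2 := by positivity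
  have h1 : (1 + ‖v‖ ^ 2) ^ (-γ) = (√(1 + ‖v‖ ^ 2) ^ (-γ)) ^ 2 := by
    rw [sqrt_rpow' hJ.le, sq ((1 + ‖v‖ ^ 2) ^ (-γ / 2)), ← Real.rpow_add hJ]
    congr 1; ring
  obtain ⟨h2, h3⟩ := hA1 v
  have h4 : 0 < √(1 + ‖v‖ ^ 2) ^ (-γ) := Real.rpow_pos_of_pos (Real.sqrt_pos.2 hJ) _
  rw [h1, ← mul_pow, ← mul_pow]
  have h5 : 0 < C₁ * √(1 + ‖v‖ ^ 2) ^ (-γ) := by positivity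
  constructor
  · gcongr
  · have : 0 ≤ M v := by linarith
    gcongr

theorem L1 {γ C₁ C₂ σ : ℝ} (hγ : (d : ℝ) / 2 < γ) (hσ : 2 < σ) (hC₁ : 0 < C₁) (hC₁₂ : C₁ ≤ C₂)
    (hMpos : ∀ v, 0 < M v) (hM : ContDiff ℝ 1 M)
    (hA1 : ∀ v, C₁ * Real.sqrt (1 + ‖v‖ ^ 2) ^ (-γ) ≤ M v ∧
              M v ≤ C₂ * Real.sqrt (1 + ‖v‖ ^ 2) ^ (-γ)) : 
    ∃ K : ℝ, 0 < K ∧ ∀ ψ : EuclideanSpace ℝ (Fin d) → ℂ, ContDiff ℝ (⊤ : ℕ∞) ψ → 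
      HasCompactSupport ψ → qH ψ ≤ K * (qE M ψ + qW σ ψ) := by
  obtain ⟨K, hK, h⟩ := hardy (d := d) hγ hσ
  have hC₂ : 0 < C₂ := by linarith
  refine ⟨C₂ ^ 2 * K / C₁ ^ 2, by positivity, fun ψ hψ hc => ?_⟩
  have hgC := g_contDiff hMpos hM hψ
  have hgc := g_compact (M := M) hc
  have h1 := h _ hgC hgc
  have hw : Continuous (fun v : EuclideanSpace ℝ (Fin d) => (1 + ‖v‖ ^ 2) ^ (-γ)) :=
    (contDiff_w (-γ)).continuous
  have hD := hgC.continuous_fderiv one_ne_zero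
  have hcg := hgC.continuous
  have a1 : qH ψ ≤ C₂ ^ 2 * ∫ v, (1 + ‖v‖ ^ 2) ^ (-γ) * (‖ψ v / (M v : ℂ)‖ ^ 2 / (1 + ‖v‖ ^ 2)) := by
    rw [← integral_const_mul]
    refine integral_mono (iH hψ hc) (Integrable.const_mul ?_ _) (fun v => ?_)
    · refine int_of_zero hc ?_ (fun v hv => by simp [image_eq_zero_of_notMem_tsupport hv])
      exact hw.mul (Continuous.div (by fun_prop) (by fun_prop) (fun v => by positivity))
    · simp only
      rw [norm_psi hMpos v]
      have := (M_w hC₁ hA1 v).2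
      calc _ ≤ (C₂ ^ 2 * (1 + ‖v‖ ^ 2) ^ (-γ)) * ‖ψ v / (M v : ℂ)‖ ^ 2 / (1 + ‖v‖ ^ 2) := by gcongr
        _ = _ := by ring
  have a2 : C₁ ^ 2 * ∫ v, (1 + ‖v‖ ^ 2) ^ (-γ) *
          (‖fderiv ℝ (fun w => ψ w / (M w : ℂ)) v‖ ^ 2 + √(1 + ‖v‖ ^ 2) ^ (-σ) * 
            ‖ψ v / (M v : ℂ)‖ ^ 2) ≤ qE M ψ + qW σ ψ := by
    rw [← integral_const_mul, qE, qW, ← integral_add (iE hMpos hM hψ hc) (iW σ hψ hc)]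
    refine integral_mono (Integrable.const_mul ?_ _) ((iE hMpos hM hψ hc).add (iW σ hψ hc)) 
      (fun v => ?_)
    · refine int_of_zero hc ?_ (fun v hv => by simp [g_zero (M := M) hv])
      exact hw.mul ((hD.norm.pow 2).add ((cont_V σ).mul (hcg.norm.pow 2)))
    · simp only
      rw [norm_psi hMpos v]
      have := (M_w hC₁ hA1 v).1
      calc _ = (C₁ ^ 2 * (1 + ‖v‖ ^ 2) ^ (-γ)) * (‖fderiv ℝ (fun w => ψ w / (M w : ℂ)) v‖ ^ 2 
              + √(1 + ‖v‖ ^ 2) ^ (-σ) * ‖ψ v / (M v : ℂ)‖ ^ 2) := by ring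
        _ ≤ (M v) ^ 2 * (‖fderiv ℝ (fun w => ψ w / (M w : ℂ)) v‖ ^ 2 
              + √(1 + ‖v‖ ^ 2) ^ (-σ) * ‖ψ v / (M v : ℂ)‖ ^ 2) := by gcongr
        _ = _ := by ring
  refine a1.trans ((mul_le_mul_of_nonneg_left h1 (by positivity)).trans ?_)
  have a3 := mul_le_mul_of_nonneg_left a2 (show 0 ≤ C₂ ^ 2 * K / C₁ ^ 2 by positivity)
  refine le_trans (le_of_eq ?_) a3
  field_simp

theorem L2 (h0 : 0 < d) {γ C₁ C₂ : ℝ} (hγ : (d : ℝ) / 2 < γ) (hC₁ : 0 < C₁) (hC₁₂ : C₁ ≤ C₂)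
    (hMpos : ∀ v, 0 < M v) (hM : ContDiff ℝ 1 M)
    (hA1 : ∀ v, C₁ * Real.sqrt (1 + ‖v‖ ^ 2) ^ (-γ) ≤ M v ∧
              M v ≤ C₂ * Real.sqrt (1 + ‖v‖ ^ 2) ^ (-γ)) : 
    ∃ K : ℝ, 0 < K ∧ ∀ r : ℝ, 0 < r → 
      ∀ ψ : EuclideanSpace ℝ (Fin d) → ℂ, ContDiff ℝ (⊤ : ℕ∞) ψ → 
      HasCompactSupport ψ → r ^ 2 * qN ψ ≤ K * (qE M ψ + qH ψ + r ^ 2 * qB h0 r ψ) := by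
  have hC₂ : 0 < C₂ := by linarith
  have hγ0 : 0 < γ := lt_of_le_of_lt (by positivity) hγ
  refine ⟨C₂ ^ 2 * (6 + 4 * γ) / C₁ ^ 2, by positivity, fun r hr ψ hψ hc => ?_⟩
  have hgC := g_contDiff hMpos hM hψ
  have hgc := g_compact (M := M) hc
  have h1 := nest h0 hγ0 hr hgC hgc
  have hw : Continuous (fun v : EuclideanSpace ℝ (Fin d) => (1 + ‖v‖ ^ 2) ^ (-γ)) :=
    (contDiff_w (-γ)).continuous
  have hD := hgC.continuous_fderiv one_ne_zero
  have hcg := hgC.continuous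
  have a1 : qN ψ ≤ C₂ ^ 2 * ∫ v, (1 + ‖v‖ ^ 2) ^ (-γ) * ‖ψ v / (M v : ℂ)‖ ^ 2 := by
    rw [← integral_const_mul]
    refine integral_mono (iN hψ hc) (Integrable.const_mul ?_ _) (fun v => ?_)
    · refine int_of_zero hc ?_ (fun v hv => by simp [image_eq_zero_of_notMem_tsupport hv])
      exact hw.mul (by fun_prop)
    · simp only
      rw [norm_psi hMpos v]
      have := (M_w hC₁ hA1 v).2
      calc _ ≤ (C₂ ^ 2 * (1 + ‖v‖ ^ 2) ^ (-γ)) * ‖ψ v / (M v : ℂ)‖ ^ 2 := by gcongr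
        _ = _ := by ring
  have a2 : C₁ ^ 2 * ∫ v, (1 + ‖v‖ ^ 2) ^ (-γ) *
          (‖fderiv ℝ (fun w => ψ w / (M w : ℂ)) v‖ ^ 2 + ‖ψ v / (M v : ℂ)‖ ^ 2 / (1 + ‖v‖ ^ 2)
            + r ^ 2 * ((r * v ⟨0, h0⟩) ^ 2 / √(1 + (r * v ⟨0, h0⟩) ^ 2)) * ‖ψ v / (M v : ℂ)‖ ^ 2) 
        ≤ qE M ψ + qH ψ + r ^ 2 * qB h0 r ψ := by
    have iEH : Integrable (fun v => ‖fderiv ℝ (fun w => ψ w / (M w : ℂ)) v‖ ^ 2 * (M v) ^ 2 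
        + ‖ψ v‖ ^ 2 / (1 + ‖v‖ ^ 2)) := (iE hMpos hM hψ hc).add (iH hψ hc)
    rw [← integral_const_mul, qE, qH, qB, ← integral_const_mul, 
      ← integral_add (iE hMpos hM hψ hc) (iH hψ hc), 
      ← integral_add iEH ((iB h0 r hψ hc).const_mul _)]
    refine integral_mono (Integrable.const_mul ?_ _) (iEH.add ((iB h0 r hψ hc).const_mul _))  (fun v => ?_)
    · refine int_of_zero hc ?_ (fun v hv => by simp [g_zero (M := M) hv])
      refine hw.mul (((hD.norm.pow 2).add (Continuous.div (by fun_prop) (by fun_prop) 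
        (fun v => by positivity))).add (Continuous.mul (continuous_const.mul 
        (Continuous.div (by fun_prop) (by fun_prop) (fun v => sqrt_ne _))) (by fun_prop)))
    · simp only
      rw [norm_psi hMpos v]
      have := (M_w hC₁ hA1 v).1
      have hB : 0 ≤ (r * v ⟨0, h0⟩) ^ 2 / √(1 + (r * v ⟨0, h0⟩) ^ 2) := by positivity
      generalize (r * v ⟨0, h0⟩) ^ 2 / √(1 + (r * v ⟨0, h0⟩) ^ 2) = B at *
      calc _ = (C₁ ^ 2 * (1 + ‖v‖ ^ 2) ^ (-γ)) * (‖fderiv ℝ (fun w => ψ w / (M w : ℂ)) v‖ ^ 2 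
              + ‖ψ v / (M v : ℂ)‖ ^ 2 / (1 + ‖v‖ ^ 2) + r ^ 2 * B * ‖ψ v / (M v : ℂ)‖ ^ 2) := by ring
        _ ≤ (M v) ^ 2 * (‖fderiv ℝ (fun w => ψ w / (M w : ℂ)) v‖ ^ 2 
              + ‖ψ v / (M v : ℂ)‖ ^ 2 / (1 + ‖v‖ ^ 2) + r ^ 2 * B * ‖ψ v / (M v : ℂ)‖ ^ 2) := by gcongr
        _ = _ := by ring
  have a4 := mul_le_mul_of_nonneg_left a1 (show 0 ≤ r ^ 2 by positivity)
  have a5 := mul_le_mul_of_nonneg_left h1 (show 0 ≤ C₂ ^ 2 by positivity)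
  have a3 := mul_le_mul_of_nonneg_left a2 (show 0 ≤ C₂ ^ 2 * (6 + 4 * γ) / C₁ ^ 2 by positivity)
  refine le_trans (a4.trans (le_trans (le_of_eq ?_) a5)) (le_trans (le_of_eq ?_) a3)
  · ring
  · exact aux_cancel (by positivity)

theorem L3 (h0 : 0 < d) {r : ℝ} (hr : 0 < r) (hψ : ContDiff ℝ (⊤ : ℕ∞) ψ) 
    (hc : HasCompactSupport ψ) : 
    r ^ 2 * qB h0 r ψ ≤ r ^ 3 * qZ h0 ψ ∧ r ^ 3 * qZ h0 ψ ≤ r ^ 2 * qN ψ + r ^ 2 * qB h0 r ψ := by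
  have key : ∀ s : ℝ, s ^ 2 / √(1 + s ^ 2) ≤ |s| ∧ |s| ≤ 1 + s ^ 2 / √(1 + s ^ 2) := by
    intro s
    have hS2 : √(1 + s ^ 2) ^ 2 = 1 + s ^ 2 := Real.sq_sqrt (by positivity)
    have hS0 : 0 < √(1 + s ^ 2) := Real.sqrt_pos.2 (by positivity)
    have hs := abs_nonneg s
    have hs2 := sq_abs s
    have h1 : |s| ≤ √(1 + s ^ 2) := Real.le_sqrt_of_sq_le (by linarith)
    constructor
    · rw [div_le_iff₀ hS0]; nlinarith
    · have : |s| - 1 ≤ s ^ 2 / √(1 + s ^ 2) := by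
        rw [le_div_iff₀ hS0]
        rcases le_or_gt (|s|) 1 with h | h
        · nlinarith
        · have h2 : √(1 + s ^ 2) ≤ 1 + |s| := by
            apply Real.sqrt_le_iff.2; constructor
            · linarith
            · nlinarith
          nlinarith
      linarith
  constructor
  · have : qB h0 r ψ ≤ r * qZ h0 ψ := by
      rw [qB, qZ, ← integral_const_mul]
      refine integral_mono (iB h0 r hψ hc) ((iZ h0 hψ hc).const_mul _) (fun v => ?_)
      simp only
      have := (key (r * v ⟨0, h0⟩)).1
      rw [abs_mul, abs_of_pos hr] at this
      rw [← mul_assoc]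
      gcongr
    calc _ ≤ r ^ 2 * (r * qZ h0 ψ) := by gcongr
      _ = _ := by ring
  · have : r * qZ h0 ψ ≤ qN ψ + qB h0 r ψ := by
      rw [qB, qZ, qN, ← integral_const_mul, ← integral_add (iN hψ hc) (iB h0 r hψ hc)]
      refine integral_mono ((iZ h0 hψ hc).const_mul _) ((iN hψ hc).add (iB h0 r hψ hc)) (fun v => ?_)
      simp only
      have := (key (r * v ⟨0, h0⟩)).2
      rw [abs_mul, abs_of_pos hr] at this
      have := mul_le_mul_of_nonneg_right this (sq_nonneg ‖ψ v‖)
      linarith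
    calc _ = r ^ 2 * (r * qZ h0 ψ) := by ring
      _ ≤ r ^ 2 * (qN ψ + qB h0 r ψ) := by gcongr
      _ = _ := by ring

end ints

theorem cre {d : ℕ} {f : EuclideanSpace ℝ (Fin d) → ℂ} (hf : Integrable f) : 
    (∫ v, f v).re = ∫ v, (f v).re := (integral_re hf).symm
theorem cim {d : ℕ} {f : EuclideanSpace ℝ (Fin d) → ℂ} (hf : Integrable f) : 
    (∫ v, f v).im = ∫ v, (f v).im := (integral_im hf).symm

/-- Smooth bounded approximation of the sign of `v₁`. -/
def chi {d : ℕ} (h0 : 0 < d) (r : ℝ) (v : EuclideanSpace ℝ (Fin d)) : ℝ :=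
  r * v ⟨0, h0⟩ / √(1 + (r * v ⟨0, h0⟩) ^ 2)

theorem chi_contDiff {d : ℕ} (h0 : 0 < d) (r : ℝ) : ContDiff ℝ (⊤ : ℕ∞) (chi h0 r) := by
  have hp : ContDiff ℝ (⊤ : ℕ∞) (fun v : EuclideanSpace ℝ (Fin d) => v ⟨0, h0⟩) :=
    (EuclideanSpace.proj (𝕜 := ℝ) (⟨0, h0⟩ : Fin d)).contDiff
  exact (contDiff_const.mul hp).div ((contDiff_const.add ((contDiff_const.mul hp).pow 2)).sqrt 
    (fun v => by positivity)) (fun v => sqrt_ne _)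

theorem chi_le {d : ℕ} (h0 : 0 < d) (r : ℝ) (v : EuclideanSpace ℝ (Fin d)) : |chi h0 r v| ≤ 1 := by
  have hS0 : 0 < √(1 + (r * v ⟨0, h0⟩) ^ 2) := Real.sqrt_pos.2 (by positivity)
  rw [chi, abs_div, abs_of_pos hS0, div_le_one hS0]
  refine Real.le_sqrt_of_sq_le ?_
  rw [sq_abs]; linarith

theorem chi_deriv1 (r x : ℝ) : HasDerivAt (fun x : ℝ => r * x / √(1 + (r * x) ^ 2))
    (r / √(1 + (r * x) ^ 2) ^ 3) x := by
  have h0 : 0 < 1 + (r * x) ^ 2 := by positivity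
  have h3 : HasDerivAt (fun x : ℝ => r * x) r x := by 
    simpa using (hasDerivAt_id' x).const_mul r
  have h2 : HasDerivAt (fun x : ℝ => 1 + (r * x) ^ 2) (2 * (r * x) * r) x := by
    have := (h3.fun_pow 2).const_add 1
    simpa using this
  have h1 := h3.fun_div (h2.sqrt h0.ne') (sqrt_ne _)
  refine h1.congr_deriv ?_
  have hS2 : √(1 + (r * x) ^ 2) ^ 2 = 1 + (r * x) ^ 2 := Real.sq_sqrt h0.le
  have hS := sqrt_ne (r * x)
  generalize √(1 + (r * x) ^ 2) = S at *
  field_simp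
  linear_combination r * hS2

theorem chi_fderiv {d : ℕ} (h0 : 0 < d) {r : ℝ} (hr : 0 < r) : ∃ c : EuclideanSpace ℝ (Fin d) → ℝ,
    (∀ v, |c v| ≤ r) ∧ ∀ v, HasFDerivAt (chi h0 r) 
      (c v • (EuclideanSpace.proj (𝕜 := ℝ) (⟨0, h0⟩ : Fin d))) v := by
  refine ⟨fun v => r / √(1 + (r * v ⟨0, h0⟩) ^ 2) ^ 3, fun v => ?_, fun v => ?_⟩
  · have hS : 1 ≤ √(1 + (r * v ⟨0, h0⟩) ^ 2) := by 
      rw [Real.one_le_sqrt]; nlinarith [sq_nonneg (r * v ⟨0, h0⟩)]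
    rw [abs_of_nonneg (by positivity)]
    exact div_le_self hr.le (one_le_pow₀ hS)
  · exact (chi_deriv1 r (v ⟨0, h0⟩)).comp_hasFDerivAt v 
      ((EuclideanSpace.proj (𝕜 := ℝ) (⟨0, h0⟩ : Fin d)).hasFDerivAt (x := v))

section forms
variable {d : ℕ} {M : EuclideanSpace ℝ (Fin d) → ℝ} {ψ φ : EuclideanSpace ℝ (Fin d) → ℂ}

theorem fd_conj (hMpos : ∀ v, 0 < M v) (hM : ContDiff ℝ 1 M) (hφ : ContDiff ℝ (⊤ : ℕ∞) φ)
    (v e : EuclideanSpace ℝ (Fin d)) : 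
    fderiv ℝ (fun w => starRingEnd ℂ (φ w) / (M w : ℂ)) v e = 
      starRingEnd ℂ (fderiv ℝ (fun w => φ w / (M w : ℂ)) v e) := by
  have h1 := ((g_contDiff hMpos hM hφ).differentiable one_ne_zero v).hasFDerivAt
  have h2 := (Complex.conjCLE.toContinuousLinearMap.hasFDerivAt 
    (x := φ v / (M v : ℂ))).comp v h1
  have h3 : (fun w => starRingEnd ℂ (φ w) / (M w : ℂ)) = 
    Complex.conjCLE.toContinuousLinearMap ∘ (fun w => φ w / (M w : ℂ)) := by
    ext w; simp
  rw [h3, h2.fderiv]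
  simp

theorem fd_chi (h0 : 0 < d) {r : ℝ} (hMpos : ∀ v, 0 < M v) (hM : ContDiff ℝ 1 M) 
    (hψ : ContDiff ℝ (⊤ : ℕ∞) ψ) {c : ℝ} {v : EuclideanSpace ℝ (Fin d)} 
    (hc : HasFDerivAt (chi h0 r) (c • (EuclideanSpace.proj (𝕜 := ℝ) (⟨0, h0⟩ : Fin d))) v)
    (e : EuclideanSpace ℝ (Fin d)) : 
    fderiv ℝ (fun w => ((chi h0 r w : ℝ) : ℂ) * ψ w / (M w : ℂ)) v e = 
      (chi h0 r v : ℂ) * fderiv ℝ (fun w => ψ w / (M w : ℂ)) v e 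
        + ((c * e ⟨0, h0⟩ : ℝ) : ℂ) * (ψ v / (M v : ℂ)) := by
  have h1 := ((g_contDiff hMpos hM hψ).differentiable one_ne_zero v).hasFDerivAt
  have h2 := hc.fun_smul h1
  have h3 : (fun w => ((chi h0 r w : ℝ) : ℂ) * ψ w / (M w : ℂ)) = 
    fun w => chi h0 r w • (ψ w / (M w : ℂ)) := by
    ext w; rw [Complex.real_smul, mul_div_assoc]
  rw [h3, h2.fderiv]
  simp

theorem opnorm_sum (L : EuclideanSpace ℝ (Fin d) →L[ℝ] ℂ) : 
    ‖L‖ ^ 2 ≤ ∑ i, ‖L (EuclideanSpace.single i 1)‖ ^ 2 := by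
  have h : ‖L‖ ≤ √(∑ i, ‖L (EuclideanSpace.single i 1)‖ ^ 2) := by
    refine L.opNorm_le_bound (Real.sqrt_nonneg _) (fun x => ?_)
    have h3 : ∑ i, x i • EuclideanSpace.single i (1 : ℝ) = x := by
      have := (EuclideanSpace.basisFun (Fin d) ℝ).sum_repr x
      simpa using this
    have h4 : ‖L x‖ ≤ ∑ i, ‖L (EuclideanSpace.single i 1)‖ * |x i| := by
      conv_lhs => rw [← h3, map_sum]
      refine (norm_sum_le _ _).trans (Finset.sum_le_sum fun i _ => ?_)
      rw [map_smul, norm_smul, Real.norm_eq_abs, mul_comm]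
    have h5 := Finset.sum_mul_sq_le_sq_mul_sq Finset.univ 
      (fun i => ‖L (EuclideanSpace.single i 1)‖) (fun i => |x i|)
    simp only [sq_abs] at h5
    rw [← EuclideanSpace.real_norm_sq_eq] at h5
    have h6 := h4.trans (Real.le_sqrt_of_sq_le h5)
    rwa [Real.sqrt_mul (by positivity), Real.sqrt_sq (norm_nonneg _)] at h6
  calc ‖L‖ ^ 2 ≤ (√(∑ i, ‖L (EuclideanSpace.single i 1)‖ ^ 2)) ^ 2 := by gcongr
    _ = _ := Real.sq_sqrt (by positivity)

theorem coord_le (L : EuclideanSpace ℝ (Fin d) →L[ℝ] ℂ) (i : Fin d) : 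
    ‖L (EuclideanSpace.single i 1)‖ ≤ ‖L‖ := by
  have := L.le_opNorm (EuclideanSpace.single i 1)
  simpa using this

theorem j1 (hMpos : ∀ v, 0 < M v) (hM : ContDiff ℝ 1 M) (hψ : ContDiff ℝ (⊤ : ℕ∞) ψ)
    (hc : HasCompactSupport ψ) (hφ : ContDiff ℝ (⊤ : ℕ∞) φ) : 
    Integrable (fun v => (∑ i : Fin d,
      fderiv ℝ (fun w => ψ w / (M w : ℂ)) v (EuclideanSpace.single i (1 : ℝ)) *
        starRingEnd ℂ (fderiv ℝ (fun w => φ w / (M w : ℂ)) v (EuclideanSpace.single i (1 : ℝ))))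
      * ((M v : ℂ)) ^ 2) := by
  have hD := (g_contDiff hMpos hM hψ).continuous_fderiv one_ne_zero
  have hD2 := (g_contDiff hMpos hM hφ).continuous_fderiv one_ne_zero
  refine int_of_zero hc ?_ (fun v hv => by simp [g_zero (M := M) hv])
  refine (continuous_finsetSum _ fun i _ => (hD.clm_apply continuous_const).mul 
    (Complex.continuous_conj.comp (hD2.clm_apply continuous_const))).mul 
    ((Complex.continuous_ofReal.comp hM.continuous).pow 2)

theorem j2 {k : EuclideanSpace ℝ (Fin d) → ℝ} (hk : Continuous k) (hψ : ContDiff ℝ (⊤ : ℕ∞) ψ)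
    (hc : HasCompactSupport ψ) (hφ : ContDiff ℝ (⊤ : ℕ∞) φ) : 
    Integrable (fun v => (k v : ℂ) * (ψ v * starRingEnd ℂ (φ v))) := by
  refine int_of_zero hc ?_ (fun v hv => by simp [image_eq_zero_of_notMem_tsupport hv])
  exact (Complex.continuous_ofReal.comp hk).mul (hψ.continuous.mul 
    (Complex.continuous_conj.comp hφ.continuous))

theorem j3 (hψ : ContDiff ℝ (⊤ : ℕ∞) ψ)
    (hc : HasCompactSupport ψ) (hφ : ContDiff ℝ (⊤ : ℕ∞) φ) : 
    Integrable (fun v => (ψ v * starRingEnd ℂ (φ v))) := by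
  refine int_of_zero hc ?_ (fun v hv => by simp [image_eq_zero_of_notMem_tsupport hv])
  exact (hψ.continuous.mul (Complex.continuous_conj.comp hφ.continuous))

theorem aForm_eq (h0 : 0 < d) (hMpos : ∀ v, 0 < M v) (hM : ContDiff ℝ 1 M) (σ : ℝ) {η r : ℝ} 
    (hr : 0 < r) (hη : η = r ^ 3) (l : ℂ) (hφ : ContDiff ℝ (⊤ : ℕ∞) φ) : 
    aForm h0 M σ η l ψ φ = (∫ v, (∑ i : Fin d,
      fderiv ℝ (fun w => ψ w / (M w : ℂ)) v (EuclideanSpace.single i (1 : ℝ)) *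
        starRingEnd ℂ (fderiv ℝ (fun w => φ w / (M w : ℂ)) v (EuclideanSpace.single i (1 : ℝ))))
      * ((M v : ℂ)) ^ 2)
  + (∫ v, ((Real.sqrt (1 + ‖v‖ ^ 2) ^ (-σ) : ℝ) : ℂ) * (ψ v * starRingEnd ℂ (φ v)))
  + Complex.I * ((r ^ 3 : ℝ) : ℂ) * (∫ v, ((v (⟨0, h0⟩ : Fin d) : ℝ) : ℂ) * (ψ v * starRingEnd ℂ (φ v)))
  - l * ((r ^ 2 : ℝ) : ℂ) * ∫ v, ψ v * starRingEnd ℂ (φ v) := by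
  have h1 : η ^ ((2 : ℝ) / 3) = r ^ 2 := by
    rw [hη, ← Real.rpow_natCast, ← Real.rpow_natCast, ← Real.rpow_mul hr.le]
    norm_num
  rw [aForm, h1, hη]
  simp_rw [fd_conj hMpos hM hφ]

theorem young (a b : ℝ) : a * b ≤ a ^ 2 + b ^ 2 := by nlinarith [sq_nonneg (a - b), sq_nonneg (a+b)]

theorem n2 {A B : EuclideanSpace ℝ (Fin d) → ℝ} 
    (hA : Integrable A) (hB : Integrable B) {f : EuclideanSpace ℝ (Fin d) → ℂ}
    (h : ∀ v, ‖f v‖ ≤ A v + B v) : ‖∫ v, f v‖ ≤ (∫ v, A v) + ∫ v, B v := by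
  rw [← integral_add hA hB]
  exact norm_integral_le_of_norm_le (hA.add hB) (Filter.Eventually.of_forall h)

theorem V_le {σ J : ℝ} (hσ : 2 < σ) (hJ : 1 ≤ J) : √J ^ (-σ) ≤ 1 / J := by
  rw [sqrt_rpow' (by linarith), one_div, ← Real.rpow_neg_one]
  exact Real.rpow_le_rpow_of_exponent_le hJ (by linarith)

theorem L5 (h0 : 0 < d) (hMpos : ∀ v, 0 < M v) (hM : ContDiff ℝ 1 M) {σ : ℝ} (hσ : 2 < σ) {η r : ℝ} 
    (hr : 0 < r) (hη : η = r ^ 3) (l : ℂ) (hψ : ContDiff ℝ (⊤ : ℕ∞) ψ)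
    (hc : HasCompactSupport ψ) (hφ : ContDiff ℝ (⊤ : ℕ∞) φ) (hc2 : HasCompactSupport φ) : 
    ‖aForm h0 M σ η l ψ φ‖ ≤ d * (qE M ψ + qE M φ) + (qH ψ + qH φ) + r ^ 3 * (qZ h0 ψ + qZ h0 φ)
      + ‖l‖ * r ^ 2 * (qN ψ + qN φ) := by
  rw [aForm_eq h0 hMpos hM σ hr hη l hφ]
  have hpt : ∀ v, ‖ψ v * starRingEnd ℂ (φ v)‖ ≤ ‖ψ v‖ ^ 2 + ‖φ v‖ ^ 2 := fun v => by
    rw [norm_mul, RCLike.norm_conj]; exact young _ _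
  refine (norm_sub_le _ _).trans (add_le_add ((norm_add_le _ _).trans (add_le_add 
    ((norm_add_le _ _).trans (add_le_add ?_ ?_)) ?_)) ?_)
  · rw [mul_add, qE, qE, ← integral_const_mul, ← integral_const_mul]
    refine n2 ((iE hMpos hM hψ hc).const_mul _) ((iE hMpos hM hφ hc2).const_mul _) (fun v => ?_)
    rw [norm_mul, norm_pow, Complex.norm_real, Real.norm_of_nonneg (hMpos v).le, ← mul_assoc, 
      ← mul_assoc, ← add_mul, ← mul_add]
    gcongr
    refine (norm_sum_le _ _).trans ?_
    refine (Finset.sum_le_card_nsmul _ _ (‖fderiv ℝ (fun w => ψ w / (M w : ℂ)) v‖ ^ 2 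
      + ‖fderiv ℝ (fun w => φ w / (M w : ℂ)) v‖ ^ 2) fun i _ => ?_).trans (by simp [mul_add])
    rw [norm_mul, RCLike.norm_conj]
    exact (mul_le_mul (coord_le _ i) (coord_le _ i) (norm_nonneg _) (norm_nonneg _)).trans (young _ _)
  · refine n2 (iH hψ hc) (iH hφ hc2) (fun v => ?_)
    rw [norm_mul, Complex.norm_real, Real.norm_of_nonneg (by positivity), ← add_div, 
      div_eq_mul_one_div, mul_comm]
    have h1 := V_le (J := 1 + ‖v‖ ^ 2) hσ (by nlinarith [sq_nonneg ‖v‖])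
    exact mul_le_mul (hpt v) h1 (by positivity) (by positivity)
  · rw [norm_mul, norm_mul, Complex.norm_I, one_mul, Complex.norm_real, 
      Real.norm_of_nonneg (by positivity)]
    gcongr
    refine n2 (iZ h0 hψ hc) (iZ h0 hφ hc2) (fun v => ?_)
    rw [norm_mul, Complex.norm_real, Real.norm_eq_abs, ← mul_add]
    gcongr
    exact hpt v
  · rw [norm_mul, norm_mul, Complex.norm_real, Real.norm_of_nonneg (by positivity)]
    gcongr
    exact n2 (iN hψ hc) (iN hφ hc2) hpt

theorem L6 (h0 : 0 < d) (hMpos : ∀ v, 0 < M v) (hM : ContDiff ℝ 1 M) {σ : ℝ} {η r : ℝ} 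
    (hr : 0 < r) (hη : η = r ^ 3) (l : ℂ) (hψ : ContDiff ℝ (⊤ : ℕ∞) ψ)
    (hc : HasCompactSupport ψ) : 
    qE M ψ + qW σ ψ ≤ ‖aForm h0 M σ η l ψ ψ‖ + ‖l‖ * (r ^ 2 * qN ψ) := by
  have hre := Complex.re_le_norm (aForm h0 M σ η l ψ ψ)
  rw [aForm_eq h0 hMpos hM σ hr hη l hψ] at hre ⊢
  rw [Complex.sub_re, Complex.add_re, Complex.add_re] at hre
  have t1 : qE M ψ ≤ (∫ v, (∑ i : Fin d,
      fderiv ℝ (fun w => ψ w / (M w : ℂ)) v (EuclideanSpace.single i (1 : ℝ)) *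
        starRingEnd ℂ (fderiv ℝ (fun w => ψ w / (M w : ℂ)) v (EuclideanSpace.single i (1 : ℝ))))
      * ((M v : ℂ)) ^ 2).re := by
    have hj := j1 hMpos hM hψ hc hψ
    rw [cre hj, qE]
    refine integral_mono (iE hMpos hM hψ hc) hj.re (fun v => ?_)
    simp only
    have h1 : ((∑ i : Fin d,
      fderiv ℝ (fun w => ψ w / (M w : ℂ)) v (EuclideanSpace.single i (1 : ℝ)) *
        starRingEnd ℂ (fderiv ℝ (fun w => ψ w / (M w : ℂ)) v (EuclideanSpace.single i (1 : ℝ))))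
      * ((M v : ℂ)) ^ 2) = (((∑ i : Fin d, 
        ‖fderiv ℝ (fun w => ψ w / (M w : ℂ)) v (EuclideanSpace.single i (1 : ℝ))‖ ^ 2) * (M v) ^ 2 : ℝ) : ℂ) := by
      simp_rw [Complex.mul_conj']
      push_cast
      rfl
    rw [h1, Complex.ofReal_re]
    gcongr
    exact opnorm_sum _
  have t2 : (∫ v, ((Real.sqrt (1 + ‖v‖ ^ 2) ^ (-σ) : ℝ) : ℂ) * (ψ v * starRingEnd ℂ (ψ v))) = 
      ((qW σ ψ : ℝ) : ℂ) := by
    rw [qW, ← integral_complex_ofReal]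
    refine integral_congr_ae (Filter.Eventually.of_forall fun v => ?_)
    simp [Complex.mul_conj']
  have t3 : (∫ v, ((v (⟨0, h0⟩ : Fin d) : ℝ) : ℂ) * (ψ v * starRingEnd ℂ (ψ v))) = 
      ((∫ v, v (⟨0, h0⟩ : Fin d) * ‖ψ v‖ ^ 2 : ℝ) : ℂ) := by
    rw [← integral_complex_ofReal]
    refine integral_congr_ae (Filter.Eventually.of_forall fun v => ?_)
    simp [Complex.mul_conj']
  have t4 : (∫ v, ψ v * starRingEnd ℂ (ψ v)) = ((qN ψ : ℝ) : ℂ) := by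
    rw [qN, ← integral_complex_ofReal]
    refine integral_congr_ae (Filter.Eventually.of_forall fun v => ?_)
    simp [Complex.mul_conj']
  rw [t3] at hre ⊢
  rw [t2, t4] at hre ⊢
  have t5 : (Complex.I * ((r ^ 3 : ℝ) : ℂ) * ((∫ v, v (⟨0, h0⟩ : Fin d) * ‖ψ v‖ ^ 2 : ℝ) : ℂ)).re = 0 := by
    rw [mul_assoc, ← Complex.ofReal_mul, Complex.re_mul_ofReal]
    simp
  have t6 : (l * ((r ^ 2 : ℝ) : ℂ) * ((qN ψ : ℝ) : ℂ)).re ≤ ‖l‖ * (r ^ 2 * qN ψ) := by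
    rw [mul_assoc, ← Complex.ofReal_mul, Complex.re_mul_ofReal]
    have := qN_nonneg (ψ := ψ)
    exact mul_le_mul_of_nonneg_right (Complex.re_le_norm l) (by positivity)
  rw [t5, Complex.ofReal_re] at hre
  linarith

end forms

section final
variable {d : ℕ} {M : EuclideanSpace ℝ (Fin d) → ℝ} {ψ φ : EuclideanSpace ℝ (Fin d) → ℂ}

/-- The multiplied test function. -/
def cp (h0 : 0 < d) (r : ℝ) (ψ : EuclideanSpace ℝ (Fin d) → ℂ) : EuclideanSpace ℝ (Fin d) → ℂ :=
  fun v => ((chi h0 r v : ℝ) : ℂ) * ψ v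

theorem cp_contDiff (h0 : 0 < d) (r : ℝ) (hψ : ContDiff ℝ (⊤ : ℕ∞) ψ) :
    ContDiff ℝ (⊤ : ℕ∞) (cp h0 r ψ) :=
  (Complex.ofRealCLM.contDiff.comp (chi_contDiff h0 r)).mul hψ

theorem cp_compact (h0 : 0 < d) (r : ℝ) (hc : HasCompactSupport ψ) :
    HasCompactSupport (cp h0 r ψ) := hc.mul_left

theorem cp_norm (h0 : 0 < d) (r : ℝ) (v : EuclideanSpace ℝ (Fin d)) :
    ‖cp h0 r ψ v‖ ≤ ‖ψ v‖ := by
  rw [cp, norm_mul, Complex.norm_real, Real.norm_eq_abs]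
  exact mul_le_of_le_one_left (norm_nonneg _) (chi_le h0 r v)

theorem L4 (h0 : 0 < d) (hMpos : ∀ v, 0 < M v) (hM : ContDiff ℝ 1 M) {r : ℝ} (hr : 0 < r)
    (hψ : ContDiff ℝ (⊤ : ℕ∞) ψ) (hc : HasCompactSupport ψ) :
    qE M (cp h0 r ψ) ≤ 2 * qE M ψ + 2 * (r ^ 2 * qN ψ) := by
  obtain ⟨c, hc1, hc2⟩ := chi_fderiv h0 hr
  rw [qE, qE, qN, ← mul_assoc, ← integral_const_mul, ← integral_const_mul,
    ← integral_add ((iE hMpos hM hψ hc).const_mul _) ((iN hψ hc).const_mul _)]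
  refine integral_mono (iE hMpos hM (cp_contDiff h0 r hψ) (cp_compact h0 r hc))
    (((iE hMpos hM hψ hc).const_mul _).add ((iN hψ hc).const_mul _)) (fun v => ?_)
  simp only
  have h1 : ‖fderiv ℝ (fun w => cp h0 r ψ w / (M w : ℂ)) v‖ ≤
      ‖fderiv ℝ (fun w => ψ w / (M w : ℂ)) v‖ + r * ‖ψ v / (M v : ℂ)‖ := by
    refine ContinuousLinearMap.opNorm_le_bound _ (by positivity) (fun e => ?_)
    have h2 := fd_chi h0 hMpos hM hψ (hc2 v) e
    simp only [cp]
    rw [h2]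
    refine (norm_add_le _ _).trans ?_
    rw [norm_mul, norm_mul, Complex.norm_real, Complex.norm_real, Real.norm_eq_abs,
      Real.norm_eq_abs, abs_mul, add_mul]
    have h3 := (fderiv ℝ (fun w => ψ w / (M w : ℂ)) v).le_opNorm e
    have h4 : |e ⟨0, h0⟩| ≤ ‖e‖ := PiLp.norm_apply_le e _
    have h5 := chi_le h0 r v
    have h6 := hc1 v
    refine add_le_add ?_ ?_
    · exact (mul_le_of_le_one_left (norm_nonneg _) h5).trans h3
    · calc _ ≤ (r * ‖e‖) * ‖ψ v / (M v : ℂ)‖ := by gcongr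
        _ = _ := by ring
  rw [norm_psi hMpos v]
  have h7 : ‖fderiv ℝ (fun w => cp h0 r ψ w / (M w : ℂ)) v‖ ^ 2 ≤
      2 * ‖fderiv ℝ (fun w => ψ w / (M w : ℂ)) v‖ ^ 2 + 2 * (r * ‖ψ v / (M v : ℂ)‖) ^ 2 := by
    refine (pow_le_pow_left₀ (norm_nonneg _) h1 2).trans ?_
    nlinarith [sq_nonneg (‖fderiv ℝ (fun w => ψ w / (M w : ℂ)) v‖ - r * ‖ψ v / (M v : ℂ)‖)]
  refine (mul_le_mul_of_nonneg_right h7 (sq_nonneg (M v))).trans (le_of_eq ?_)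
  ring

theorem L4H (h0 : 0 < d) (r : ℝ) (hψ : ContDiff ℝ (⊤ : ℕ∞) ψ) (hc : HasCompactSupport ψ) :
    qH (cp h0 r ψ) ≤ qH ψ := by
  refine integral_mono (iH (cp_contDiff h0 r hψ) (cp_compact h0 r hc)) (iH hψ hc) (fun v => ?_)
  have := cp_norm (ψ := ψ) h0 r v
  simp only
  gcongr

theorem L4Z (h0 : 0 < d) (r : ℝ) (hψ : ContDiff ℝ (⊤ : ℕ∞) ψ) (hc : HasCompactSupport ψ) :
    qZ h0 (cp h0 r ψ) ≤ qZ h0 ψ := by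
  refine integral_mono (iZ h0 (cp_contDiff h0 r hψ) (cp_compact h0 r hc)) (iZ h0 hψ hc) (fun v => ?_)
  have := cp_norm (ψ := ψ) h0 r v
  simp only
  gcongr

theorem im_sum (h0 : 0 < d) (D : Fin d → ℂ) (x c m : ℝ) (g : ℂ) :
    ((∑ i, D i * starRingEnd ℂ ((x : ℂ) * D i +
      ((c * (EuclideanSpace.single i (1 : ℝ) : EuclideanSpace ℝ (Fin d)) ⟨0, h0⟩ : ℝ) : ℂ) * g))
      * (m : ℂ) ^ 2).im = c * m ^ 2 * (D ⟨0, h0⟩ * starRingEnd ℂ g).im := by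
  have h1 : (∑ i, D i * starRingEnd ℂ ((x : ℂ) * D i +
      ((c * (EuclideanSpace.single i (1 : ℝ) : EuclideanSpace ℝ (Fin d)) ⟨0, h0⟩ : ℝ) : ℂ) * g)) =
      ((x * ∑ i, ‖D i‖ ^ 2 : ℝ) : ℂ) + (c : ℂ) * (D ⟨0, h0⟩ * starRingEnd ℂ g) := by
    have h2 : ∀ i, D i * starRingEnd ℂ ((x : ℂ) * D i +
      ((c * (EuclideanSpace.single i (1 : ℝ) : EuclideanSpace ℝ (Fin d)) ⟨0, h0⟩ : ℝ) : ℂ) * g) =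
      (x : ℂ) * ((‖D i‖ : ℂ) ^ 2) + (if (⟨0, h0⟩ : Fin d) = i then
        (c : ℂ) * (D i * starRingEnd ℂ g) else 0) := by
      intro i
      rw [← Complex.mul_conj', map_add, map_mul, map_mul, Complex.conj_ofReal, Complex.conj_ofReal]
      split_ifs with h
      · subst h; simp; ring
      · simp [h]; ring
    rw [Finset.sum_congr rfl fun i _ => h2 i, Finset.sum_add_distrib, Finset.sum_ite_eq,
      ← Finset.mul_sum]
    simp
  rw [h1, ← Complex.ofReal_pow, Complex.im_mul_ofReal, Complex.add_im, Complex.ofReal_im,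
    Complex.im_ofReal_mul]
  ring

theorem L7 (h0 : 0 < d) (hMpos : ∀ v, 0 < M v) (hM : ContDiff ℝ 1 M) {σ : ℝ} {η r : ℝ}
    (hr : 0 < r) (hη : η = r ^ 3) (l : ℂ) (hψ : ContDiff ℝ (⊤ : ℕ∞) ψ)
    (hc : HasCompactSupport ψ) {δ : ℝ} (hδ : 0 < δ) :
    r ^ 2 * qB h0 r ψ ≤ ‖aForm h0 M σ η l ψ (cp h0 r ψ)‖ + (δ * (r ^ 2 * qN ψ) + 1 / (4 * δ) * qE M ψ)
      + ‖l‖ * (r ^ 2 * qN ψ) := by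
  have hcp := cp_contDiff h0 r hψ
  have him := (le_abs_self _).trans (Complex.abs_im_le_norm (aForm h0 M σ η l ψ (cp h0 r ψ)))
  rw [aForm_eq h0 hMpos hM σ hr hη l hcp] at him ⊢
  rw [Complex.sub_im, Complex.add_im, Complex.add_im] at him
  obtain ⟨c, hc1, hc2⟩ := chi_fderiv h0 hr
  have t1 : -(δ * (r ^ 2 * qN ψ) + 1 / (4 * δ) * qE M ψ) ≤ (∫ v, (∑ i : Fin d,
      fderiv ℝ (fun w => ψ w / (M w : ℂ)) v (EuclideanSpace.single i (1 : ℝ)) *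
        starRingEnd ℂ (fderiv ℝ (fun w => cp h0 r ψ w / (M w : ℂ)) v (EuclideanSpace.single i (1 : ℝ))))
      * ((M v : ℂ)) ^ 2).im := by
    have hj := j1 hMpos hM hψ hc hcp
    have iS := ((iN hψ hc).const_mul (δ * r ^ 2)).add ((iE hMpos hM hψ hc).const_mul (1 / (4 * δ)))
    rw [cim hj, ← mul_assoc, qN, qE, ← integral_const_mul, ← integral_const_mul,
      ← integral_add ((iN hψ hc).const_mul _) ((iE hMpos hM hψ hc).const_mul _), ← integral_neg]
    refine integral_mono iS.neg hj.im (fun v => ?_)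
    simp only [cp]
    have h2 := fun i : Fin d => fd_chi h0 hMpos hM hψ (hc2 v) (EuclideanSpace.single i (1 : ℝ))
    simp_rw [h2]
    have h3 := im_sum h0 (fun i => fderiv ℝ (fun w => ψ w / (M w : ℂ)) v
      (EuclideanSpace.single i (1 : ℝ))) (chi h0 r v) (c v) (M v) (ψ v / (M v : ℂ))
    simp only at h3
    refine le_of_le_of_eq ?_ h3.symm
    refine neg_le_of_abs_le ?_
    rw [norm_psi hMpos v, abs_mul, abs_mul, abs_of_nonneg (sq_nonneg (M v))]
    have h4 : |(fderiv ℝ (fun w => ψ w / (M w : ℂ)) v (EuclideanSpace.single ⟨0, h0⟩ (1 : ℝ)) *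
      starRingEnd ℂ (ψ v / (M v : ℂ))).im| ≤
        ‖fderiv ℝ (fun w => ψ w / (M w : ℂ)) v‖ * ‖ψ v / (M v : ℂ)‖ := by
      refine (Complex.abs_im_le_norm _).trans ?_
      rw [norm_mul, RCLike.norm_conj]
      gcongr
      exact coord_le _ _
    have h5 := hc1 v
    calc _ ≤ r * M v ^ 2 * (‖fderiv ℝ (fun w => ψ w / (M w : ℂ)) v‖ * ‖ψ v / (M v : ℂ)‖) := by gcongr
      _ ≤ _ := by
        generalize ‖fderiv ℝ (fun w => ψ w / (M w : ℂ)) v‖ = X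
        generalize ‖ψ v / (M v : ℂ)‖ = Y
        have h6 : r * (X * Y) ≤ δ * r ^ 2 * Y ^ 2 + 1 / (4 * δ) * X ^ 2 := by
          have : δ * r ^ 2 * Y ^ 2 + 1 / (4 * δ) * X ^ 2 - r * (X * Y) =
            1 / (4 * δ) * (2 * δ * r * Y - X) ^ 2 := by field_simp; ring
          have h7 : 0 ≤ 1 / (4 * δ) * (2 * δ * r * Y - X) ^ 2 := by positivity
          linarith
        have h8 := mul_le_mul_of_nonneg_left h6 (sq_nonneg (M v))
        linarith
  have t2 : (∫ v, ((Real.sqrt (1 + ‖v‖ ^ 2) ^ (-σ) : ℝ) : ℂ) *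
      (ψ v * starRingEnd ℂ (cp h0 r ψ v))).im = 0 := by
    have h := integral_complex_ofReal (μ := volume) (f := fun v : EuclideanSpace ℝ (Fin d) =>
      Real.sqrt (1 + ‖v‖ ^ 2) ^ (-σ) * (chi h0 r v * ‖ψ v‖ ^ 2))
    rw [← Complex.ofReal_im (∫ v : EuclideanSpace ℝ (Fin d),
      Real.sqrt (1 + ‖v‖ ^ 2) ^ (-σ) * (chi h0 r v * ‖ψ v‖ ^ 2)), ← h]
    congr 1
    refine integral_congr_ae (Filter.Eventually.of_forall fun v => ?_)
    simp only [cp]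
    push_cast
    rw [← Complex.mul_conj', map_mul, Complex.conj_ofReal]
    ring
  have t3 : (Complex.I * ((r ^ 3 : ℝ) : ℂ) * (∫ v, ((v (⟨0, h0⟩ : Fin d) : ℝ) : ℂ) *
      (ψ v * starRingEnd ℂ (cp h0 r ψ v)))).im = r ^ 2 * qB h0 r ψ := by
    have h : (∫ v, ((v (⟨0, h0⟩ : Fin d) : ℝ) : ℂ) * (ψ v * starRingEnd ℂ (cp h0 r ψ v))) =
      ((∫ v, v (⟨0, h0⟩ : Fin d) * (chi h0 r v * ‖ψ v‖ ^ 2) : ℝ) : ℂ) := by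
      rw [← integral_complex_ofReal]
      refine integral_congr_ae (Filter.Eventually.of_forall fun v => ?_)
      simp only [cp]
      push_cast
      rw [← Complex.mul_conj', map_mul, Complex.conj_ofReal]
      ring
    rw [h, mul_assoc, ← Complex.ofReal_mul, Complex.im_mul_ofReal, Complex.I_im, one_mul, qB,
      ← integral_const_mul, ← integral_const_mul]
    refine integral_congr_ae (Filter.Eventually.of_forall fun v => ?_)
    simp only [chi]
    ring
  have t4 : (l * ((r ^ 2 : ℝ) : ℂ) * ∫ v, ψ v * starRingEnd ℂ (cp h0 r ψ v)).im ≤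
      ‖l‖ * (r ^ 2 * qN ψ) := by
    refine (le_abs_self _).trans ((Complex.abs_im_le_norm _).trans ?_)
    rw [norm_mul, norm_mul, Complex.norm_real, Real.norm_of_nonneg (by positivity), mul_assoc]
    gcongr
    refine norm_integral_le_of_norm_le (iN hψ hc) (Filter.Eventually.of_forall fun v => ?_)
    rw [norm_mul, RCLike.norm_conj, sq]
    gcongr
    exact cp_norm h0 r v
  rw [t3, t2] at him
  linarith

theorem fd_smul (v : EuclideanSpace ℝ (Fin d)) (c : ℝ) (f : EuclideanSpace ℝ (Fin d) → ℂ) :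
    fderiv ℝ (fun w => (c : ℂ) * f w / (M w : ℂ)) v = c • fderiv ℝ (fun w => f w / (M w : ℂ)) v := by
  have : (fun w => (c : ℂ) * f w / (M w : ℂ)) = fun w => c • (f w / (M w : ℂ)) := by
    ext w; rw [Complex.real_smul, mul_div_assoc]
  rw [this]; exact congrFun (fderiv_const_smul_field (𝕜 := ℝ) (f := fun w => f w / (M w : ℂ)) c) v

theorem a_smul (h0 : 0 < d) (σ η : ℝ) (l : ℂ) (c : ℝ) :
    aForm h0 M σ η l ψ (fun v => (c : ℂ) * φ v) = (c : ℂ) * aForm h0 M σ η l ψ φ := by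
  simp only [aForm, map_mul, Complex.conj_ofReal]
  have h1 : ∀ v, (∑ i : Fin d,
      fderiv ℝ (fun w => ψ w / (M w : ℂ)) v (EuclideanSpace.single i (1 : ℝ)) *
        fderiv ℝ (fun w => (c : ℂ) * starRingEnd ℂ (φ w) / (M w : ℂ)) v (EuclideanSpace.single i (1 : ℝ)))
      * ((M v : ℂ)) ^ 2 = (c : ℂ) * ((∑ i : Fin d,
      fderiv ℝ (fun w => ψ w / (M w : ℂ)) v (EuclideanSpace.single i (1 : ℝ)) *
        fderiv ℝ (fun w => starRingEnd ℂ (φ w) / (M w : ℂ)) v (EuclideanSpace.single i (1 : ℝ)))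
      * ((M v : ℂ)) ^ 2) := by
    intro v
    rw [fd_smul v c (fun w => starRingEnd ℂ (φ w)), ← mul_assoc, Finset.mul_sum]
    congr 1
    refine Finset.sum_congr rfl fun i _ => ?_
    rw [smul_apply, Complex.real_smul]
    ring
  have h2 : ∀ x y z : ℂ, x * (y * ((c : ℂ) * z)) = (c : ℂ) * (x * (y * z)) := fun x y z => by ring
  have h3 : ∀ y z : ℂ, y * ((c : ℂ) * z) = (c : ℂ) * (y * z) := fun y z => by ring
  simp_rw [h1, h2, h3, integral_const_mul]
  ring

theorem H_smul (h0 : 0 < d) (η : ℝ) (c : ℝ) :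
    HnormSq h0 M η (fun v => (c : ℂ) * φ v) = c ^ 2 * HnormSq h0 M η φ := by
  simp only [HnormSq, fd_smul, norm_smul, norm_mul, Complex.norm_real, mul_pow, Real.norm_eq_abs,
    sq_abs]
  have h1 : ∀ x y : ℝ, c ^ 2 * x * y = c ^ 2 * (x * y) := fun x y => by ring
  have h2 : ∀ x y : ℝ, c ^ 2 * x / y = c ^ 2 * (x / y) := fun x y => by ring
  have h3 : ∀ x y : ℝ, y * (c ^ 2 * x) = c ^ 2 * (y * x) := fun x y => by ring
  simp_rw [h1, h2, h3, integral_const_mul]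
  ring

end final

theorem arith {E W H N B Z a1 a2 K1 K2 l : ℝ} (hE : 0 ≤ E) (hW : 0 ≤ W) (hN : 0 ≤ N)
    (ha1 : 0 ≤ a1) (ha2 : 0 ≤ a2) (hK1 : 0 < K1) (hK2 : 0 < K2) (h1 : H ≤ K1 * (E + W))
    (h2 : N ≤ K2 * (E + H + B)) (h3 : Z ≤ N + B) (h4 : E + W ≤ a1 + l * N)
    (h5 : B ≤ a2 + (1 / (4 * K2) * N + 1 / (4 * (1 / (4 * K2))) * E) + l * N)
    (hl : l ≤ 1 / (2 * (K2 * (2 + 2 * K2 + 2 * K1)))) :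
    E + H + Z ≤ (2 * (2 + 2 * K1 + 2 * K2 + K2 * (2 + 2 * K2 + 2 * K1)) + 2 * K2 + 2) * (a1 + a2) := by
  have e1 : 1 / (4 * (1 / (4 * K2))) = K2 := by field_simp
  rw [e1] at h5
  set Q := K2 * (2 + 2 * K2 + 2 * K1) with hQ
  have hQ0 : 0 < Q := by positivity
  have hQ2 : 2 * K2 ≤ Q := by rw [hQ]; nlinarith [mul_pos hK1 hK2, mul_pos hK2 hK2]
  have hlN : l * N ≤ 1 / (2 * Q) * N := mul_le_mul_of_nonneg_right hl hN
  have hl2 : 1 / (2 * Q) ≤ 1 / (4 * K2) := one_div_le_one_div_of_le (by positivity) (by linarith)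
  have hlN2 : 1 / (2 * Q) * N ≤ 1 / (4 * K2) * N := mul_le_mul_of_nonneg_right hl2 hN
  have hN4 : 1 / (4 * K2) * N ≤ (E + H + B) / 4 := by
    rw [one_div, inv_mul_le_iff₀ (by positivity)]; linarith
  have hB : B ≤ 2 * a2 + (1 + 2 * K2) * E + H := by linarith
  have hKW : 0 ≤ K2 * W := by positivity
  have hB2 : B ≤ 2 * a2 + (1 + 2 * K2 + K1) * (E + W) := by linarith
  have hEHB : E + H + B ≤ 2 * a2 + (2 + 2 * K2 + 2 * K1) * (E + W) := by linarith
  have hNQ : N ≤ 2 * K2 * a2 + Q * (E + W) := by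
    refine h2.trans ((mul_le_mul_of_nonneg_left hEHB hK2.le).trans (le_of_eq ?_))
    rw [hQ]; ring
  have hP : 1 / (2 * Q) * N ≤ a2 / 2 + (E + W) / 2 := by
    rw [one_div, inv_mul_le_iff₀ (by positivity)]
    nlinarith [mul_le_mul_of_nonneg_right hQ2 ha2]
  have hP2 : E + W ≤ 2 * a1 + a2 := by linarith
  have hsum : E + H + Z ≤ (2 + 2 * K1 + 2 * K2 + Q) * (E + W) + (2 * K2 + 2) * a2 := by linarith
  have hmul := mul_le_mul_of_nonneg_left hP2 (show 0 ≤ 2 + 2 * K1 + 2 * K2 + Q by positivity)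
  have ha : 0 ≤ (2 + 2 * K1 + 2 * K2 + Q) * a2 := by positivity
  have hb : 0 ≤ (2 * K2 + 2) * a1 := by positivity
  linarith

theorem HnormSq_eq {d : ℕ} (h0 : 0 < d) (M : EuclideanSpace ℝ (Fin d) → ℝ) (η : ℝ)
    (ψ : EuclideanSpace ℝ (Fin d) → ℂ) : HnormSq h0 M η ψ = qE M ψ + qH ψ + η * qZ h0 ψ := rfl

theorem aForm_coercive (d : ℕ) (h0 : 0 < d) (γ C₁ C₂ σ : ℝ)
    (hγ₁ : (d : ℝ) / 2 < γ) (hγ₂ : γ < ((d : ℝ) + 4) / 2)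
    (hC₁ : 0 < C₁) (hC₁₂ : C₁ ≤ C₂) (hσ₁ : 2 < σ) (hσ₂ : σ < 2 * γ - d + 4)
    (M : EuclideanSpace ℝ (Fin d) → ℝ) (hMpos : ∀ v, 0 < M v) (hM : ContDiff ℝ 1 M)
    (hA1 : ∀ v, C₁ * Real.sqrt (1 + ‖v‖ ^ 2) ^ (-γ) ≤ M v ∧
              M v ≤ C₂ * Real.sqrt (1 + ‖v‖ ^ 2) ^ (-γ))
    (hM2 : Integrable (fun v => (M v) ^ 2)) :
    ∃ l₀ C : ℝ, 0 < l₀ ∧ 0 < C ∧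
      ∀ η : ℝ, 0 < η → ∀ l : ℂ, ‖l‖ ≤ l₀ →
        ∀ ψ : EuclideanSpace ℝ (Fin d) → ℂ,
          ContDiff ℝ (⊤ : ℕ∞) ψ → HasCompactSupport ψ →
          Real.sqrt (HnormSq h0 M η ψ) ≤
            C * sSup {r : ℝ | ∃ φ : EuclideanSpace ℝ (Fin d) → ℂ,
              ContDiff ℝ (⊤ : ℕ∞) φ ∧ HasCompactSupport φ ∧
              Real.sqrt (HnormSq h0 M η φ) ≤ 1 ∧ r = ‖aForm h0 M σ η l ψ φ‖} := by
  obtain ⟨K1, hK1, H1⟩ := L1 (d := d) hγ₁ hσ₁ hC₁ hC₁₂ hMpos hM hA1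
  obtain ⟨K2, hK2, H2⟩ := L2 h0 hγ₁ hC₁ hC₁₂ hMpos hM hA1
  set CC := 2 * (2 + 2 * K1 + 2 * K2 + K2 * (2 + 2 * K2 + 2 * K1)) + 2 * K2 + 2 with hCC
  have hCC0 : 0 < CC := by positivity
  refine ⟨1 / (2 * (K2 * (2 + 2 * K2 + 2 * K1))), CC * (1 + √(2 + 2 * K2)), by positivity,
    by positivity, fun η hη l hl ψ hψ hc => ?_⟩
  set r := η ^ ((1 : ℝ) / 3) with hrdef
  have hr : 0 < r := Real.rpow_pos_of_pos hη _
  have hηr : η = r ^ 3 := by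
    rw [hrdef, ← Real.rpow_natCast, ← Real.rpow_mul hη.le]; norm_num
  set T := {r : ℝ | ∃ φ : EuclideanSpace ℝ (Fin d) → ℂ,
              ContDiff ℝ (⊤ : ℕ∞) φ ∧ HasCompactSupport φ ∧
              Real.sqrt (HnormSq h0 M η φ) ≤ 1 ∧ r = ‖aForm h0 M σ η l ψ φ‖} with hT
  have hNb : ∀ φ : EuclideanSpace ℝ (Fin d) → ℂ, ContDiff ℝ (⊤ : ℕ∞) φ → HasCompactSupport φ →
      r ^ 2 * qN φ ≤ K2 * HnormSq h0 M η φ := by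
    intro φ h1 h2
    rw [HnormSq_eq, hηr]
    refine (H2 r hr φ h1 h2).trans (mul_le_mul_of_nonneg_left ?_ hK2.le)
    have := (L3 h0 hr h1 h2).1
    linarith
  have hnn : ∀ φ : EuclideanSpace ℝ (Fin d) → ℂ, 0 ≤ qE M φ ∧ 0 ≤ qH φ ∧ 0 ≤ η * qZ h0 φ :=
    fun φ => ⟨qE_nonneg, qH_nonneg, mul_nonneg hη.le (qZ_nonneg h0)⟩
  have hHn : ∀ φ : EuclideanSpace ℝ (Fin d) → ℂ, 0 ≤ HnormSq h0 M η φ := by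
    intro φ
    obtain ⟨x1, x2, x3⟩ := hnn φ
    rw [HnormSq_eq]; linarith
  have hbdd : BddAbove T := by
    refine ⟨d * (qE M ψ + 1) + (qH ψ + 1) + (η * qZ h0 ψ + 1) + ‖l‖ * (r ^ 2 * qN ψ + K2), ?_⟩
    rintro _ ⟨φ, h1, h2, h3, rfl⟩
    refine (L5 h0 hMpos hM hσ₁ hr hηr l hψ hc h1 h2).trans ?_
    have h4 : HnormSq h0 M η φ ≤ 1 := by
      rw [Real.sqrt_le_iff] at h3; linarith [h3.2]
    have h5 := hNb φ h1 h2
    obtain ⟨x1, x2, x3⟩ := hnn φ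
    have h6 := h4
    rw [HnormSq_eq] at h6
    rw [mul_add (r ^ 3), ← hηr, mul_assoc ‖l‖, mul_add (r ^ 2)]
    have h7 : r ^ 2 * qN φ ≤ K2 := h5.trans (mul_le_of_le_one_right hK2.le h4)
    gcongr <;> linarith
  have hS0 : 0 ≤ sSup T := Real.sSup_nonneg (by rintro _ ⟨φ, _, _, _, rfl⟩; exact norm_nonneg _)
  have hsc : ∀ φ : EuclideanSpace ℝ (Fin d) → ℂ, ContDiff ℝ (⊤ : ℕ∞) φ → HasCompactSupport φ →
      ∀ m : ℝ, 0 < m → HnormSq h0 M η φ ≤ m ^ 2 → ‖aForm h0 M σ η l ψ φ‖ ≤ m * sSup T := by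
    intro φ h1 h2 m hm h3
    have h4 : ‖aForm h0 M σ η l ψ (fun v => ((m⁻¹ : ℝ) : ℂ) * φ v)‖ ≤ sSup T := by
      refine le_csSup hbdd ⟨_, contDiff_const.mul h1, h2.mul_left, ?_, rfl⟩
      rw [H_smul, Real.sqrt_le_iff, inv_pow, inv_mul_le_iff₀ (by positivity)]; refine ⟨zero_le_one, ?_⟩
      linarith
    rw [a_smul, norm_mul, Complex.norm_real, Real.norm_of_nonneg (by positivity),
      inv_mul_le_iff₀ hm] at h4
    exact h4
  rcases (Real.sqrt_nonneg (HnormSq h0 M η ψ)).eq_or_lt with h | hX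
  · rw [← h]; positivity
  set X := √(HnormSq h0 M η ψ) with hXdef
  have hX2 : HnormSq h0 M η ψ = X ^ 2 := (Real.sq_sqrt (hHn ψ)).symm
  have hcpd := cp_contDiff h0 r hψ
  have hcpc := cp_compact h0 r hc
  have b1 := hsc ψ hψ hc X hX hX2.le
  have b2 := hsc (cp h0 r ψ) hcpd hcpc (√(2 + 2 * K2) * X) (by positivity) (by
    rw [mul_pow, Real.sq_sqrt (by positivity), ← hX2]
    have y1 := L4 h0 hMpos hM hr hψ hc
    have y2 := L4H h0 r hψ hc
    have y3 := mul_le_mul_of_nonneg_left (L4Z h0 r hψ hc) hη.le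
    have y4 := hNb ψ hψ hc
    obtain ⟨x1, x2, x3⟩ := hnn ψ
    rw [HnormSq_eq] at y4 ⊢
    rw [HnormSq_eq]
    linarith)
  have key := arith (E := qE M ψ) (W := qW σ ψ) (H := qH ψ) (N := r ^ 2 * qN ψ)
    (B := r ^ 2 * qB h0 r ψ) (Z := r ^ 3 * qZ h0 ψ) (a1 := ‖aForm h0 M σ η l ψ ψ‖)
    (a2 := ‖aForm h0 M σ η l ψ (cp h0 r ψ)‖) (l := ‖l‖) qE_nonneg (qW_nonneg σ)
    (mul_nonneg (sq_nonneg _) qN_nonneg) (norm_nonneg _) (norm_nonneg _) hK1 hK2 (H1 ψ hψ hc) (H2 r hr ψ hψ hc)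
    (L3 h0 hr hψ hc).2 (L6 h0 hMpos hM hr hηr l hψ hc)
    (L7 h0 hMpos hM hr hηr l hψ hc (by positivity)) hl
  rw [← hCC, ← hηr, ← HnormSq_eq, hX2] at key
  have f1 : X ^ 2 ≤ CC * (X * sSup T + √(2 + 2 * K2) * X * sSup T) :=
    key.trans (mul_le_mul_of_nonneg_left (add_le_add b1 b2) hCC0.le)
  refine le_of_mul_le_mul_left (a := X) ?_ hX
  calc X * X = X ^ 2 := by ring
    _ ≤ _ := f1
    _ = _ := by ring
end
end

section
/- Let η > 0 and λ ∈ ℂ. Let N : ℝ^d → ℂ be a twice continuously differentiable function with ∫ |N|² dv < ∞ and ∫ |∇N|² dv < ∞, satisfying pointwise the penalized equation −ΔN + WN + iηv₁N − λη^{2/3}N = −bΦ on ℝ^d with b := ∫ (N − M)Φ dv, and assume v ↦ v₁ N(v) M(v) is integrable on ℝ^d. Then b = η^{2/3} ∫_{ℝ^d} (λ − i η^{1/3} v₁) N(v) M(v) dv. -/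
open MeasureTheory Real

noncomputable section

/-- The Laplacian on `ℝ^d`, as the sum of the second partial derivatives. -/
def lap {d : ℕ} {E : Type*} [NormedAddCommGroup E] [NormedSpace ℝ E]
    (f : EuclideanSpace ℝ (Fin d) → E) (v : EuclideanSpace ℝ (Fin d)) : E :=
  ∑ i : Fin d, fderiv ℝ (fun w => fderiv ℝ f w (EuclideanSpace.single i (1 : ℝ))) v
    (EuclideanSpace.single i (1 : ℝ))

/-- The penalization function `Φ := (∫ M²⟨v⟩⁻²)⁻¹ M ⟨v⟩⁻²`, so that `∫ M Φ = 1`. -/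
def Phi {d : ℕ} (M : EuclideanSpace ℝ (Fin d) → ℝ) (v : EuclideanSpace ℝ (Fin d)) : ℝ :=
  (∫ w, (M w) ^ 2 / (1 + ‖w‖ ^ 2))⁻¹ * (M v / (1 + ‖v‖ ^ 2))

open Filter Topology in
/-- Integral of a divergence with integrable field vanishes. -/
theorem div_zero_aux {d : ℕ} (F : Fin d → EuclideanSpace ℝ (Fin d) → ℂ)
    (hF : ∀ i, ContDiff ℝ 1 (F i)) (hFi : ∀ i, Integrable (F i))
    (G : EuclideanSpace ℝ (Fin d) → ℂ) (hG : Integrable G)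
    (h : ∀ v, ∑ i, fderiv ℝ (F i) v (EuclideanSpace.single i (1 : ℝ)) = G v) :
    ∫ v, G v = 0 := by
  let b : ContDiffBump (0 : EuclideanSpace ℝ (Fin d)) := ⟨1, 2, by norm_num, by norm_num⟩
  let χ : EuclideanSpace ℝ (Fin d) → ℝ := fun v => b v
  have hχ : ContDiff ℝ 1 χ := b.contDiff
  have hχc : HasCompactSupport χ := b.hasCompactSupport
  have hχ1 : ∀ v, ‖χ v‖ ≤ 1 := fun v => by
    rw [Real.norm_of_nonneg b.nonneg]; exact b.le_one
  obtain ⟨C, hC⟩ : ∃ C, ∀ v, ‖fderiv ℝ χ v‖ ≤ C :=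
    (hχc.fderiv (𝕜 := ℝ)).exists_bound_of_continuous (hχ.continuous_fderiv one_ne_zero)
  let c : ℕ → ℝ := fun n => ((n : ℝ) + 1)⁻¹
  have hc0 : ∀ n, 0 < c n := fun n => by positivity
  have hc1 : ∀ n, c n ≤ 1 := fun n => inv_le_one_of_one_le₀ (by simp)
  have hct : Tendsto c atTop (𝓝 0) := by
    simpa [c, one_div] using tendsto_one_div_add_atTop_nhds_zero_nat (𝕜 := ℝ)
  let χn : ℕ → EuclideanSpace ℝ (Fin d) → ℝ := fun n v => χ (c n • v)
  have hχn : ∀ n, ContDiff ℝ 1 (χn n) := fun n => hχ.comp (contDiff_const_smul _)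
  have hχnc : ∀ n, HasCompactSupport (χn n) := fun n => hχc.comp_smul (hc0 n).ne'
  have hder : ∀ n v, fderiv ℝ (χn n) v = c n • fderiv ℝ χ (c n • v) := fun n v => by
    simp only [χn]
    exact fderiv_comp_smul (c n)
  have hchi_t : ∀ v, Tendsto (fun n => χn n v) atTop (𝓝 1) := fun v => by
    have h1 : Tendsto (fun n => c n • v) atTop (𝓝 0) := by
      simpa using hct.smul_const v
    have h2 : χ 0 = 1 := b.one_of_mem_closedBall (by simp [b])
    rw [← h2]
    exact (hχ.continuous.tendsto 0).comp h1
  have key : ∀ n, ∫ v, χn n v • G v =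
      -∑ i, ∫ v, (fderiv ℝ (χn n) v (EuclideanSpace.single i (1 : ℝ))) • F i v := by
    intro n
    have hi1 : ∀ i, Integrable (fun v => χn n v •
        fderiv ℝ (F i) v (EuclideanSpace.single i (1 : ℝ))) := fun i => by
      apply Continuous.integrable_of_hasCompactSupport
      · exact (hχn n).continuous.smul
          (((hF i).continuous_fderiv one_ne_zero).clm_apply continuous_const)
      · exact (hχnc n).smul_right
    have hi2 : ∀ i, Integrable (fun v =>
        (fderiv ℝ (χn n) v (EuclideanSpace.single i (1 : ℝ))) • F i v) := fun i => by
      apply Continuous.integrable_of_hasCompactSupport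
      · exact (((hχn n).continuous_fderiv one_ne_zero).clm_apply continuous_const).smul
          (hF i).continuous
      · exact ((hχnc n).fderiv_apply (𝕜 := ℝ) _).smul_right
    have hi3 : ∀ i, Integrable (fun v => χn n v • F i v) := fun i => by
      apply Continuous.integrable_of_hasCompactSupport
      · exact (hχn n).continuous.smul (hF i).continuous
      · exact (hχnc n).smul_right
    simp_rw [← h, Finset.smul_sum]
    rw [integral_finsetSum _ (fun i _ => hi1 i), ← Finset.sum_neg_distrib]
    refine Finset.sum_congr rfl fun i _ => ?_
    exact integral_smul_fderiv_eq_neg_fderiv_smul_of_integrable (hi2 i) (hi1 i) (hi3 i)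
      (fun x _ => (hχn n).differentiable one_ne_zero x) (fun x _ => (hF i).differentiable one_ne_zero x)
  have t1 : Tendsto (fun n => ∫ v, χn n v • G v) atTop (𝓝 (∫ v, G v)) := by
    refine tendsto_integral_of_dominated_convergence (fun v => ‖G v‖) ?_ hG.norm ?_ ?_
    · exact fun n => (hχn n).continuous.aestronglyMeasurable.smul hG.1
    · refine fun n => Eventually.of_forall fun v => ?_
      rw [norm_smul]
      exact mul_le_of_le_one_left (norm_nonneg _) (hχ1 _)
    · refine Eventually.of_forall fun v => ?_
      simpa using (hchi_t v).smul_const (G v)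
  have t2 : ∀ i, Tendsto (fun n => ∫ v,
      (fderiv ℝ (χn n) v (EuclideanSpace.single i (1 : ℝ))) • F i v) atTop (𝓝 0) := by
    intro i
    have hb : ∀ n v, ‖(fderiv ℝ (χn n) v (EuclideanSpace.single i (1 : ℝ))) • F i v‖ ≤
        c n * (C * ‖F i v‖) := by
      intro n v
      rw [norm_smul, ← mul_assoc]
      gcongr
      refine (ContinuousLinearMap.le_opNorm _ _).trans ?_
      rw [hder, norm_smul, Real.norm_of_nonneg (hc0 n).le]
      simp only [PiLp.norm_single, norm_one, mul_one]
      exact mul_le_mul_of_nonneg_left (hC _) (hc0 n).le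
    refine squeeze_zero_norm (a := fun n => c n * ∫ v, C * ‖F i v‖) (fun n => ?_)
      (by simpa using hct.mul_const (∫ v, C * ‖F i v‖))
    rw [← integral_const_mul]
    exact norm_integral_le_of_norm_le (((hFi i).norm.const_mul C).const_mul _)
      (Eventually.of_forall (hb n))
  have t3 : Tendsto (fun n => ∫ v, χn n v • G v) atTop (𝓝 0) := by
    simp_rw [key]
    simpa using (tendsto_finsetSum Finset.univ (fun i _ => t2 i)).neg
  exact tendsto_nhds_unique t1 t3

/-- **Identity for the penalized term** (item 1 of Proposition 3.3 of the paper):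
`b = η^{2/3} ∫ (λ − i η^{1/3} v₁) N M dv`. -/
theorem penalized_term_identity (d : ℕ) (h0 : 0 < d) (γ C₁ C₂ C₃ : ℝ)
    (hγ : (d : ℝ) / 2 < γ)
    (hC₁ : 0 < C₁) (hC₁₂ : C₁ ≤ C₂) (hC₂₃ : C₂ ≤ C₃)
    (M : EuclideanSpace ℝ (Fin d) → ℝ) (hMpos : ∀ v, 0 < M v) (hM : ContDiff ℝ 2 M)
    (hA1 : ∀ v, C₁ * Real.sqrt (1 + ‖v‖ ^ 2) ^ (-γ) ≤ M v ∧
              M v ≤ C₂ * Real.sqrt (1 + ‖v‖ ^ 2) ^ (-γ))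
    (hgradM : ∀ v, ‖fderiv ℝ M v‖ ≤ C₃ * Real.sqrt (1 + ‖v‖ ^ 2) ^ (-γ))
    (η : ℝ) (hη : 0 < η) (l : ℂ)
    (N : EuclideanSpace ℝ (Fin d) → ℂ) (hN : ContDiff ℝ 2 N)
    (hNL2 : Integrable (fun v => ‖N v‖ ^ 2))
    (hgradN : Integrable (fun v => ‖fderiv ℝ N v‖ ^ 2))
    (heq : ∀ v, -(lap N v) + ((lap M v / M v : ℝ) : ℂ) * N v
        + Complex.I * (η : ℂ) * ((v (⟨0, h0⟩ : Fin d) : ℝ) : ℂ) * N v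
        - l * ((η ^ ((2 : ℝ) / 3) : ℝ) : ℂ) * N v =
      -(∫ w, (N w - (M w : ℂ)) * ((Phi M w : ℝ) : ℂ)) * ((Phi M v : ℝ) : ℂ))
    (hint : Integrable (fun v =>
        ((v (⟨0, h0⟩ : Fin d) : ℝ) : ℂ) * N v * ((M v : ℝ) : ℂ))) :
    (∫ v, (N v - (M v : ℂ)) * ((Phi M v : ℝ) : ℂ)) =
      ((η ^ ((2 : ℝ) / 3) : ℝ) : ℂ) *
        ∫ v, (l - Complex.I * ((η ^ ((1 : ℝ) / 3) : ℝ) : ℂ) *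
            ((v (⟨0, h0⟩ : Fin d) : ℝ) : ℂ)) * N v * ((M v : ℝ) : ℂ) := by
  have hJ0 : ∀ v : EuclideanSpace ℝ (Fin d), 0 < Real.sqrt (1 + ‖v‖ ^ 2) ^ (-γ) := fun v => by
    positivity
  have hJc : Continuous (fun v : EuclideanSpace ℝ (Fin d) => Real.sqrt (1 + ‖v‖ ^ 2) ^ (-γ)) := by
    refine Continuous.rpow_const (by fun_prop) fun v => Or.inl ?_
    positivity
  have hJ2 : Integrable (fun v : EuclideanSpace ℝ (Fin d) =>
      (Real.sqrt (1 + ‖v‖ ^ 2) ^ (-γ)) ^ 2) := by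
    have := integrable_rpow_neg_one_add_norm_sq (E := EuclideanSpace ℝ (Fin d))
      (μ := volume) (r := 2 * γ) (by simp; linarith)
    refine this.congr (Filter.Eventually.of_forall fun v => ?_)
    have hp : (0 : ℝ) ≤ 1 + ‖v‖ ^ 2 := by positivity
    simp only
    rw [Real.sqrt_eq_rpow, ← Real.rpow_mul hp,
      ← Real.rpow_natCast (_ ^ (1 / 2 * -γ)), ← Real.rpow_mul hp]
    congr 1
    push_cast
    ring
  generalize hJdef : (fun v : EuclideanSpace ℝ (Fin d) => Real.sqrt (1 + ‖v‖ ^ 2) ^ (-γ)) = J at hJc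
  have hJe : ∀ v, Real.sqrt (1 + ‖v‖ ^ 2) ^ (-γ) = J v := fun v => congrFun hJdef v
  simp only [hJe] at hJ0 hJ2 hA1 hgradM
  have hC₂ : 0 < C₂ := hC₁.trans_le hC₁₂
  have hC₃ : 0 < C₃ := hC₂.trans_le hC₂₃
  have hMc : Continuous M := hM.continuous
  have hNc : Continuous N := hN.continuous
  have hdM : Continuous (fderiv ℝ M) := hM.continuous_fderiv two_ne_zero
  have hdN : Continuous (fderiv ℝ N) := hN.continuous_fderiv two_ne_zero
  have hJN : Integrable (fun v => J v * ‖N v‖) := by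
    refine (hJ2.add hNL2).mono' (by fun_prop) (Filter.Eventually.of_forall fun v => ?_)
    have := hJ0 v
    rw [Real.norm_of_nonneg (by positivity)]
    simp only [Pi.add_apply]
    nlinarith [sq_nonneg (J v - ‖N v‖), sq_nonneg (J v + ‖N v‖)]
  have hJdN : Integrable (fun v => J v * ‖fderiv ℝ N v‖) := by
    refine (hJ2.add hgradN).mono' (by fun_prop) (Filter.Eventually.of_forall fun v => ?_)
    have := hJ0 v
    rw [Real.norm_of_nonneg (by positivity)]
    simp only [Pi.add_apply]
    nlinarith [sq_nonneg (J v - ‖fderiv ℝ N v‖), sq_nonneg (J v + ‖fderiv ℝ N v‖)]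
  have hNM : Integrable (fun v => N v * ((M v : ℝ) : ℂ)) := by
    refine (hJN.const_mul C₂).mono' (by fun_prop) (Filter.Eventually.of_forall fun v => ?_)
    rw [norm_mul, Complex.norm_real, Real.norm_of_nonneg (hMpos v).le]
    nlinarith [(hA1 v).2, norm_nonneg (N v)]
  have hMM : Integrable (fun v => (M v) ^ 2 / (1 + ‖v‖ ^ 2)) := by
    refine (hJ2.const_mul (C₂ ^ 2)).mono'
      (Continuous.aestronglyMeasurable (by
        refine Continuous.div (by fun_prop) (by fun_prop) fun v => ?_
        positivity))
      (Filter.Eventually.of_forall fun v => ?_)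
    rw [Real.norm_of_nonneg (by positivity), ← mul_pow]
    refine (div_le_self (by positivity) (by nlinarith [sq_nonneg ‖v‖])).trans ?_
    exact pow_le_pow_left₀ (hMpos v).le (hA1 v).2 2
  have hZ : 0 < ∫ w, (M w) ^ 2 / (1 + ‖w‖ ^ 2) := by
    rw [integral_pos_iff_support_of_nonneg (fun v => by positivity) hMM]
    have : Function.support (fun v => (M v) ^ 2 / (1 + ‖v‖ ^ 2)) = Set.univ := by
      ext v
      have := hMpos v
      simp only [Function.mem_support, Set.mem_univ, iff_true]
      positivity
    rw [this]
    exact isOpen_univ.measure_pos _ Set.univ_nonempty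
  have hMPhi : ∀ v, M v * Phi M v =
      (∫ w, (M w) ^ 2 / (1 + ‖w‖ ^ 2))⁻¹ * ((M v) ^ 2 / (1 + ‖v‖ ^ 2)) := fun v => by
    unfold Phi; ring
  have hMPi : Integrable (fun v => M v * Phi M v) := by
    simp_rw [hMPhi]; exact hMM.const_mul _
  have hMP1 : ∫ v, M v * Phi M v = 1 := by
    simp_rw [hMPhi]
    rw [integral_const_mul, inv_mul_cancel₀ hZ.ne']
  generalize (∫ w, (N w - (M w : ℂ)) * ((Phi M w : ℝ) : ℂ)) = b at heq ⊢
  have hMPiC : Integrable (fun v => ((M v * Phi M v : ℝ) : ℂ)) := hMPi.ofReal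
  have hMP1C : ∫ v, ((M v * Phi M v : ℝ) : ℂ) = 1 := by
    rw [integral_complex_ofReal, hMP1]; simp
  -- the divergence identity
  have hsing : ∀ i : Fin d, ‖(EuclideanSpace.single i (1 : ℝ))‖ = 1 := fun i => by simp
  have hdNi : ∀ i : Fin d, ContDiff ℝ 1
      (fun w => fderiv ℝ N w (EuclideanSpace.single i (1 : ℝ))) := fun i =>
    (hN.fderiv_right (m := 1) (by norm_num)).clm_apply contDiff_const
  have hdMi : ∀ i : Fin d, ContDiff ℝ 1
      (fun w => fderiv ℝ M w (EuclideanSpace.single i (1 : ℝ))) := fun i =>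
    (hM.fderiv_right (m := 1) (by norm_num)).clm_apply contDiff_const
  have hN1 : ContDiff ℝ 1 N := hN.of_le (by norm_num)
  have hM1 : ContDiff ℝ 1 M := hM.of_le (by norm_num)
  have hdiv := div_zero_aux
    (fun i v => M v • fderiv ℝ N v (EuclideanSpace.single i (1 : ℝ))
      - fderiv ℝ M v (EuclideanSpace.single i (1 : ℝ)) • N v)
    (fun i => (hM1.smul (hdNi i)).sub ((hdMi i).smul hN1))
    (fun i => by
      refine ((hJdN.const_mul C₂).add (hJN.const_mul C₃)).mono'
        (Continuous.aestronglyMeasurable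
          ((hM1.smul (hdNi i)).sub ((hdMi i).smul hN1)).continuous)
        (Filter.Eventually.of_forall fun v => ?_)
      refine (norm_sub_le _ _).trans ?_
      rw [norm_smul, norm_smul, Real.norm_of_nonneg (hMpos v).le]
      simp only [Pi.add_apply, ← mul_assoc]
      have e1 := (fderiv ℝ N v).le_opNorm (EuclideanSpace.single i (1 : ℝ))
      have e2 := (fderiv ℝ M v).le_opNorm (EuclideanSpace.single i (1 : ℝ))
      rw [hsing, mul_one] at e1 e2
      have := hMpos v
      have := hJ0 v
      gcongr
      · exact (hA1 v).2
      · exact e2.trans (hgradM v))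
    (fun v => Complex.I * (η : ℂ) * (((v (⟨0, h0⟩ : Fin d) : ℝ) : ℂ) * N v * ((M v : ℝ) : ℂ))
        - l * ((η ^ ((2 : ℝ) / 3) : ℝ) : ℂ) * (N v * ((M v : ℝ) : ℂ))
        + b * ((M v * Phi M v : ℝ) : ℂ))
    (((hint.const_mul _).sub (hNM.const_mul _)).add (hMPiC.const_mul _))
    (fun v => by
      have hsum : ∑ i : Fin d, fderiv ℝ (fun v => M v • fderiv ℝ N v (EuclideanSpace.single i (1 : ℝ))
          - fderiv ℝ M v (EuclideanSpace.single i (1 : ℝ)) • N v) v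
            (EuclideanSpace.single i (1 : ℝ)) = (M v : ℂ) * lap N v - ((lap M v : ℝ) : ℂ) * N v := by
        unfold lap
        rw [Complex.ofReal_sum, Finset.mul_sum, Finset.sum_mul, ← Finset.sum_sub_distrib]
        refine Finset.sum_congr rfl fun i _ => ?_
        have a1 := hM1.differentiable one_ne_zero v
        have a2 := hN1.differentiable one_ne_zero v
        have a3 := (hdMi i).differentiable one_ne_zero v
        have a4 := (hdNi i).differentiable one_ne_zero v
        rw [fderiv_fun_sub (a1.fun_smul a4) (a3.fun_smul a2), fderiv_fun_smul a1 a4, fderiv_fun_smul a3 a2]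
        simp
        ring
      rw [hsum]
      have h1 := heq v
      have hM0 : (M v : ℂ) ≠ 0 := by exact_mod_cast (hMpos v).ne'
      have h2 : (M v : ℂ) * ((lap M v / M v : ℝ) : ℂ) = ((lap M v : ℝ) : ℂ) := by
        push_cast; field_simp
      push_cast at h1 h2 ⊢
      linear_combination (-(M v : ℂ)) * h1 + N v * h2)
  have hsubi : Integrable (fun v =>
      Complex.I * (η : ℂ) * (((v (⟨0, h0⟩ : Fin d) : ℝ) : ℂ) * N v * ((M v : ℝ) : ℂ))
        - l * ((η ^ ((2 : ℝ) / 3) : ℝ) : ℂ) * (N v * ((M v : ℝ) : ℂ))) :=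
    (hint.const_mul _).sub (hNM.const_mul _)
  rw [integral_add hsubi (hMPiC.const_mul _),
    integral_sub (hint.const_mul _) (hNM.const_mul _), integral_const_mul, integral_const_mul,
    integral_const_mul, hMP1C] at hdiv
  have hR : ∫ v, (l - Complex.I * ((η ^ ((1 : ℝ) / 3) : ℝ) : ℂ) *
            ((v (⟨0, h0⟩ : Fin d) : ℝ) : ℂ)) * N v * ((M v : ℝ) : ℂ) =
      l * (∫ v, N v * ((M v : ℝ) : ℂ)) - Complex.I * ((η ^ ((1 : ℝ) / 3) : ℝ) : ℂ) *
        ∫ v, ((v (⟨0, h0⟩ : Fin d) : ℝ) : ℂ) * N v * ((M v : ℝ) : ℂ) := by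
    rw [← integral_const_mul, ← integral_const_mul,
      ← integral_sub (hNM.const_mul _) (hint.const_mul _)]
    congr 1
    ext v
    ring
  rw [hR]
  have hpow : ((η ^ ((2 : ℝ) / 3) : ℝ) : ℂ) * ((η ^ ((1 : ℝ) / 3) : ℝ) : ℂ) = (η : ℂ) := by
    rw [← Complex.ofReal_mul, ← Real.rpow_add hη]
    norm_num
  linear_combination hdiv + Complex.I *
    (∫ v, ((v (⟨0, h0⟩ : Fin d) : ℝ) : ℂ) * N v * ((M v : ℝ) : ℂ)) * hpow
end
end

section
/- Assume γ ∈ ((d+1)/2,(d+4)/2). There exist η₀ > 0 and C > 0 such that the following holds for every η ∈ (0,η₀] and every R > 0. Let N : ℝ^d → ℂ be a twice continuously differentiable function with ∫ |N|² dv < ∞, ∫ |∇(N/M)|² M² dv < ∞ and ∫ (1+|v₁|) |N|² dv ≤ K, satisfying pointwise the equation −ΔN + WN + iηv₁N = −bΦ on ℝ^d with b := ∫ (N − M)Φ dv. Set c_η := (∫ M²⟨v⟩^{−2} dv)^{−1} ∫ N M ⟨v⟩^{−2} dv. Then ∫_{\{|v₁| ≤ R\}} |N(v) − c_η M(v)|²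 ⟨v⟩^{−2} dv ≤ C(1+K²) η. -/
open MeasureTheory Real
noncomputable section

/-- Divergence theorem on the whole space for integrable fields with integrable divergence. -/
theorem integral_div_zero {d : ℕ} (J : Fin d → EuclideanSpace ℝ (Fin d) → ℂ)
    (hJ : ∀ i, ContDiff ℝ 1 (J i)) (hJi : ∀ i, Integrable (J i))
    (hdiv : Integrable (fun v => ∑ i, fderiv ℝ (J i) v (EuclideanSpace.single i (1 : ℝ)))) :
    ∫ v, ∑ i, fderiv ℝ (J i) v (EuclideanSpace.single i (1 : ℝ)) = 0 := by
  classical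
  let f : ContDiffBump (0 : EuclideanSpace ℝ (Fin d)) := ⟨1, 2, one_pos, one_lt_two⟩
  have hfC : ContDiff ℝ 1 (f : EuclideanSpace ℝ (Fin d) → ℝ) := f.contDiff
  obtain ⟨C, hC⟩ : ∃ C, ∀ x, ‖fderiv ℝ (f : EuclideanSpace ℝ (Fin d) → ℝ) x‖ ≤ C :=
    (f.hasCompactSupport.fderiv (𝕜 := ℝ)).exists_bound_of_continuous
      (hfC.continuous_fderiv one_ne_zero)
  let a : ℕ → ℝ := fun n => ((n : ℝ) + 1)⁻¹
  have ha0 : ∀ n, 0 < a n := fun n => by positivity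
  have ha1 : ∀ n, a n ≤ 1 := fun n => inv_le_one_of_one_le₀ (by simp)
  have hat : Filter.Tendsto a Filter.atTop (nhds 0) := by
    simpa [a, one_div] using tendsto_one_div_add_atTop_nhds_zero_nat (𝕜 := ℝ)
  let χ : ℕ → EuclideanSpace ℝ (Fin d) → ℝ := fun n v => f (a n • v)
  have hχC : ∀ n, ContDiff ℝ 1 (χ n) := fun n => hfC.comp (contDiff_id.const_smul (a n))
  have hχs : ∀ n, HasCompactSupport (χ n) := fun n =>
    f.hasCompactSupport.comp_homeomorph (Homeomorph.smulOfNeZero (a n) (ha0 n).ne')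
  have hχd : ∀ n v, fderiv ℝ (χ n) v = a n • fderiv ℝ f (a n • v) := by
    intro n v
    have := fderiv_comp_smul (𝕜 := ℝ) (f := (f : EuclideanSpace ℝ (Fin d) → ℝ)) (a n) (x := v)
    simpa [χ] using this
  have key : ∀ n, ∫ v, (χ n v) • ∑ i, fderiv ℝ (J i) v (EuclideanSpace.single i (1 : ℝ))
      = - ∑ i, ∫ v, (fderiv ℝ (χ n) v (EuclideanSpace.single i (1 : ℝ))) • J i v := by
    intro n
    have hc1 : ∀ i, Continuous (fun v => fderiv ℝ (J i) v (EuclideanSpace.single i (1 : ℝ))) :=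
      fun i => ((hJ i).continuous_fderiv one_ne_zero).clm_apply continuous_const
    have hc2 : ∀ i, Continuous (fun v => fderiv ℝ (χ n) v (EuclideanSpace.single i (1 : ℝ))) :=
      fun i => ((hχC n).continuous_fderiv one_ne_zero).clm_apply continuous_const
    have i1 : ∀ i, Integrable
        (fun v => (χ n v) • fderiv ℝ (J i) v (EuclideanSpace.single i (1 : ℝ))) := fun i =>
      ((hχC n).continuous.smul (hc1 i)).integrable_of_hasCompactSupport ((hχs n).smul_right)
    have i2 : ∀ i, Integrable
        (fun v => (fderiv ℝ (χ n) v (EuclideanSpace.single i (1 : ℝ))) • J i v) := fun i =>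
      ((hc2 i).smul (hJ i).continuous).integrable_of_hasCompactSupport
        (((hχs n).fderiv_apply (𝕜 := ℝ) _).smul_right)
    have i3 : ∀ i, Integrable (fun v => (χ n v) • J i v) := fun i =>
      ((hχC n).continuous.smul (hJ i).continuous).integrable_of_hasCompactSupport
        ((hχs n).smul_right)
    simp_rw [Finset.smul_sum]
    rw [integral_finsetSum _ (fun i _ => i1 i), ← Finset.sum_neg_distrib]
    refine Finset.sum_congr rfl fun i _ => ?_
    exact integral_smul_fderiv_eq_neg_fderiv_smul_of_integrable (i2 i) (i1 i) (i3 i)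
      (fun x _ => ((hχC n).differentiable one_ne_zero) x)
      (fun x _ => ((hJ i).differentiable one_ne_zero) x)
  have l1 : Filter.Tendsto (fun n => ∫ v, (χ n v) •
      ∑ i, fderiv ℝ (J i) v (EuclideanSpace.single i (1 : ℝ))) Filter.atTop
      (nhds (∫ v, ∑ i, fderiv ℝ (J i) v (EuclideanSpace.single i (1 : ℝ)))) := by
    refine tendsto_integral_of_dominated_convergence _
      (fun n => (hχC n).continuous.aestronglyMeasurable.smul hdiv.1) hdiv.norm
      (fun n => Filter.Eventually.of_forall fun v => ?_)
      (Filter.Eventually.of_forall fun v => ?_)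
    · rw [norm_smul, Real.norm_of_nonneg f.nonneg]
      exact mul_le_of_le_one_left (norm_nonneg _) f.le_one
    · have h1 : Filter.Tendsto (fun n => χ n v) Filter.atTop (nhds 1) := by
        have h2 : Filter.Tendsto (fun n => a n • v) Filter.atTop (nhds ((0 : ℝ) • v)) :=
          hat.smul_const v
        have h3 := (f.continuous.tendsto ((0 : ℝ) • v)).comp h2
        have h4 : f ((0 : ℝ) • v) = 1 := by
          rw [zero_smul]; exact f.one_of_mem_closedBall (by simp [f])
        rw [h4] at h3
        exact h3
      simpa using h1.smul_const (∑ i, fderiv ℝ (J i) v (EuclideanSpace.single i (1 : ℝ)))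
  have l2 : ∀ i, Filter.Tendsto (fun n => ∫ v,
      (fderiv ℝ (χ n) v (EuclideanSpace.single i (1 : ℝ))) • J i v) Filter.atTop
      (nhds (∫ _ : EuclideanSpace ℝ (Fin d), (0 : ℂ))) := by
    intro i
    have hb : ∀ n v, ‖(fderiv ℝ (χ n) v (EuclideanSpace.single i (1 : ℝ))) • J i v‖
        ≤ a n * (C * ‖J i v‖) := by
      intro n v
      rw [norm_smul, ← mul_assoc]
      refine mul_le_mul_of_nonneg_right ?_ (norm_nonneg _)
      refine (ContinuousLinearMap.le_opNorm _ _).trans ?_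
      rw [hχd, norm_smul, Real.norm_of_nonneg (ha0 n).le]
      simp only [PiLp.norm_single, norm_one, mul_one]
      exact mul_le_mul_of_nonneg_left (hC _) (ha0 n).le
    have hC0 : 0 ≤ C := (norm_nonneg _).trans (hC 0)
    refine tendsto_integral_of_dominated_convergence (fun v => C * ‖J i v‖)
      (fun n => ?_) ((hJi i).norm.const_mul C)
      (fun n => Filter.Eventually.of_forall fun v => ?_)
      (Filter.Eventually.of_forall fun v => ?_)
    · exact ((((hχC n).continuous_fderiv one_ne_zero).clm_apply
        continuous_const).smul (hJ i).continuous).aestronglyMeasurable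
    · exact (hb n v).trans (mul_le_of_le_one_left (by positivity) (ha1 n))
    · refine squeeze_zero_norm (hb · v) ?_
      simpa using hat.mul_const (C * ‖J i v‖)
  have l3 : Filter.Tendsto (fun n => - ∑ i, ∫ v,
      (fderiv ℝ (χ n) v (EuclideanSpace.single i (1 : ℝ))) • J i v) Filter.atTop
      (nhds (- ∑ i : Fin d, ∫ _ : EuclideanSpace ℝ (Fin d), (0 : ℂ))) :=
    (tendsto_finsetSum _ (fun i _ => l2 i)).neg
  simp_rw [key] at l1
  simpa using tendsto_nhds_unique l1 l3

theorem lintegral_sq_le {α : Type*} [MeasurableSpace α] (μ : Measure α) (f : α → ENNReal)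
    (hf : AEMeasurable f μ) :
    (∫⁻ a, f a ∂μ) ^ 2 ≤ μ Set.univ * ∫⁻ a, f a ^ 2 ∂μ := by
  have h := ENNReal.lintegral_mul_le_Lp_mul_Lq μ Real.HolderConjugate.two_two
    (f := fun _ => 1) (g := f) aemeasurable_const hf
  have e1 : ∀ x : ENNReal, (x ^ (1 / 2 : ℝ)) ^ 2 = x := by
    intro x
    rw [← ENNReal.rpow_natCast, ← ENNReal.rpow_mul]; norm_num
  have h2 := pow_le_pow_left' h 2
  rw [mul_pow, e1, e1] at h2
  simpa using h2

/-- The weight `⟨v⟩^{-2γ}`. -/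
def jw {d : ℕ} (γ : ℝ) (v : EuclideanSpace ℝ (Fin d)) : ENNReal :=
  ENNReal.ofReal ((1 + ‖v‖ ^ 2) ^ (-γ))

theorem jw_measurable {d : ℕ} (γ : ℝ) : Measurable (jw (d := d) γ) := by
  unfold jw; fun_prop

theorem real_kernel {s a b c γ : ℝ} (hγ : 0 < γ) (hs : 0 < s) (hs1 : s < 1) (ha : 0 < a)
    (hb : 0 < b) (hc : 0 < c) (h : c ≤ 2 * (s ^ 2 * a + (1 - s) ^ 2 * b)) :
    a ^ (-γ) * b ^ (-γ) ≤
      4 ^ γ * c ^ (-γ) * ((s ^ 2) ^ γ * b ^ (-γ) + ((1 - s) ^ 2) ^ γ * a ^ (-γ)) := by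
  have key : ∀ t x : ℝ, 0 < t → 0 < x → c ≤ 4 * t ^ 2 * x →
      x ^ (-γ) ≤ 4 ^ γ * c ^ (-γ) * (t ^ 2) ^ γ := by
    intro t x ht hx hcx
    have h1 : c ^ γ ≤ 4 ^ γ * (t ^ 2) ^ γ * x ^ γ := by
      rw [← Real.mul_rpow (by positivity) (by positivity),
        ← Real.mul_rpow (by positivity) (by positivity)]
      exact Real.rpow_le_rpow hc.le hcx hγ.le
    rw [Real.rpow_neg hx.le, Real.rpow_neg hc.le]
    have hcp : 0 < c ^ γ := by positivity
    have hxp : 0 < x ^ γ := by positivity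
    field_simp
    nlinarith
  have h1s : 0 < 1 - s := by linarith
  rcases le_total (s ^ 2 * a) ((1 - s) ^ 2 * b) with h1 | h1
  · have := key (1 - s) b h1s hb (by linarith)
    calc a ^ (-γ) * b ^ (-γ) ≤ a ^ (-γ) * (4 ^ γ * c ^ (-γ) * ((1 - s) ^ 2) ^ γ) := by gcongr
      _ = 4 ^ γ * c ^ (-γ) * (((1 - s) ^ 2) ^ γ * a ^ (-γ)) := by ring
      _ ≤ _ := by gcongr; exact le_add_of_nonneg_left (by positivity)
  · have := key s a hs ha (by linarith)
    calc a ^ (-γ) * b ^ (-γ) ≤ (4 ^ γ * c ^ (-γ) * (s ^ 2) ^ γ) * b ^ (-γ) := by gcongr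
      _ = 4 ^ γ * c ^ (-γ) * ((s ^ 2) ^ γ * b ^ (-γ)) := by ring
      _ ≤ _ := by gcongr; exact le_add_of_nonneg_right (by positivity)

theorem jw_kernel {d : ℕ} {γ s : ℝ} (hγ : 0 < γ) (hs : 0 < s) (hs1 : s < 1)
    (v w : EuclideanSpace ℝ (Fin d)) :
    jw γ v * jw γ w ≤ ENNReal.ofReal (4 ^ γ) * jw γ (s • v + (1 - s) • w) *
      (ENNReal.ofReal ((s ^ 2) ^ γ) * jw γ w + ENNReal.ofReal (((1 - s) ^ 2) ^ γ) * jw γ v) := by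
  unfold jw
  have h1s : 0 < 1 - s := by linarith
  rw [← ENNReal.ofReal_mul (by positivity), ← ENNReal.ofReal_mul (by positivity),
    ← ENNReal.ofReal_mul (by positivity), ← ENNReal.ofReal_mul (by positivity),
    ← ENNReal.ofReal_add (by positivity) (by positivity), ← ENNReal.ofReal_mul (by positivity)]
  refine ENNReal.ofReal_le_ofReal (real_kernel hγ hs hs1 (by positivity) (by positivity)
    (by positivity) ?_)
  have hz : ‖s • v + (1 - s) • w‖ ≤ s * ‖v‖ + (1 - s) * ‖w‖ := by
    refine (norm_add_le _ _).trans ?_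
    rw [norm_smul, norm_smul, Real.norm_of_nonneg hs.le, Real.norm_of_nonneg h1s.le]
  have hz2 := pow_le_pow_left₀ (norm_nonneg _) hz 2
  nlinarith [sq_nonneg (s * ‖v‖ - (1 - s) * ‖w‖), sq_nonneg (2 * s - 1)]

theorem lintegral_affine {d : ℕ} {r : ℝ} (hr : 0 < r) (y : EuclideanSpace ℝ (Fin d))
    (G : EuclideanSpace ℝ (Fin d) → ENNReal) (hG : Measurable G) :
    ∫⁻ v, G (r • v + y) = ENNReal.ofReal ((r ^ d)⁻¹) * ∫⁻ v, G v := by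
  have h1 : ∫⁻ v, G (r • v + y) = ∫⁻ u, G (u + y) ∂(Measure.map (r • ·) volume) := by
    have hG' : Measurable (fun u => G (u + y)) := hG.comp (measurable_add_const y)
    rw [lintegral_map hG' (measurable_const_smul r)]
  rw [h1, Measure.map_addHaar_smul _ hr.ne', lintegral_smul_measure,
    lintegral_add_right_eq_self, finrank_euclideanSpace_fin, abs_of_pos (by positivity), smul_eq_mul]

theorem lint_lin {α : Type*} [MeasurableSpace α] {μ : Measure α} [SFinite μ]
    (k l : ENNReal) (f g : α → α → ENNReal) (hf : Measurable (fun p : α × α => f p.1 p.2))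
    (hg : Measurable (fun p : α × α => g p.1 p.2)) :
    ∫⁻ v, ∫⁻ w, (k * f v w + l * g v w) ∂μ ∂μ =
      k * (∫⁻ v, ∫⁻ w, f v w ∂μ ∂μ) + l * ∫⁻ v, ∫⁻ w, g v w ∂μ ∂μ := by
  have e : ∀ v, ∫⁻ w, (k * f v w + l * g v w) ∂μ =
      k * (∫⁻ w, f v w ∂μ) + l * ∫⁻ w, g v w ∂μ := by
    intro v
    have a1 : Measurable (fun w => f v w) := hf.comp (measurable_const.prodMk measurable_id)
    have a2 : Measurable (fun w => g v w) := hg.comp (measurable_const.prodMk measurable_id)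
    rw [lintegral_add_left (a1.const_mul _), lintegral_const_mul _ a1, lintegral_const_mul _ a2]
  simp_rw [e]
  have b1 : Measurable (fun v => ∫⁻ w, f v w ∂μ) := hf.lintegral_prod_right'
  have b2 : Measurable (fun v => ∫⁻ w, g v w ∂μ) := hg.lintegral_prod_right'
  rw [lintegral_add_left (b1.const_mul _), lintegral_const_mul _ b1, lintegral_const_mul _ b2]

theorem slice_bound {d : ℕ} {γ s : ℝ} (hγ : 0 < γ) (hd : (d : ℝ) ≤ 2 * γ)
    (hs : 0 < s) (hs1 : s < 1)
    (G : EuclideanSpace ℝ (Fin d) → ENNReal) (hG : Measurable G) :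
    ∫⁻ v, ∫⁻ w, jw γ v * jw γ w * G (s • v + (1 - s) • w) ≤
      ENNReal.ofReal (4 ^ γ) * 2 * (∫⁻ v : EuclideanSpace ℝ (Fin d), jw γ v) *
        ∫⁻ v, jw γ v * G v := by
  have hm := jw_measurable (d := d) γ
  set F : EuclideanSpace ℝ (Fin d) → ENNReal := fun z => jw γ z * G z with hF
  have hFm : Measurable F := hm.mul hG
  set k := ENNReal.ofReal (4 ^ γ)
  have hone : ∀ t : ℝ, 0 < t → t < 1 →
      ENNReal.ofReal ((t ^ 2) ^ γ) * ENNReal.ofReal ((t ^ d)⁻¹) ≤ 1 := by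
    intro t ht ht1
    rw [← ENNReal.ofReal_mul (by positivity), ← ENNReal.ofReal_one]
    refine ENNReal.ofReal_le_ofReal ?_
    rw [← div_eq_mul_inv, div_le_one (by positivity), ← Real.rpow_natCast t 2,
      ← Real.rpow_mul ht.le, ← Real.rpow_natCast t d]
    exact Real.rpow_le_rpow_of_exponent_ge ht ht1.le (by simpa using hd)
  have h1s : 0 < 1 - s := by linarith
  have hcz : Measurable (fun p : EuclideanSpace ℝ (Fin d) × EuclideanSpace ℝ (Fin d) =>
      s • p.1 + (1 - s) • p.2) := by fun_prop
  have hstep : ∀ v w, jw γ v * jw γ w * G (s • v + (1 - s) • w) ≤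
      k * ENNReal.ofReal ((s ^ 2) ^ γ) * (jw γ w * F (s • v + (1 - s) • w)) +
      k * ENNReal.ofReal (((1 - s) ^ 2) ^ γ) * (jw γ v * F (s • v + (1 - s) • w)) := by
    intro v w
    refine (mul_le_mul_left (jw_kernel hγ hs hs1 v w) _).trans (le_of_eq ?_)
    simp only [hF, k]; ring
  have mA : Measurable (fun p : EuclideanSpace ℝ (Fin d) × EuclideanSpace ℝ (Fin d) =>
      jw γ p.2 * F (s • p.1 + (1 - s) • p.2)) := (hm.comp measurable_snd).mul (hFm.comp hcz)
  have mB : Measurable (fun p : EuclideanSpace ℝ (Fin d) × EuclideanSpace ℝ (Fin d) =>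
      jw γ p.1 * F (s • p.1 + (1 - s) • p.2)) := (hm.comp measurable_fst).mul (hFm.comp hcz)
  have A : ∫⁻ v, ∫⁻ w, jw γ w * F (s • v + (1 - s) • w) =
      ENNReal.ofReal ((s ^ d)⁻¹) * ((∫⁻ v : EuclideanSpace ℝ (Fin d), jw γ v) * ∫⁻ v, F v) := by
    rw [lintegral_lintegral_swap mA.aemeasurable]
    have : ∀ w, ∫⁻ v, jw γ w * F (s • v + (1 - s) • w) =
        jw γ w * (ENNReal.ofReal ((s ^ d)⁻¹) * ∫⁻ v, F v) := by
      intro w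
      have q : Measurable (fun v => F (s • v + (1 - s) • w)) := hFm.comp (by fun_prop)
      rw [lintegral_const_mul _ q, lintegral_affine hs _ F hFm]
    simp_rw [this]
    rw [lintegral_mul_const _ hm]; ring
  have B : ∫⁻ v, ∫⁻ w, jw γ v * F (s • v + (1 - s) • w) =
      ENNReal.ofReal (((1 - s) ^ d)⁻¹) *
        ((∫⁻ v : EuclideanSpace ℝ (Fin d), jw γ v) * ∫⁻ v, F v) := by
    have : ∀ v, ∫⁻ w, jw γ v * F (s • v + (1 - s) • w) =
        jw γ v * (ENNReal.ofReal (((1 - s) ^ d)⁻¹) * ∫⁻ v, F v) := by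
      intro v
      have q : Measurable (fun w => F (s • v + (1 - s) • w)) := hFm.comp (by fun_prop)
      rw [lintegral_const_mul _ q]
      simp_rw [add_comm (s • v)]
      rw [lintegral_affine h1s _ F hFm]
    simp_rw [this]
    rw [lintegral_mul_const _ hm]; ring
  set I := ∫⁻ v : EuclideanSpace ℝ (Fin d), jw γ v
  set X := ∫⁻ v, F v
  calc ∫⁻ v, ∫⁻ w, jw γ v * jw γ w * G (s • v + (1 - s) • w)
      ≤ ∫⁻ v, ∫⁻ w, (k * ENNReal.ofReal ((s ^ 2) ^ γ) * (jw γ w * F (s • v + (1 - s) • w)) +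
      k * ENNReal.ofReal (((1 - s) ^ 2) ^ γ) * (jw γ v * F (s • v + (1 - s) • w))) :=
        lintegral_mono fun v => lintegral_mono fun w => hstep v w
    _ = k * ENNReal.ofReal ((s ^ 2) ^ γ) * (∫⁻ v, ∫⁻ w, jw γ w * F (s • v + (1 - s) • w)) +
      k * ENNReal.ofReal (((1 - s) ^ 2) ^ γ) *
        ∫⁻ v, ∫⁻ w, jw γ v * F (s • v + (1 - s) • w) := by
      exact lint_lin _ _ _ _ mA mB
    _ = k * (ENNReal.ofReal ((s ^ 2) ^ γ) * ENNReal.ofReal ((s ^ d)⁻¹)) * (I * X) +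
        k * (ENNReal.ofReal (((1 - s) ^ 2) ^ γ) * ENNReal.ofReal (((1 - s) ^ d)⁻¹)) * (I * X) := by
      rw [A, B]; ring
    _ ≤ k * 1 * (I * X) + k * 1 * (I * X) := by
      gcongr
      · exact hone s hs hs1
      · exact hone (1 - s) h1s (by linarith)
    _ = k * 2 * I * X := by ring

theorem path_bound {d : ℕ} (h : EuclideanSpace ℝ (Fin d) → ℂ) (hh : ContDiff ℝ 1 h)
    (v w : EuclideanSpace ℝ (Fin d)) :
    ‖h v - h w‖ₑ ^ 2 ≤ ‖v - w‖ₑ ^ 2 *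
      ∫⁻ s in Set.Ioo (0 : ℝ) 1, ‖fderiv ℝ h (s • v + (1 - s) • w)‖ₑ ^ 2 := by
  have hcz : Continuous (fun s : ℝ => s • v + (1 - s) • w) := by fun_prop
  have hcd : Continuous (fun s : ℝ => fderiv ℝ h (s • v + (1 - s) • w)) :=
    (hh.continuous_fderiv one_ne_zero).comp hcz
  have hd : ∀ s : ℝ, HasDerivAt (fun s : ℝ => h (s • v + (1 - s) • w))
      (fderiv ℝ h (s • v + (1 - s) • w) (v - w)) s := by
    intro s
    have h1 : HasDerivAt (fun s : ℝ => s • v + (1 - s) • w) (v - w) s := by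
      have := ((hasDerivAt_id s).smul_const v).add
        (((hasDerivAt_const s (1 : ℝ)).sub (hasDerivAt_id s)).smul_const w)
      convert! this using 1
      simp [sub_eq_add_neg]
    exact ((hh.differentiable one_ne_zero) _).hasFDerivAt.comp_hasDerivAt s h1
  have hint := intervalIntegral.integral_eq_sub_of_hasDerivAt (a := 0) (b := 1)
    (fun s _ => hd s) ((hcd.clm_apply continuous_const).intervalIntegrable _ _)
  simp only [one_smul, sub_self, zero_smul, add_zero, sub_zero, zero_add] at hint
  rw [intervalIntegral.integral_of_le zero_le_one, integral_Ioc_eq_integral_Ioo] at hint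
  rw [← hint]
  have hme : Measurable (fun s : ℝ => ‖fderiv ℝ h (s • v + (1 - s) • w)‖ₑ) :=
    hcd.enorm.measurable
  calc ‖∫ s in Set.Ioo (0 : ℝ) 1, fderiv ℝ h (s • v + (1 - s) • w) (v - w)‖ₑ ^ 2
      ≤ (∫⁻ s in Set.Ioo (0 : ℝ) 1, ‖v - w‖ₑ * ‖fderiv ℝ h (s • v + (1 - s) • w)‖ₑ) ^ 2 := by
        refine pow_le_pow_left' ((enorm_integral_le_lintegral_enorm _).trans
          (lintegral_mono fun s => ?_)) 2
        rw [mul_comm]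
        exact ContinuousLinearMap.le_opENorm _ _
    _ = ‖v - w‖ₑ ^ 2 * (∫⁻ s in Set.Ioo (0 : ℝ) 1, ‖fderiv ℝ h (s • v + (1 - s) • w)‖ₑ) ^ 2 := by
        rw [lintegral_const_mul _ hme, mul_pow]
    _ ≤ _ := by
        gcongr
        refine (lintegral_sq_le _ _ hme.aemeasurable).trans ?_
        simp

theorem double_bound {d : ℕ} {γ : ℝ} (hγ : 0 < γ) (hd : (d : ℝ) ≤ 2 * γ)
    (h : EuclideanSpace ℝ (Fin d) → ℂ) (hh : ContDiff ℝ 1 h) :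
    ∫⁻ v, ∫⁻ w, ‖h v - h w‖ₑ ^ 2 * (jw γ v * ENNReal.ofReal ((1 + ‖v‖ ^ 2)⁻¹)) *
      (jw γ w * ENNReal.ofReal ((1 + ‖w‖ ^ 2)⁻¹)) ≤
      2 * (ENNReal.ofReal (4 ^ γ) * 2 * (∫⁻ v : EuclideanSpace ℝ (Fin d), jw γ v) *
        ∫⁻ v, jw γ v * ‖fderiv ℝ h v‖ₑ ^ 2) := by
  have hm := jw_measurable (d := d) γ
  have hGm : Measurable (fun v => ‖fderiv ℝ h v‖ₑ ^ 2) :=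
    ((hh.continuous_fderiv one_ne_zero).enorm.measurable).pow_const 2
  have hpt : ∀ v w, ‖h v - h w‖ₑ ^ 2 * (jw γ v * ENNReal.ofReal ((1 + ‖v‖ ^ 2)⁻¹)) *
      (jw γ w * ENNReal.ofReal ((1 + ‖w‖ ^ 2)⁻¹)) ≤ 2 * ∫⁻ s in Set.Ioo (0 : ℝ) 1,
        jw γ v * jw γ w * ‖fderiv ℝ h (s • v + (1 - s) • w)‖ₑ ^ 2 := by
    intro v w
    have hr : ‖v - w‖ₑ ^ 2 * ENNReal.ofReal ((1 + ‖v‖ ^ 2)⁻¹) *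
        ENNReal.ofReal ((1 + ‖w‖ ^ 2)⁻¹) ≤ 2 := by
      rw [← ofReal_norm, ← ENNReal.ofReal_pow (norm_nonneg _),
        ← ENNReal.ofReal_mul (by positivity), ← ENNReal.ofReal_mul (by positivity)]
      refine (ENNReal.ofReal_le_ofReal (q := 2) ?_).trans (by simp)
      rw [mul_assoc, ← mul_inv, ← div_eq_mul_inv, div_le_iff₀ (by positivity)]
      have := pow_le_pow_left₀ (norm_nonneg _) (norm_sub_le v w) 2
      nlinarith [sq_nonneg (‖v‖ - ‖w‖), sq_nonneg (‖v‖ * ‖w‖)]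
    have hmeas : Measurable (fun s : ℝ => ‖fderiv ℝ h (s • v + (1 - s) • w)‖ₑ ^ 2) :=
      hGm.comp (by fun_prop)
    rw [lintegral_const_mul _ hmeas]
    set Y := ∫⁻ s in Set.Ioo (0 : ℝ) 1, ‖fderiv ℝ h (s • v + (1 - s) • w)‖ₑ ^ 2
    calc _ ≤ (‖v - w‖ₑ ^ 2 * Y) * (jw γ v * ENNReal.ofReal ((1 + ‖v‖ ^ 2)⁻¹)) *
      (jw γ w * ENNReal.ofReal ((1 + ‖w‖ ^ 2)⁻¹)) := by
          gcongr; exact path_bound h hh v w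
      _ = (‖v - w‖ₑ ^ 2 * ENNReal.ofReal ((1 + ‖v‖ ^ 2)⁻¹) *
        ENNReal.ofReal ((1 + ‖w‖ ^ 2)⁻¹)) * (jw γ v * jw γ w * Y) := by ring
      _ ≤ _ := by gcongr
  have hbig : Measurable (fun p : (EuclideanSpace ℝ (Fin d) × EuclideanSpace ℝ (Fin d)) × ℝ =>
      jw γ p.1.1 * jw γ p.1.2 * ‖fderiv ℝ h (p.2 • p.1.1 + (1 - p.2) • p.1.2)‖ₑ ^ 2) := by
    refine ((hm.comp (by fun_prop)).mul (hm.comp (by fun_prop))).mul (hGm.comp ?_)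
    exact Continuous.measurable (by fun_prop)
  have hprod : ∀ f : EuclideanSpace ℝ (Fin d) × EuclideanSpace ℝ (Fin d) → ENNReal,
      Measurable f → ∫⁻ v, ∫⁻ w, f (v, w) = ∫⁻ p, f p ∂(volume.prod volume) :=
    fun f hf => (lintegral_prod f hf.aemeasurable).symm
  have hin : Measurable (fun p : EuclideanSpace ℝ (Fin d) × EuclideanSpace ℝ (Fin d) =>
      ∫⁻ s in Set.Ioo (0 : ℝ) 1,
        jw γ p.1 * jw γ p.2 * ‖fderiv ℝ h (s • p.1 + (1 - s) • p.2)‖ₑ ^ 2) :=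
    hbig.lintegral_prod_right'
  calc _ ≤ ∫⁻ v, ∫⁻ w, 2 * ∫⁻ s in Set.Ioo (0 : ℝ) 1,
        jw γ v * jw γ w * ‖fderiv ℝ h (s • v + (1 - s) • w)‖ₑ ^ 2 :=
        lintegral_mono fun v => lintegral_mono fun w => hpt v w
    _ = 2 * ∫⁻ s in Set.Ioo (0 : ℝ) 1, ∫⁻ v, ∫⁻ w,
        jw γ v * jw γ w * ‖fderiv ℝ h (s • v + (1 - s) • w)‖ₑ ^ 2 := by
      rw [hprod _ (hin.const_mul 2), lintegral_const_mul _ hin,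
        lintegral_lintegral_swap hbig.aemeasurable]
      congr 1
      refine lintegral_congr fun s => ?_
      exact (hprod _ (hbig.comp (measurable_id.prodMk measurable_const))).symm
    _ ≤ 2 * ∫⁻ s in Set.Ioo (0 : ℝ) 1,
        (ENNReal.ofReal (4 ^ γ) * 2 * (∫⁻ v : EuclideanSpace ℝ (Fin d), jw γ v) *
        ∫⁻ v, jw γ v * ‖fderiv ℝ h v‖ₑ ^ 2) := by
      gcongr 2 * ?_
      refine setLIntegral_mono measurable_const fun s hs => ?_
      exact slice_bound hγ hd hs.1 hs.2 _ hGm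
    _ = _ := by simp

theorem jensen_var {α : Type*} [MeasurableSpace α] (μ : Measure α) (q : α → ℝ) (hq0 : ∀ x, 0 ≤ q x)
    (hqm : Measurable q) (hq : Integrable q μ) (hA : 0 < ∫ x, q x ∂μ) (h : α → ℂ)
    (hhm : Measurable h) (hh : Integrable (fun x => h x * (q x : ℂ)) μ) (z : ℂ) :
    ENNReal.ofReal (∫ x, q x ∂μ) *
      ‖z - (((∫ x, q x ∂μ)⁻¹ : ℝ) : ℂ) * ∫ x, h x * (q x : ℂ) ∂μ‖ₑ ^ 2 ≤
      ∫⁻ x, ‖z - h x‖ₑ ^ 2 * ENNReal.ofReal (q x) ∂μ := by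
  set A := ∫ x, q x ∂μ with hAdef
  set c := ((A⁻¹ : ℝ) : ℂ) * ∫ x, h x * (q x : ℂ) ∂μ with hc
  have hpm : Measurable (fun x => ENNReal.ofReal (q x)) := hqm.ennreal_ofReal
  have hzm : Measurable (fun x => ‖z - h x‖ₑ) := (measurable_const.sub hhm).enorm
  have e1 : ((A : ℝ) : ℂ) * (z - c) = ∫ x, (z - h x) * (q x : ℂ) ∂μ := by
    have hA' : ((A : ℝ) : ℂ) ≠ 0 := by exact_mod_cast hA.ne'
    have hqc : Integrable (fun x => ((q x : ℝ) : ℂ)) μ := hq.ofReal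
    simp_rw [sub_mul]
    rw [integral_sub (hqc.const_mul z) hh, integral_const_mul, integral_complex_ofReal, hc,
      mul_sub, Complex.ofReal_inv, mul_inv_cancel_left₀ hA', ← hAdef]
    ring
  have e2 : ENNReal.ofReal A * ‖z - c‖ₑ ≤ ∫⁻ x, ‖z - h x‖ₑ * ENNReal.ofReal (q x) ∂μ := by
    have : ENNReal.ofReal A * ‖z - c‖ₑ = ‖((A : ℝ) : ℂ) * (z - c)‖ₑ := by
      rw [enorm_mul]
      congr 1
      rw [← ofReal_norm, Complex.norm_real, Real.norm_of_nonneg hA.le]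
    rw [this, e1]
    refine (enorm_integral_le_lintegral_enorm _).trans (le_of_eq (lintegral_congr fun x => ?_))
    rw [enorm_mul]
    congr 1
    rw [← ofReal_norm, Complex.norm_real, Real.norm_of_nonneg (hq0 x)]
  have e3 := lintegral_sq_le (μ.withDensity (fun x => ENNReal.ofReal (q x))) _ hzm.aemeasurable
  rw [lintegral_withDensity_eq_lintegral_mul _ hpm hzm,
    lintegral_withDensity_eq_lintegral_mul _ hpm (hzm.pow_const 2),
    withDensity_apply _ MeasurableSet.univ, Measure.restrict_univ,
    ← ofReal_integral_eq_lintegral_ofReal hq (Filter.Eventually.of_forall hq0)] at e3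
  simp only [Pi.mul_apply] at e3
  simp_rw [mul_comm (ENNReal.ofReal (q _))] at e3
  have e4 := (pow_le_pow_left' e2 2).trans e3
  have hA0 : ENNReal.ofReal A ≠ 0 := by simpa using hA
  rw [mul_pow, sq (ENNReal.ofReal A), mul_assoc] at e4
  exact (ENNReal.mul_le_mul_iff_right hA0 ENNReal.ofReal_ne_top).1 e4

theorem hardy_poincare {d : ℕ} {γ C₁ C₂ : ℝ} (hd : (d : ℝ) < 2 * γ) (hγ : 0 < γ)
    (hC₁ : 0 < C₁)
    (M : EuclideanSpace ℝ (Fin d) → ℝ) (hMpos : ∀ v, 0 < M v) (hM : Continuous M)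
    (hA1 : ∀ v, C₁ * Real.sqrt (1 + ‖v‖ ^ 2) ^ (-γ) ≤ M v ∧
              M v ≤ C₂ * Real.sqrt (1 + ‖v‖ ^ 2) ^ (-γ))
    (hq : Integrable (fun v => M v ^ 2 / (1 + ‖v‖ ^ 2)))
    (hA : 0 < ∫ v, M v ^ 2 / (1 + ‖v‖ ^ 2)) :
    ∃ P : ENNReal, P ≠ ⊤ ∧ ∀ h : EuclideanSpace ℝ (Fin d) → ℂ, ContDiff ℝ 1 h →
      Integrable (fun v => h v * ((M v ^ 2 / (1 + ‖v‖ ^ 2) : ℝ) : ℂ)) →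
      ∫⁻ v, ‖h v - (((∫ v, M v ^ 2 / (1 + ‖v‖ ^ 2))⁻¹ : ℝ) : ℂ) *
          ∫ v, h v * ((M v ^ 2 / (1 + ‖v‖ ^ 2) : ℝ) : ℂ)‖ₑ ^ 2 *
          ENNReal.ofReal (M v ^ 2 / (1 + ‖v‖ ^ 2)) ≤
        P * ∫⁻ v, ENNReal.ofReal (M v ^ 2) * ‖fderiv ℝ h v‖ₑ ^ 2 := by
  set A := ∫ v, M v ^ 2 / (1 + ‖v‖ ^ 2) with hAdef
  have hI : (∫⁻ v : EuclideanSpace ℝ (Fin d), jw γ v) ≠ ⊤ := by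
    have h1 := integrable_rpow_neg_one_add_norm_sq (E := EuclideanSpace ℝ (Fin d)) (μ := volume)
      (r := 2 * γ) (by simpa using hd)
    have h2 := h1.lintegral_lt_top
    have h3 : ∀ v : EuclideanSpace ℝ (Fin d),
        ENNReal.ofReal ((1 + ‖v‖ ^ 2) ^ (-(2 * γ) / 2)) = jw γ v := by
      intro v; unfold jw; congr 2; ring
    simp_rw [h3] at h2
    exact h2.ne
  have hsq : ∀ v : EuclideanSpace ℝ (Fin d),
      (Real.sqrt (1 + ‖v‖ ^ 2) ^ (-γ)) ^ 2 = (1 + ‖v‖ ^ 2) ^ (-γ) := by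
    intro v
    rw [← Real.rpow_natCast, ← Real.rpow_mul (Real.sqrt_nonneg _), mul_comm, Real.rpow_mul
      (Real.sqrt_nonneg _), Real.rpow_natCast, Real.sq_sqrt (by positivity)]
  have hup : ∀ v, ENNReal.ofReal (M v ^ 2 / (1 + ‖v‖ ^ 2)) ≤ ENNReal.ofReal (C₂ ^ 2) *
      (jw γ v * ENNReal.ofReal ((1 + ‖v‖ ^ 2)⁻¹)) := by
    intro v
    unfold jw
    rw [← ENNReal.ofReal_mul (by positivity), ← ENNReal.ofReal_mul (by positivity)]
    refine ENNReal.ofReal_le_ofReal ?_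
    rw [div_eq_mul_inv, ← mul_assoc, ← hsq, ← mul_pow]
    gcongr
    · exact (hMpos v).le
    · exact (hA1 v).2
  have hlo : ∀ v, jw γ v ≤ ENNReal.ofReal ((C₁ ^ 2)⁻¹) * ENNReal.ofReal (M v ^ 2) := by
    intro v
    unfold jw
    rw [← ENNReal.ofReal_mul (by positivity)]
    refine ENNReal.ofReal_le_ofReal ?_
    rw [← hsq, inv_mul_eq_div, le_div_iff₀ (by positivity), mul_comm, ← mul_pow]
    gcongr
    exact (hA1 v).1
  set I := ∫⁻ v : EuclideanSpace ℝ (Fin d), jw γ v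
  have hA0 : ENNReal.ofReal A ≠ 0 := by simpa using hA
  refine ⟨(ENNReal.ofReal A)⁻¹ * (ENNReal.ofReal (C₂ ^ 2) * ENNReal.ofReal (C₂ ^ 2) *
    (2 * (ENNReal.ofReal (4 ^ γ) * 2 * I * ENNReal.ofReal ((C₁ ^ 2)⁻¹)))), ?_, ?_⟩
  · refine ENNReal.mul_ne_top (ENNReal.inv_ne_top.2 hA0) (ENNReal.mul_ne_top
      (ENNReal.mul_ne_top ENNReal.ofReal_ne_top ENNReal.ofReal_ne_top)
      (ENNReal.mul_ne_top (by simp) (ENNReal.mul_ne_top (ENNReal.mul_ne_top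
        (ENNReal.mul_ne_top ENNReal.ofReal_ne_top (by simp)) hI) ENNReal.ofReal_ne_top)))
  intro h hh hhi
  set p : EuclideanSpace ℝ (Fin d) → ENNReal :=
    fun v => ENNReal.ofReal (M v ^ 2 / (1 + ‖v‖ ^ 2)) with hp
  have hqm : Measurable (fun v => M v ^ 2 / (1 + ‖v‖ ^ 2)) :=
    (hM.measurable.pow_const 2).div (by fun_prop)
  have hpm : Measurable p := hqm.ennreal_ofReal
  set c := ((A⁻¹ : ℝ) : ℂ) * ∫ v, h v * ((M v ^ 2 / (1 + ‖v‖ ^ 2) : ℝ) : ℂ) with hc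
  have hj : ∀ v, ENNReal.ofReal A * ‖h v - c‖ₑ ^ 2 ≤ ∫⁻ w, ‖h v - h w‖ₑ ^ 2 * p w := fun v =>
    jensen_var volume _ (fun x => by positivity) hqm hq hA h hh.continuous.measurable hhi (h v)
  have hm1 : Measurable (fun v => ‖h v - c‖ₑ ^ 2 * p v) :=
    ((hh.continuous.measurable.sub_const c).enorm.pow_const 2).mul hpm
  rw [mul_assoc, ← ENNReal.mul_le_iff_le_inv hA0 ENNReal.ofReal_ne_top]
  have hcc : ENNReal.ofReal (C₂ ^ 2) * ENNReal.ofReal (C₂ ^ 2) ≠ ⊤ :=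
    ENNReal.mul_ne_top ENNReal.ofReal_ne_top ENNReal.ofReal_ne_top
  calc ENNReal.ofReal A * ∫⁻ v, ‖h v - c‖ₑ ^ 2 * p v
      = ∫⁻ v, ENNReal.ofReal A * ‖h v - c‖ₑ ^ 2 * p v := by
        rw [← lintegral_const_mul _ hm1]; simp_rw [mul_assoc]
    _ ≤ ∫⁻ v, (∫⁻ w, ‖h v - h w‖ₑ ^ 2 * p w) * p v :=
        lintegral_mono fun v => mul_le_mul_left (hj v) _
    _ ≤ ∫⁻ v, ∫⁻ w, (ENNReal.ofReal (C₂ ^ 2) * ENNReal.ofReal (C₂ ^ 2)) * (‖h v - h w‖ₑ ^ 2 *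
        (jw γ v * ENNReal.ofReal ((1 + ‖v‖ ^ 2)⁻¹)) *
        (jw γ w * ENNReal.ofReal ((1 + ‖w‖ ^ 2)⁻¹))) := by
      refine lintegral_mono fun v => ?_
      rw [← lintegral_mul_const' _ _ ENNReal.ofReal_ne_top]
      refine lintegral_mono fun w => ?_
      calc ‖h v - h w‖ₑ ^ 2 * p w * p v ≤ ‖h v - h w‖ₑ ^ 2 * (ENNReal.ofReal (C₂ ^ 2) *
          (jw γ w * ENNReal.ofReal ((1 + ‖w‖ ^ 2)⁻¹))) * (ENNReal.ofReal (C₂ ^ 2) *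
          (jw γ v * ENNReal.ofReal ((1 + ‖v‖ ^ 2)⁻¹))) := by
            gcongr
            · exact hup w
            · exact hup v
        _ = _ := by ring
    _ = (ENNReal.ofReal (C₂ ^ 2) * ENNReal.ofReal (C₂ ^ 2)) * ∫⁻ v, ∫⁻ w, (‖h v - h w‖ₑ ^ 2 *
        (jw γ v * ENNReal.ofReal ((1 + ‖v‖ ^ 2)⁻¹)) *
        (jw γ w * ENNReal.ofReal ((1 + ‖w‖ ^ 2)⁻¹))) := by
      simp_rw [lintegral_const_mul' _ _ hcc]
    _ ≤ (ENNReal.ofReal (C₂ ^ 2) * ENNReal.ofReal (C₂ ^ 2)) *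
        (2 * (ENNReal.ofReal (4 ^ γ) * 2 * I * ∫⁻ v, jw γ v * ‖fderiv ℝ h v‖ₑ ^ 2)) := by
      gcongr _ * ?_
      exact double_bound hγ hd.le h hh
    _ ≤ (ENNReal.ofReal (C₂ ^ 2) * ENNReal.ofReal (C₂ ^ 2)) *
        (2 * (ENNReal.ofReal (4 ^ γ) * 2 * I * (ENNReal.ofReal ((C₁ ^ 2)⁻¹) *
          ∫⁻ v, ENNReal.ofReal (M v ^ 2) * ‖fderiv ℝ h v‖ₑ ^ 2))) := by
      gcongr
      rw [← lintegral_const_mul' _ _ ENNReal.ofReal_ne_top]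
      refine lintegral_mono fun v => ?_
      rw [← mul_assoc]
      exact mul_le_mul_left (hlo v) _
    _ = _ := by ring

theorem fderiv_ofReal_apply {d : ℕ} (f : EuclideanSpace ℝ (Fin d) → ℝ)
    (v e : EuclideanSpace ℝ (Fin d)) (hf : DifferentiableAt ℝ f v) :
    fderiv ℝ (fun w => ((f w : ℝ) : ℂ)) v e = ((fderiv ℝ f v e : ℝ) : ℂ) := by
  have h := Complex.ofRealCLM.hasFDerivAt.comp v hf.hasFDerivAt
  have h2 : HasFDerivAt (fun w => ((f w : ℝ) : ℂ)) (Complex.ofRealCLM.comp (fderiv ℝ f v)) v := h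
  rw [h2.fderiv]; rfl

theorem fderiv_conj_apply {d : ℕ} (f : EuclideanSpace ℝ (Fin d) → ℂ)
    (v e : EuclideanSpace ℝ (Fin d)) (hf : DifferentiableAt ℝ f v) :
    fderiv ℝ (fun w => (starRingEnd ℂ) (f w)) v e = (starRingEnd ℂ) (fderiv ℝ f v e) := by
  have h := (Complex.conjCLE : ℂ →L[ℝ] ℂ).hasFDerivAt.comp v hf.hasFDerivAt
  have h2 : HasFDerivAt (fun w => (starRingEnd ℂ) (f w))
    ((Complex.conjCLE : ℂ →L[ℝ] ℂ).comp (fderiv ℝ f v)) v := h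
  rw [h2.fderiv]; rfl

theorem fderiv_mul_apply' {d : ℕ} (f g : EuclideanSpace ℝ (Fin d) → ℂ)
    (v e : EuclideanSpace ℝ (Fin d)) (hf : DifferentiableAt ℝ f v) (hg : DifferentiableAt ℝ g v) :
    fderiv ℝ (fun w => f w * g w) v e = fderiv ℝ f v e * g v + f v * fderiv ℝ g v e := by
  rw [fderiv_fun_mul hf hg]
  simp only [add_apply, smul_apply, smul_eq_mul]
  ring

theorem opNorm_sq_le {d : ℕ} (L : EuclideanSpace ℝ (Fin d) →L[ℝ] ℂ) :
    ‖L‖ ^ 2 ≤ ∑ i, ‖L (EuclideanSpace.single i (1 : ℝ))‖ ^ 2 := by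
  have h : ‖L‖ ≤ Real.sqrt (∑ i, ‖L (EuclideanSpace.single i (1 : ℝ))‖ ^ 2) := by
    refine ContinuousLinearMap.opNorm_le_bound _ (Real.sqrt_nonneg _) fun x => ?_
    have hx : x = ∑ i, x i • EuclideanSpace.single i (1 : ℝ) := by
      have := (EuclideanSpace.basisFun (Fin d) ℝ).sum_repr x
      simpa using this.symm
    have h1 : ‖L x‖ ≤ ∑ i, ‖L (EuclideanSpace.single i (1 : ℝ))‖ * |x i| := by
      conv_lhs => rw [hx]
      rw [map_sum]
      refine (norm_sum_le _ _).trans (Finset.sum_le_sum fun i _ => ?_)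
      rw [map_smul, norm_smul, Real.norm_eq_abs, mul_comm]
    refine h1.trans ((Real.sum_mul_le_sqrt_mul_sqrt _ _ _).trans (le_of_eq ?_))
    rw [EuclideanSpace.norm_eq]
    simp
  calc ‖L‖ ^ 2 ≤ _ := pow_le_pow_left₀ (norm_nonneg _) h 2
    _ = _ := Real.sq_sqrt (by positivity)

/-- The flux `M² ∂ᵢ(N/M)`. -/
def flux {d : ℕ} (M : EuclideanSpace ℝ (Fin d) → ℝ) (N : EuclideanSpace ℝ (Fin d) → ℂ)
    (i : Fin d) (v : EuclideanSpace ℝ (Fin d)) : ℂ :=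
  (M v : ℂ) * fderiv ℝ N v (EuclideanSpace.single i (1 : ℝ)) -
    N v * ((fderiv ℝ M v (EuclideanSpace.single i (1 : ℝ)) : ℝ) : ℂ)

section
variable {d : ℕ} {M : EuclideanSpace ℝ (Fin d) → ℝ} {N : EuclideanSpace ℝ (Fin d) → ℂ}

theorem partial_contDiff {F : Type*} [NormedAddCommGroup F] [NormedSpace ℝ F]
    {f : EuclideanSpace ℝ (Fin d) → F} (hf : ContDiff ℝ 2 f) (e : EuclideanSpace ℝ (Fin d)) :
    ContDiff ℝ 1 (fun v => fderiv ℝ f v e) :=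
  (hf.fderiv_right (m := 1) (by norm_num)).clm_apply contDiff_const

theorem contDiff_ofReal' {n : WithTop ℕ∞} {f : EuclideanSpace ℝ (Fin d) → ℝ}
    (hf : ContDiff ℝ n f) : ContDiff ℝ n (fun v => ((f v : ℝ) : ℂ)) :=
  Complex.ofRealCLM.contDiff.comp hf

theorem flux_contDiff (hM : ContDiff ℝ 2 M) (hN : ContDiff ℝ 2 N) (i : Fin d) :
    ContDiff ℝ 1 (flux M N i) := by
  unfold flux
  exact ((contDiff_ofReal' (hM.of_le (by norm_num))).mul (partial_contDiff hN _)).sub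
    ((hN.of_le (by norm_num)).mul (contDiff_ofReal' (partial_contDiff hM _)))

theorem flux_div (hM : ContDiff ℝ 2 M) (hN : ContDiff ℝ 2 N) (v : EuclideanSpace ℝ (Fin d)) :
    ∑ i, fderiv ℝ (flux M N i) v (EuclideanSpace.single i (1 : ℝ)) =
      (M v : ℂ) * lap N v - N v * ((lap M v : ℝ) : ℂ) := by
  have hM1 : DifferentiableAt ℝ M v := hM.differentiable (by norm_num) v
  have hN1 : DifferentiableAt ℝ N v := hN.differentiable (by norm_num) v
  have hMc : DifferentiableAt ℝ (fun v => ((M v : ℝ) : ℂ)) v :=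
    (contDiff_ofReal' hM).differentiable (by norm_num) v
  unfold lap
  rw [Complex.ofReal_sum, Finset.mul_sum, Finset.mul_sum, ← Finset.sum_sub_distrib]
  refine Finset.sum_congr rfl fun i _ => ?_
  have hdN : DifferentiableAt ℝ (fun v => fderiv ℝ N v (EuclideanSpace.single i (1 : ℝ))) v :=
    (partial_contDiff hN _).differentiable (by norm_num) v
  have hdM : DifferentiableAt ℝ (fun v => fderiv ℝ M v (EuclideanSpace.single i (1 : ℝ))) v :=
    (partial_contDiff hM _).differentiable (by norm_num) v
  have hdMc : DifferentiableAt ℝ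
      (fun v => ((fderiv ℝ M v (EuclideanSpace.single i (1 : ℝ)) : ℝ) : ℂ)) v :=
    (contDiff_ofReal' (partial_contDiff hM _)).differentiable (by norm_num) v
  unfold flux
  rw [fderiv_fun_sub (hMc.fun_mul hdN) (hN1.fun_mul hdMc), sub_apply,
    fderiv_mul_apply' _ _ _ _ hMc hdN, fderiv_mul_apply' _ _ _ _ hN1 hdMc,
    fderiv_ofReal_apply _ _ _ hM1, fderiv_ofReal_apply _ _ _ hdM]
  ring

theorem ratio_contDiff {n : WithTop ℕ∞} (hM : ContDiff ℝ n M) (hMpos : ∀ v, 0 < M v)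
    (hN : ContDiff ℝ n N) : ContDiff ℝ n (fun v => N v / (M v : ℂ)) :=
by
  have hne : ∀ w, (M w : ℂ) ≠ 0 := fun w => by exact_mod_cast (hMpos w).ne'
  have h := hN.mul ((contDiff_ofReal' hM).inv hne)
  simp only [div_eq_mul_inv]
  exact h

theorem flux_eq (hM : ContDiff ℝ 2 M) (hMpos : ∀ v, 0 < M v) (hN : ContDiff ℝ 2 N) (i : Fin d)
    (v : EuclideanSpace ℝ (Fin d)) :
    flux M N i v = (M v : ℂ) ^ 2 *
      fderiv ℝ (fun w => N w / (M w : ℂ)) v (EuclideanSpace.single i (1 : ℝ)) := by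
  have hM1 : DifferentiableAt ℝ M v := hM.differentiable (by norm_num) v
  have hMc : DifferentiableAt ℝ (fun v => ((M v : ℝ) : ℂ)) v :=
    (contDiff_ofReal' hM).differentiable (by norm_num) v
  have hh : DifferentiableAt ℝ (fun v => N v / (M v : ℂ)) v :=
    (ratio_contDiff hM hMpos hN).differentiable (by norm_num) v
  have hne : ∀ w, (M w : ℂ) ≠ 0 := fun w => by exact_mod_cast (hMpos w).ne'
  have e : N = fun w => N w / (M w : ℂ) * (M w : ℂ) := by
    funext w; rw [div_mul_cancel₀ _ (hne w)]
  have e2 : fderiv ℝ N v (EuclideanSpace.single i (1 : ℝ)) =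
      fderiv ℝ (fun w => N w / (M w : ℂ)) v (EuclideanSpace.single i (1 : ℝ)) * (M v : ℂ) +
      N v / (M v : ℂ) * ((fderiv ℝ M v (EuclideanSpace.single i (1 : ℝ)) : ℝ) : ℂ) := by
    conv_lhs => rw [e]
    rw [fderiv_mul_apply' _ _ _ _ hh hMc, fderiv_ofReal_apply _ _ _ hM1]
  unfold flux
  rw [e2]
  have := hne v
  field_simp
  ring

theorem flux_conj_div (hM : ContDiff ℝ 2 M) (hMpos : ∀ v, 0 < M v) (hN : ContDiff ℝ 2 N)
    (v : EuclideanSpace ℝ (Fin d)) :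
    ∑ i, fderiv ℝ (fun w => (starRingEnd ℂ) (N w / (M w : ℂ)) * flux M N i w) v
        (EuclideanSpace.single i (1 : ℝ)) =
      ((∑ i, M v ^ 2 * ‖fderiv ℝ (fun w => N w / (M w : ℂ)) v
        (EuclideanSpace.single i (1 : ℝ))‖ ^ 2 : ℝ) : ℂ) +
      (starRingEnd ℂ) (N v / (M v : ℂ)) * ((M v : ℂ) * lap N v - N v * ((lap M v : ℝ) : ℂ)) := by
  have hh : DifferentiableAt ℝ (fun v => N v / (M v : ℂ)) v :=
    (ratio_contDiff hM hMpos hN).differentiable (by norm_num) v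
  have hhc : DifferentiableAt ℝ (fun v => (starRingEnd ℂ) (N v / (M v : ℂ))) v :=
    (Complex.conjCLE : ℂ →L[ℝ] ℂ).differentiableAt.comp v hh
  rw [← flux_div hM hN, Complex.ofReal_sum, Finset.mul_sum, ← Finset.sum_add_distrib]
  refine Finset.sum_congr rfl fun i _ => ?_
  rw [fderiv_mul_apply' _ _ _ _ hhc ((flux_contDiff hM hN i).differentiable (by norm_num) v),
    fderiv_conj_apply _ _ _ hh, flux_eq hM hMpos hN]
  congr 1
  push_cast
  rw [← Complex.conj_mul']
  ring
end

/-- Energy identity: the Dirichlet form of the solution is of order `η`. -/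
theorem energy_bound {d : ℕ} (i₀ : Fin d)
    (M : EuclideanSpace ℝ (Fin d) → ℝ) (hMpos : ∀ v, 0 < M v) (hM : ContDiff ℝ 2 M)
    (hM2 : Integrable (fun v => (1 + |v i₀|) * M v ^ 2))
    (hA : 0 < ∫ v, M v ^ 2 / (1 + ‖v‖ ^ 2))
    (η : ℝ) (hη : 0 < η) (K : ℝ)
    (N : EuclideanSpace ℝ (Fin d) → ℂ) (hN : ContDiff ℝ 2 N)
    (hD : Integrable (fun v => ‖fderiv ℝ (fun w => N w / (M w : ℂ)) v‖ ^ 2 * (M v) ^ 2))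
    (hNK : Integrable (fun v => (1 + |v i₀|) * ‖N v‖ ^ 2))
    (hK : (∫ v, (1 + |v i₀|) * ‖N v‖ ^ 2) ≤ K)
    (heq : ∀ v, -(lap N v) + ((lap M v / M v : ℝ) : ℂ) * N v
              + Complex.I * (η : ℂ) * ((v i₀ : ℝ) : ℂ) * N v =
            -(∫ w, (N w - (M w : ℂ)) * ((Phi M w : ℝ) : ℂ)) * ((Phi M v : ℝ) : ℂ)) :
    ∫ v, ‖fderiv ℝ (fun w => N w / (M w : ℂ)) v‖ ^ 2 * (M v) ^ 2 ≤
      (η * (K + ∫ v, (1 + |v i₀|) * M v ^ 2)) * (1 + η * (K + ∫ v, (1 + |v i₀|) * M v ^ 2)) := by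
  set h : EuclideanSpace ℝ (Fin d) → ℂ := fun w => N w / (M w : ℂ) with hh
  set A := ∫ v, M v ^ 2 / (1 + ‖v‖ ^ 2) with hAdef
  set B := ∫ v, (1 + |v i₀|) * M v ^ 2 with hBdef
  set b := ∫ w, (N w - (M w : ℂ)) * ((Phi M w : ℝ) : ℂ) with hb
  have hPhi : ∀ v, Phi M v = A⁻¹ * (M v / (1 + ‖v‖ ^ 2)) := fun v => rfl
  have hMc : Continuous M := hM.continuous
  have hNc : Continuous N := hN.continuous
  have hne : ∀ w, (M w : ℂ) ≠ 0 := fun w => by exact_mod_cast (hMpos w).ne'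
  have hhc : ContDiff ℝ 2 h := ratio_contDiff hM hMpos hN
  have hvc : Continuous (fun v : EuclideanSpace ℝ (Fin d) => v i₀) := by fun_prop
  have hPc : Continuous (Phi M) := by
    have : Phi M = fun v => A⁻¹ * (M v / (1 + ‖v‖ ^ 2)) := funext hPhi
    rw [this]
    exact continuous_const.mul (hMc.div (by fun_prop) fun v => by positivity)
  have hPle : ∀ v, |Phi M v| ≤ A⁻¹ * M v := by
    intro v
    have : 0 < M v := hMpos v
    rw [hPhi, abs_of_pos (by positivity)]
    gcongr
    exact div_le_self this.le (by nlinarith [sq_nonneg ‖v‖])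
  -- integrability
  have dom : ∀ f : EuclideanSpace ℝ (Fin d) → ℂ, Continuous f → ∀ g : EuclideanSpace ℝ (Fin d) → ℝ,
      Integrable g → (∀ v, ‖f v‖ ≤ g v) → Integrable f := fun f hf g hg hfg =>
    hg.mono' hf.aestronglyMeasurable (Filter.Eventually.of_forall hfg)
  have iMN : Integrable (fun v => (1 + |v i₀|) * M v ^ 2 + (1 + |v i₀|) * ‖N v‖ ^ 2) := hM2.add hNK
  have iNP : Integrable (fun v => N v * ((Phi M v : ℝ) : ℂ)) := by
    refine dom _ (by fun_prop) _ (iMN.const_mul A⁻¹) fun v => ?_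
    rw [norm_mul, Complex.norm_real, Real.norm_eq_abs]
    have h1 : ‖N v‖ * |Phi M v| ≤ ‖N v‖ * (A⁻¹ * M v) := by gcongr; exact hPle v
    have h2 : ‖N v‖ * M v ≤ (1 + |v i₀|) * M v ^ 2 + (1 + |v i₀|) * ‖N v‖ ^ 2 := by
      nlinarith [sq_nonneg (‖N v‖ - M v), abs_nonneg (v i₀), sq_nonneg (M v), sq_nonneg ‖N v‖,
        mul_nonneg (abs_nonneg (v i₀)) (sq_nonneg (M v)),
        mul_nonneg (abs_nonneg (v i₀)) (sq_nonneg ‖N v‖)]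
    calc _ ≤ A⁻¹ * (‖N v‖ * M v) := by linarith
      _ ≤ _ := by gcongr
  have iMP : Integrable (fun v => (M v : ℂ) * ((Phi M v : ℝ) : ℂ)) := by
    refine dom _ (by fun_prop) _ (hM2.const_mul A⁻¹) fun v => ?_
    rw [norm_mul, Complex.norm_real, Complex.norm_real, Real.norm_eq_abs, Real.norm_eq_abs,
      abs_of_pos (hMpos v)]
    have h1 : M v * |Phi M v| ≤ M v * (A⁻¹ * M v) := by
      have := (hMpos v).le; gcongr; exact hPle v
    have h2 : M v * M v ≤ (1 + |v i₀|) * M v ^ 2 := by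
      nlinarith [mul_nonneg (abs_nonneg (v i₀)) (sq_nonneg (M v))]
    calc _ ≤ A⁻¹ * (M v * M v) := by linarith
      _ ≤ _ := by gcongr
  have ivNM : Integrable (fun v => ((v i₀ : ℝ) : ℂ) * N v * (M v : ℂ)) := by
    refine dom _ (by fun_prop) _ iMN fun v => ?_
    rw [norm_mul, norm_mul, Complex.norm_real, Complex.norm_real, Real.norm_eq_abs,
      Real.norm_eq_abs, abs_of_pos (hMpos v)]
    nlinarith [mul_nonneg (abs_nonneg (v i₀)) (sq_nonneg (‖N v‖ - M v)), sq_nonneg (M v),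
      sq_nonneg ‖N v‖, mul_nonneg (abs_nonneg (v i₀)) (sq_nonneg (M v)),
        mul_nonneg (abs_nonneg (v i₀)) (sq_nonneg ‖N v‖)]
  have ivNN : Integrable (fun v => v i₀ * ‖N v‖ ^ 2) := by
    refine hNK.mono' (hvc.mul (hNc.norm.pow 2)).aestronglyMeasurable
      (Filter.Eventually.of_forall fun v => ?_)
    rw [Real.norm_eq_abs, abs_mul, abs_of_nonneg (sq_nonneg ‖N v‖)]
    nlinarith [sq_nonneg ‖N v‖]
  have hMP1 : ∫ v, (M v : ℂ) * ((Phi M v : ℝ) : ℂ) = 1 := by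
    have : ∀ v, (M v : ℂ) * ((Phi M v : ℝ) : ℂ) =
        ((A⁻¹ * (M v ^ 2 / (1 + ‖v‖ ^ 2)) : ℝ) : ℂ) := by
      intro v
      rw [hPhi, ← Complex.ofReal_mul]
      congr 1; ring
    simp_rw [this]
    rw [integral_complex_ofReal, integral_const_mul, ← hAdef, inv_mul_cancel₀ hA.ne']
    simp
  set c := ∫ v, N v * ((Phi M v : ℝ) : ℂ) with hc
  have hbc : b = c - 1 := by
    rw [hb]
    simp_rw [sub_mul]
    rw [integral_sub iNP iMP, hMP1]
  -- the equation in divergence form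
  have hdiv : ∀ v, (M v : ℂ) * lap N v - N v * ((lap M v : ℝ) : ℂ) =
      Complex.I * (η : ℂ) * (((v i₀ : ℝ) : ℂ) * N v * (M v : ℂ)) +
        b * ((M v : ℂ) * ((Phi M v : ℝ) : ℂ)) := by
    intro v
    have e := heq v
    have := hne v
    have e2 : ((lap M v / M v : ℝ) : ℂ) * (M v : ℂ) = ((lap M v : ℝ) : ℂ) := by
      push_cast; field_simp
    linear_combination (-(M v : ℂ)) * e + N v * e2
  have eN : ∀ v, (starRingEnd ℂ) (h v) * (M v : ℂ) = (starRingEnd ℂ) (N v) := by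
    intro v
    simp only [hh, map_div₀, Complex.conj_ofReal]
    rw [div_mul_cancel₀ _ (hne v)]
  have hdiv2 : ∀ v, (starRingEnd ℂ) (h v) * ((M v : ℂ) * lap N v - N v * ((lap M v : ℝ) : ℂ)) =
      Complex.I * (η : ℂ) * ((v i₀ * ‖N v‖ ^ 2 : ℝ) : ℂ) +
        b * (starRingEnd ℂ) (N v * ((Phi M v : ℝ) : ℂ)) := by
    intro v
    rw [hdiv, map_mul, Complex.conj_ofReal, ← eN]
    push_cast
    rw [← Complex.conj_mul' (N v), ← eN]
    ring
  -- the flux is integrable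
  have hfle : ∀ i v, ‖flux M N i v‖ ≤ M v * (‖fderiv ℝ h v‖ * M v) := by
    intro i v
    rw [flux_eq hM hMpos hN, norm_mul, norm_pow, Complex.norm_real, Real.norm_eq_abs,
      abs_of_pos (hMpos v)]
    have h1 := (fderiv ℝ h v).le_opNorm (EuclideanSpace.single i (1 : ℝ))
    simp only [PiLp.norm_single, norm_one, mul_one] at h1
    calc _ ≤ M v ^ 2 * ‖fderiv ℝ h v‖ := by gcongr
      _ = _ := by ring
  have ifl : ∀ i, Integrable (flux M N i) := by
    intro i
    refine dom _ (flux_contDiff hM hN i).continuous _ (hM2.add hD) fun v => (hfle i v).trans ?_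
    simp only [Pi.add_apply]
    nlinarith [sq_nonneg (M v - ‖fderiv ℝ h v‖ * M v), sq_nonneg (M v),
      sq_nonneg (‖fderiv ℝ h v‖ * M v), mul_nonneg (abs_nonneg (v i₀)) (sq_nonneg (M v))]
  have hcc : ContDiff ℝ 1 (fun v => (starRingEnd ℂ) (h v)) :=
    (Complex.conjCLE : ℂ →L[ℝ] ℂ).contDiff.comp (hhc.of_le (by norm_num))
  have hfc : ∀ i, ContDiff ℝ 1 (fun v => (starRingEnd ℂ) (h v) * flux M N i v) := fun i =>
    hcc.mul (flux_contDiff hM hN i)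
  have ifc : ∀ i, Integrable (fun v => (starRingEnd ℂ) (h v) * flux M N i v) := by
    intro i
    refine dom _ (hfc i).continuous _ (hNK.add hD) fun v => ?_
    have h1 : ‖(starRingEnd ℂ) (h v) * flux M N i v‖ ≤ ‖N v‖ * (‖fderiv ℝ h v‖ * M v) := by
      rw [norm_mul]
      calc _ ≤ ‖(starRingEnd ℂ) (h v)‖ * (M v * (‖fderiv ℝ h v‖ * M v)) := by
            gcongr; exact hfle i v
        _ = ‖(starRingEnd ℂ) (h v) * (M v : ℂ)‖ * (‖fderiv ℝ h v‖ * M v) := by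
            rw [norm_mul, Complex.norm_real, Real.norm_eq_abs, abs_of_pos (hMpos v)]; ring
        _ = _ := by rw [eN, RCLike.norm_conj]
    refine h1.trans ?_
    simp only [Pi.add_apply]
    nlinarith [sq_nonneg (‖N v‖ - ‖fderiv ℝ h v‖ * M v), sq_nonneg (‖N v‖),
      sq_nonneg (‖fderiv ℝ h v‖ * M v), mul_nonneg (abs_nonneg (v i₀)) (sq_nonneg ‖N v‖)]
  -- first identity: test against `M`
  have id1 : Complex.I * (η : ℂ) * (∫ v, ((v i₀ : ℝ) : ℂ) * N v * (M v : ℂ)) + b = 0 := by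
    have hint : Integrable (fun v => Complex.I * (η : ℂ) * (((v i₀ : ℝ) : ℂ) * N v * (M v : ℂ)) +
        b * ((M v : ℂ) * ((Phi M v : ℝ) : ℂ))) := (ivNM.const_mul _).add (iMP.const_mul _)
    have e : ∀ v, ∑ i, fderiv ℝ (flux M N i) v (EuclideanSpace.single i (1 : ℝ)) =
        Complex.I * (η : ℂ) * (((v i₀ : ℝ) : ℂ) * N v * (M v : ℂ)) +
        b * ((M v : ℂ) * ((Phi M v : ℝ) : ℂ)) := fun v => by rw [flux_div hM hN, hdiv]
    have h0 := integral_div_zero (flux M N) (flux_contDiff hM hN) ifl (by simp_rw [e]; exact hint)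
    simp_rw [e] at h0
    rw [integral_add (ivNM.const_mul _) (iMP.const_mul _), integral_const_mul, integral_const_mul,
      hMP1, mul_one] at h0
    exact h0
  -- second identity: test against `N`
  set S : EuclideanSpace ℝ (Fin d) → ℝ := fun v =>
    ∑ i, M v ^ 2 * ‖fderiv ℝ h v (EuclideanSpace.single i (1 : ℝ))‖ ^ 2 with hS
  have hSc : Continuous S := by
    refine continuous_finsetSum _ fun i _ => (hMc.pow 2).mul ?_
    exact ((partial_contDiff hhc _).continuous.norm).pow 2
  have iS : Integrable S := by
    refine (hD.const_mul (d : ℝ)).mono' hSc.aestronglyMeasurable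
      (Filter.Eventually.of_forall fun v => ?_)
    rw [Real.norm_of_nonneg (by positivity)]
    have : ∀ i : Fin d, M v ^ 2 * ‖fderiv ℝ h v (EuclideanSpace.single i (1 : ℝ))‖ ^ 2 ≤
        ‖fderiv ℝ h v‖ ^ 2 * M v ^ 2 := by
      intro i
      have h1 := (fderiv ℝ h v).le_opNorm (EuclideanSpace.single i (1 : ℝ))
      simp only [PiLp.norm_single, norm_one, mul_one] at h1
      rw [mul_comm]
      gcongr
    refine (Finset.sum_le_sum fun i _ => this i).trans (le_of_eq ?_)
    simp
  have id2 : ((∫ v, S v : ℝ) : ℂ) + (Complex.I * (η : ℂ) * ((∫ v, v i₀ * ‖N v‖ ^ 2 : ℝ) : ℂ) +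
      b * (starRingEnd ℂ) c) = 0 := by
    have iNPc : Integrable (fun v => (starRingEnd ℂ) (N v * ((Phi M v : ℝ) : ℂ))) :=
      (Complex.conjCLE : ℂ →L[ℝ] ℂ).integrable_comp iNP
    have iSc : Integrable (fun v => ((S v : ℝ) : ℂ)) := iS.ofReal
    have ivc : Integrable (fun v => ((v i₀ * ‖N v‖ ^ 2 : ℝ) : ℂ)) := ivNN.ofReal
    have i2 : Integrable (fun v => Complex.I * (η : ℂ) * ((v i₀ * ‖N v‖ ^ 2 : ℝ) : ℂ) +
        b * (starRingEnd ℂ) (N v * ((Phi M v : ℝ) : ℂ))) := (ivc.const_mul _).add (iNPc.const_mul _)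
    have e : ∀ v, ∑ i, fderiv ℝ (fun w => (starRingEnd ℂ) (h w) * flux M N i w) v
        (EuclideanSpace.single i (1 : ℝ)) = ((S v : ℝ) : ℂ) +
        (Complex.I * (η : ℂ) * ((v i₀ * ‖N v‖ ^ 2 : ℝ) : ℂ) +
        b * (starRingEnd ℂ) (N v * ((Phi M v : ℝ) : ℂ))) := fun v => by
      rw [← hdiv2]; exact flux_conj_div hM hMpos hN v
    have h0 := integral_div_zero (fun i w => (starRingEnd ℂ) (h w) * flux M N i w) hfc ifc
      (by simp_rw [e]; exact iSc.add i2)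
    simp_rw [e] at h0
    rw [integral_add iSc i2, integral_add (ivc.const_mul _) (iNPc.const_mul _),
      integral_const_mul, integral_const_mul, integral_complex_ofReal, integral_complex_ofReal,
      integral_conj] at h0
    exact h0
  -- conclusion
  have hI : ‖∫ v, ((v i₀ : ℝ) : ℂ) * N v * (M v : ℂ)‖ ≤ K + B := by
    refine (norm_integral_le_of_norm_le iMN (Filter.Eventually.of_forall fun v => ?_)).trans ?_
    · rw [norm_mul, norm_mul, Complex.norm_real, Complex.norm_real, Real.norm_eq_abs,
        Real.norm_eq_abs, abs_of_pos (hMpos v)]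
      nlinarith [mul_nonneg (abs_nonneg (v i₀)) (sq_nonneg (‖N v‖ - M v)), sq_nonneg (M v),
        sq_nonneg ‖N v‖, mul_nonneg (abs_nonneg (v i₀)) (sq_nonneg (M v)),
        mul_nonneg (abs_nonneg (v i₀)) (sq_nonneg ‖N v‖)]
    · rw [integral_add hM2 hNK]; linarith
  have hbn : ‖b‖ ≤ η * (K + B) := by
    have : b = -(Complex.I * (η : ℂ) * (∫ v, ((v i₀ : ℝ) : ℂ) * N v * (M v : ℂ))) := by
      linear_combination id1
    rw [this, norm_neg, norm_mul, norm_mul, Complex.norm_I, one_mul, Complex.norm_real,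
      Real.norm_of_nonneg hη.le]
    gcongr
  have hcn : ‖c‖ ≤ 1 + η * (K + B) := by
    have : c = 1 + b := by rw [hbc]; ring
    rw [this]
    refine (norm_add_le _ _).trans ?_
    rw [norm_one]; linarith
  have hSle : ∫ v, S v ≤ ‖b‖ * ‖c‖ := by
    have h1 := congrArg Complex.re id2
    simp only [Complex.add_re, Complex.ofReal_re, Complex.zero_re] at h1
    have h2 : (Complex.I * (η : ℂ) * ((∫ v, v i₀ * ‖N v‖ ^ 2 : ℝ) : ℂ)).re = 0 := by
      simp [Complex.mul_re, Complex.mul_im]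
    rw [h2] at h1
    have h3 := Complex.abs_re_le_norm (b * (starRingEnd ℂ) c)
    rw [norm_mul, RCLike.norm_conj] at h3
    have := neg_abs_le (b * (starRingEnd ℂ) c).re
    linarith
  calc ∫ v, ‖fderiv ℝ h v‖ ^ 2 * (M v) ^ 2 ≤ ∫ v, S v := by
        refine integral_mono hD iS fun v => ?_
        simp only [hS]
        rw [← Finset.mul_sum, mul_comm]
        gcongr
        exact opNorm_sq_le _
    _ ≤ ‖b‖ * ‖c‖ := hSle
    _ ≤ _ := by
      have := (norm_nonneg b).trans hbn
      gcongr

/-- **Small velocities do not contribute** (item 1 of Lemma 3.5 of the paper): for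
`γ ∈ ((d+1)/2,(d+4)/2)` and `N` a solution of the penalized equation with `λ = 0`,
`∫_{|v₁|≤R} |N − c_η M|² ⟨v⟩⁻² ≤ C(1+K²) η`. -/
theorem small_velocities (d : ℕ) (h0 : 0 < d) (γ C₁ C₂ : ℝ)
    (hγ₁ : ((d : ℝ) + 1) / 2 < γ) (hγ₂ : γ < ((d : ℝ) + 4) / 2)
    (hC₁ : 0 < C₁) (hC₁₂ : C₁ ≤ C₂)
    (M : EuclideanSpace ℝ (Fin d) → ℝ) (hMpos : ∀ v, 0 < M v) (hM : ContDiff ℝ 2 M)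
    (hA1 : ∀ v, C₁ * Real.sqrt (1 + ‖v‖ ^ 2) ^ (-γ) ≤ M v ∧
              M v ≤ C₂ * Real.sqrt (1 + ‖v‖ ^ 2) ^ (-γ))
    (hA2 : Integrable (fun v =>
        (1 + ‖v‖ ^ 2) * ‖fderiv ℝ (fun w => M w / (1 + ‖w‖ ^ 2)) v‖ ^ 2)) :
    ∃ η₀ C : ℝ, 0 < η₀ ∧ 0 < C ∧
      ∀ η : ℝ, 0 < η → η ≤ η₀ → ∀ R : ℝ, 0 < R → ∀ K : ℝ,
        ∀ N : EuclideanSpace ℝ (Fin d) → ℂ, ContDiff ℝ 2 N →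
          Integrable (fun v => ‖N v‖ ^ 2) →
          Integrable (fun v => ‖fderiv ℝ (fun w => N w / (M w : ℂ)) v‖ ^ 2 * (M v) ^ 2) →
          Integrable (fun v => (1 + |v (⟨0, h0⟩ : Fin d)|) * ‖N v‖ ^ 2) →
          (∫ v, (1 + |v (⟨0, h0⟩ : Fin d)|) * ‖N v‖ ^ 2) ≤ K →
          (∀ v, -(lap N v) + ((lap M v / M v : ℝ) : ℂ) * N v
              + Complex.I * (η : ℂ) * ((v (⟨0, h0⟩ : Fin d) : ℝ) : ℂ) * N v =
            -(∫ w, (N w - (M w : ℂ)) * ((Phi M w : ℝ) : ℂ)) * ((Phi M v : ℝ) : ℂ)) →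
          (∫ v in {v : EuclideanSpace ℝ (Fin d) | |v (⟨0, h0⟩ : Fin d)| ≤ R},
              ‖N v - (((∫ w, (M w) ^ 2 / (1 + ‖w‖ ^ 2) : ℝ)⁻¹ : ℝ) : ℂ) *
                (∫ w, N w * ((M w / (1 + ‖w‖ ^ 2) : ℝ) : ℂ)) * (M v : ℂ)‖ ^ 2 /
              (1 + ‖v‖ ^ 2)) ≤ C * (1 + K ^ 2) * η := by
  set i₀ : Fin d := ⟨0, h0⟩ with hi₀
  have hd : (d : ℝ) < 2 * γ - 1 := by linarith
  have hd0 : (0 : ℝ) ≤ d := Nat.cast_nonneg d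
  have hγ : 0 < γ := by linarith
  have hMc : Continuous M := hM.continuous
  have hvc : Continuous (fun v : EuclideanSpace ℝ (Fin d) => v i₀) := by fun_prop
  have hM2 : Integrable (fun v => (1 + |v i₀|) * M v ^ 2) := by
    have h1 := integrable_rpow_neg_one_add_norm_sq (E := EuclideanSpace ℝ (Fin d)) (μ := volume)
      (r := 2 * γ - 1) (by simpa using hd)
    refine (h1.const_mul (2 * C₂ ^ 2)).mono'
      ((continuous_const.add hvc.abs).mul (hMc.pow 2)).aestronglyMeasurable
      (Filter.Eventually.of_forall fun v => ?_)
    rw [Real.norm_of_nonneg (by positivity)]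
    have hpos : 0 < 1 + ‖v‖ ^ 2 := by positivity
    have hs1 : 1 ≤ Real.sqrt (1 + ‖v‖ ^ 2) := by
      rw [Real.one_le_sqrt]; nlinarith [sq_nonneg ‖v‖]
    have hs2 : |v i₀| ≤ Real.sqrt (1 + ‖v‖ ^ 2) := by
      have : |v i₀| ≤ ‖v‖ := PiLp.norm_apply_le v i₀
      refine this.trans (Real.le_sqrt_of_sq_le (by linarith))
    have e : (1 + ‖v‖ ^ 2) ^ (-(2 * γ - 1) / 2) =
        Real.sqrt (1 + ‖v‖ ^ 2) * (Real.sqrt (1 + ‖v‖ ^ 2) ^ (-γ)) ^ 2 := by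
      clear * - hpos
      generalize 1 + ‖v‖ ^ 2 = x at hpos ⊢
      rw [Real.sqrt_eq_rpow, ← Real.rpow_mul hpos.le, ← Real.rpow_natCast, ← Real.rpow_mul hpos.le,
        ← Real.rpow_add hpos]
      congr 1; push_cast; ring
    rw [e]
    calc (1 + |v i₀|) * M v ^ 2 ≤ (2 * Real.sqrt (1 + ‖v‖ ^ 2)) *
          (C₂ * Real.sqrt (1 + ‖v‖ ^ 2) ^ (-γ)) ^ 2 := by
          have := (hMpos v).le
          gcongr
          · linarith
          · exact (hA1 v).2
      _ = _ := by ring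
  have hq : Integrable (fun v => M v ^ 2 / (1 + ‖v‖ ^ 2)) := by
    refine hM2.mono' ((hMc.pow 2).div (by fun_prop) fun v => by positivity).aestronglyMeasurable
      (Filter.Eventually.of_forall fun v => ?_)
    rw [Real.norm_of_nonneg (by positivity)]
    calc M v ^ 2 / (1 + ‖v‖ ^ 2) ≤ M v ^ 2 :=
          div_le_self (by positivity) (by nlinarith [sq_nonneg ‖v‖])
      _ ≤ _ := by nlinarith [mul_nonneg (abs_nonneg (v i₀)) (sq_nonneg (M v))]
  have hA : 0 < ∫ v, M v ^ 2 / (1 + ‖v‖ ^ 2) := by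
    rw [integral_pos_iff_support_of_nonneg (fun v => by positivity) hq]
    have : Function.support (fun v => M v ^ 2 / (1 + ‖v‖ ^ 2)) = Set.univ := by
      ext v
      have := hMpos v
      simp only [Function.mem_support, Set.mem_univ, iff_true]
      positivity
    rw [this]
    exact isOpen_univ.measure_pos _ Set.univ_nonempty
  obtain ⟨P, hPtop, hP⟩ := hardy_poincare (by linarith) hγ hC₁ M hMpos hMc hA1 hq hA
  set A := ∫ v, M v ^ 2 / (1 + ‖v‖ ^ 2) with hAdef
  set B := ∫ v, (1 + |v i₀|) * M v ^ 2 with hB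
  have hB0 : 0 ≤ B := integral_nonneg fun v => by positivity
  refine ⟨1, (P.toReal + 1) * (4 + 4 * B ^ 2), one_pos, by positivity, ?_⟩
  intro η hη hη1 R _ K N hN hN2 hD hNK hK heq
  have hen := energy_bound i₀ M hMpos hM hM2 hA η hη K N hN hD hNK hK heq
  have hK0 : 0 ≤ K := le_trans (integral_nonneg fun v => by positivity) hK
  set D := ∫ v, ‖fderiv ℝ (fun w => N w / (M w : ℂ)) v‖ ^ 2 * (M v) ^ 2 with hDdef
  have hD0 : 0 ≤ D := integral_nonneg fun v => by positivity
  have hne : ∀ w, (M w : ℂ) ≠ 0 := fun w => by exact_mod_cast (hMpos w).ne'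
  have ehq : ∀ v, N v / (M v : ℂ) * ((M v ^ 2 / (1 + ‖v‖ ^ 2) : ℝ) : ℂ) =
      N v * ((M v / (1 + ‖v‖ ^ 2) : ℝ) : ℂ) := by
    intro v
    have := hne v
    push_cast
    field_simp
  have hhi : Integrable (fun v => N v / (M v : ℂ) * ((M v ^ 2 / (1 + ‖v‖ ^ 2) : ℝ) : ℂ)) := by
    simp_rw [ehq]
    have hcM : Continuous (fun v => M v / (1 + ‖v‖ ^ 2)) :=
      hMc.div (by fun_prop) fun v => by positivity
    refine (hM2.add hN2).mono'
      (hN.continuous.mul (Complex.continuous_ofReal.comp hcM)).aestronglyMeasurable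
      (Filter.Eventually.of_forall fun v => ?_)
    have := hMpos v
    rw [norm_mul, Complex.norm_real, Real.norm_of_nonneg (by positivity)]
    have h1 : M v / (1 + ‖v‖ ^ 2) ≤ M v := div_le_self this.le (by nlinarith [sq_nonneg ‖v‖])
    have h2 : ‖N v‖ * (M v / (1 + ‖v‖ ^ 2)) ≤ ‖N v‖ * M v := by gcongr
    simp only [Pi.add_apply]
    nlinarith [sq_nonneg (‖N v‖ - M v), mul_nonneg (abs_nonneg (v i₀)) (sq_nonneg (M v)),
      sq_nonneg (M v), sq_nonneg ‖N v‖]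
  have hp := hP (fun v => N v / (M v : ℂ))
    ((ratio_contDiff hM hMpos hN).of_le (by norm_num)) hhi
  simp_rw [ehq] at hp
  set c := ((A⁻¹ : ℝ) : ℂ) * ∫ w, N w * ((M w / (1 + ‖w‖ ^ 2) : ℝ) : ℂ) with hc
  have eL : ∀ v, ‖N v / (M v : ℂ) - c‖ₑ ^ 2 * ENNReal.ofReal (M v ^ 2 / (1 + ‖v‖ ^ 2)) =
      ENNReal.ofReal (‖N v - c * (M v : ℂ)‖ ^ 2 / (1 + ‖v‖ ^ 2)) := by
    intro v
    rw [← ofReal_norm, ← ENNReal.ofReal_pow (norm_nonneg _), ← ENNReal.ofReal_mul (by positivity)]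
    congr 1
    have : N v - c * (M v : ℂ) = (N v / (M v : ℂ) - c) * (M v : ℂ) := by
      rw [sub_mul, div_mul_cancel₀ _ (hne v)]
    rw [this, norm_mul, Complex.norm_real, Real.norm_of_nonneg (hMpos v).le]
    ring
  have eR : ∫⁻ v, ENNReal.ofReal (M v ^ 2) * ‖fderiv ℝ (fun w => N w / (M w : ℂ)) v‖ₑ ^ 2 =
      ENNReal.ofReal D := by
    rw [hDdef, ofReal_integral_eq_lintegral_ofReal hD
      (Filter.Eventually.of_forall fun v => by positivity)]
    refine lintegral_congr fun v => ?_
    rw [← ofReal_norm, ← ENNReal.ofReal_pow (norm_nonneg _), ← ENNReal.ofReal_mul (by positivity),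
      mul_comm]
  simp_rw [eL] at hp
  rw [eR] at hp
  have hfc : Continuous (fun v => ‖N v - c * (M v : ℂ)‖ ^ 2 / (1 + ‖v‖ ^ 2)) := by
    have := hN.continuous
    exact Continuous.div (by fun_prop) (by fun_prop) fun v => by positivity
  have hfin : ∫ v in {v : EuclideanSpace ℝ (Fin d) | |v i₀| ≤ R},
      ‖N v - c * (M v : ℂ)‖ ^ 2 / (1 + ‖v‖ ^ 2) ≤ P.toReal * D := by
    rw [integral_eq_lintegral_of_nonneg_ae (Filter.Eventually.of_forall fun v => by positivity)
      hfc.aestronglyMeasurable]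
    have h1 := (setLIntegral_le_lintegral {v : EuclideanSpace ℝ (Fin d) | |v i₀| ≤ R} _).trans hp
    have h2 := ENNReal.toReal_mono (ENNReal.mul_ne_top hPtop ENNReal.ofReal_ne_top) h1
    rw [ENNReal.toReal_mul, ENNReal.toReal_ofReal hD0] at h2
    exact h2
  refine hfin.trans ?_
  have hX0 : 0 ≤ K + B := by positivity
  have hDle : D ≤ (4 + 4 * B ^ 2) * (1 + K ^ 2) * η := by
    have h1 : 1 + η * (K + B) ≤ 1 + (K + B) := by nlinarith
    have h2 : D ≤ η * (K + B) * (1 + (K + B)) := hen.trans (by gcongr)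
    have h3 : (K + B) * (1 + (K + B)) ≤ (4 + 4 * B ^ 2) * (1 + K ^ 2) := by
      nlinarith [sq_nonneg (K - B), sq_nonneg (K + B - 1), sq_nonneg (K * B)]
    calc D ≤ η * ((K + B) * (1 + (K + B))) := by linarith
      _ ≤ η * ((4 + 4 * B ^ 2) * (1 + K ^ 2)) := by gcongr
      _ = _ := by ring
  calc P.toReal * D ≤ (P.toReal + 1) * ((4 + 4 * B ^ 2) * (1 + K ^ 2) * η) := by
        gcongr; linarith
    _ = _ := by ring
end
end

section
/- Assume 2γ = d+1, let M : ℝ^d → ℝ be continuous with C₁⟨v⟩^{−γ} ≤ M(v) ≤ C₂⟨v⟩^{−γ} for all v, and let m : ℝ^d∖{0} → ℝ be such that for every s ≠ 0, λ^{−γ} M(λ^{−1}s) → m(s) as λ → 0⁺. Then lim_{R → ∞} (1/ln R) ∫_{\{|v| ≤ R\}} v M(v)² dv = ∫_{S^{d−1}} s m(s)² dσ(s), where dσ is the surface measure on the unit sphere S^{d−1} ⊂ ℝ^d and both integrals are ℝ^d-valued. Equivalently, lim_{ε → 0⁺} (3/|ln ε|) ∫_{\{|v| ≤ ε^{−1/3}\}}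 v M(v)² dv equals the same sphere integral. -/
open MeasureTheory Real Filter

noncomputable section

theorem polar_integral {E : Type*} [NormedAddCommGroup E] [NormedSpace ℝ E] [MeasurableSpace E]
    [BorelSpace E] [FiniteDimensional ℝ E] [Nontrivial E] (μ : Measure E) [μ.IsAddHaarMeasure]
    {F : Type*} [NormedAddCommGroup F] [NormedSpace ℝ F] (f : E → F) (hf : Integrable f μ) :
    ∫ x, f x ∂μ = ∫ r in Set.Ioi (0:ℝ), r ^ (Module.finrank ℝ E - 1) •
      ∫ s : Metric.sphere (0:E) 1, f (r • (s:E)) ∂μ.toSphere := by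
  have key : ∀ x : ({0}ᶜ : Set E), f x =
      (fun p : Metric.sphere (0:E) 1 × Set.Ioi (0:ℝ) => f ((p.2:ℝ) • (p.1:E)))
        (homeomorphUnitSphereProd E x) := by
    intro x
    have := homeomorphUnitSphereProd_symm_apply_coe E (homeomorphUnitSphereProd E x)
    rw [Homeomorph.symm_apply_apply] at this
    simp only
    rw [← this]
  have hint : Integrable (fun p : Metric.sphere (0:E) 1 × Set.Ioi (0:ℝ) => f ((p.2:ℝ) • (p.1:E)))
      (μ.toSphere.prod (.volumeIoiPow (Module.finrank ℝ E - 1))) := by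
    rw [← μ.measurePreserving_homeomorphUnitSphereProd.integrable_comp_emb
      (Homeomorph.measurableEmbedding _)]
    have h1 : IntegrableOn f ({0}ᶜ) μ := hf.integrableOn
    rw [integrableOn_iff_comap_subtypeVal (measurableSet_singleton _).compl] at h1
    refine h1.congr (Eventually.of_forall key)
  calc
    ∫ x, f x ∂μ = ∫ x : ({(0)}ᶜ : Set E), f x ∂(μ.comap (↑)) := by
      rw [integral_subtype_comap (measurableSet_singleton _).compl f,
        restrict_compl_singleton]
    _ = ∫ p : Metric.sphere (0:E) 1 × Set.Ioi (0:ℝ), f ((p.2:ℝ) • (p.1:E))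
          ∂μ.toSphere.prod (.volumeIoiPow (Module.finrank ℝ E - 1)) := by
      rw [← μ.measurePreserving_homeomorphUnitSphereProd.integral_comp
        (Homeomorph.measurableEmbedding _)]
      exact integral_congr_ae (Eventually.of_forall key)
    _ = ∫ r : Set.Ioi (0:ℝ), ∫ s : Metric.sphere (0:E) 1, f ((r:ℝ) • (s:E)) ∂μ.toSphere
          ∂(.volumeIoiPow (Module.finrank ℝ E - 1)) := integral_prod_symm _ hint
    _ = _ := by
      simp only [Measure.volumeIoiPow, ENNReal.ofReal]
      rw [integral_withDensity_eq_integral_smul,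
        integral_subtype_comap measurableSet_Ioi
          fun a ↦ Real.toNNReal (a ^ (Module.finrank ℝ E - 1)) •
            ∫ s : Metric.sphere (0:E) 1, f (a • (s:E)) ∂μ.toSphere,
        setIntegral_congr_fun measurableSet_Ioi fun x hx ↦ ?_]
      · rw [NNReal.smul_def, Real.coe_toNNReal _ (pow_nonneg hx.out.le _)]
      · exact (measurable_subtype_coe.pow_const _).real_toNNReal

theorem polar_ball {E : Type*} [NormedAddCommGroup E] [NormedSpace ℝ E] [MeasurableSpace E]
    [BorelSpace E] [FiniteDimensional ℝ E] [Nontrivial E] (μ : Measure E) [μ.IsAddHaarMeasure]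
    {F : Type*} [NormedAddCommGroup F] [NormedSpace ℝ F] (f : E → F) (hf : Continuous f)
    {R : ℝ} (hR : 0 ≤ R) :
    ∫ x in Metric.closedBall (0:E) R, f x ∂μ = ∫ r in (0:ℝ)..R, r ^ (Module.finrank ℝ E - 1) •
      ∫ s : Metric.sphere (0:E) 1, f (r • (s:E)) ∂μ.toSphere := by
  have : ProperSpace E := FiniteDimensional.proper ℝ E
  have h1 : IntegrableOn f (Metric.closedBall (0:E) R) μ :=
    hf.continuousOn.integrableOn_compact (isCompact_closedBall _ _)
  rw [← integral_indicator measurableSet_closedBall, polar_integral μ _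
    ((integrable_indicator_iff measurableSet_closedBall).2 h1), intervalIntegral.integral_of_le hR,
    ← Set.Ioi_inter_Iic, ← setIntegral_indicator measurableSet_Iic]
  refine setIntegral_congr_fun measurableSet_Ioi fun r hr => ?_
  have hr' : 0 < r := hr
  by_cases h : r ≤ R
  · rw [Set.indicator_of_mem (by simpa using h)]
    congr 1
    refine integral_congr_ae (Eventually.of_forall fun s => ?_)
    simp only
    rw [Set.indicator_of_mem]
    simpa [norm_smul, abs_of_pos hr'] using h
  · rw [Set.indicator_of_notMem (by simpa using h)]
    rw [integral_eq_zero_of_ae, smul_zero]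
    refine Eventually.of_forall fun s => ?_
    simp only
    rw [Set.indicator_of_notMem]
    · rfl
    simpa [norm_smul, abs_of_pos hr'] using h

theorem log_mean {F : Type*} [NormedAddCommGroup F] [NormedSpace ℝ F] [CompleteSpace F]
    (h : ℝ → F) (hc : Continuous h) (L : F) (C : ℝ) (hb : ∀ r, 0 < r → ‖r • h r‖ ≤ C)
    (hl : Tendsto (fun r => r • h r) atTop (nhds L)) :
    Tendsto (fun R => (log R)⁻¹ • ∫ r in (0:ℝ)..R, h r) atTop (nhds L) := by
  have e : ∀ᶠ R in atTop, (∫ t in (0:ℝ)..1, (R ^ t) • h (R ^ t)) + 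
      (log R)⁻¹ • ∫ r in (0:ℝ)..1, h r = (log R)⁻¹ • ∫ r in (0:ℝ)..R, h r := by
    filter_upwards [eventually_gt_atTop 1] with R hR
    have hR0 : 0 < R := by linarith
    have hlog : log R ≠ 0 := (log_pos hR).ne'
    rw [← intervalIntegral.integral_add_adjacent_intervals (a := 0) (b := 1) (c := R) (hc.intervalIntegrable _ _)
      (hc.intervalIntegrable _ _), smul_add, add_comm]
    congr 1
    have := intervalIntegral.integral_deriv_smul_comp (a := 0) (b := 1) 
      (f := fun t : ℝ => R ^ t) (f' := fun t : ℝ => R ^ t * log R) (g := h)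
      (fun t _ => (hasStrictDerivAt_const_rpow hR0 t).hasDerivAt)
      (by 
        have : Continuous fun t : ℝ => R ^ t := by fun_prop (disch := positivity)
        fun_prop) hc
    simp only [rpow_zero, rpow_one, Function.comp] at this
    rw [← this, ← intervalIntegral.integral_smul]
    refine intervalIntegral.integral_congr fun t _ => ?_
    simp only [smul_smul]
    congr 1
    field_simp
  refine Tendsto.congr' e ?_
  have z : Tendsto (fun R => (log R)⁻¹ • ∫ r in (0:ℝ)..1, h r) atTop (nhds 0) := by
    simpa using tendsto_log_atTop.inv_tendsto_atTop.smul_const (∫ r in (0:ℝ)..1, h r)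
  have w : Tendsto (fun R : ℝ => ∫ t in (0:ℝ)..1, (R ^ t) • h (R ^ t)) atTop
      (nhds (∫ t in (0:ℝ)..1, L)) := by
    refine intervalIntegral.tendsto_integral_filter_of_dominated_convergence (fun _ => C) ?_ ?_ 
      (by simp) ?_
    · filter_upwards [eventually_gt_atTop 0] with R hR
      have : Continuous fun t : ℝ => R ^ t := by fun_prop (disch := positivity)
      exact (this.smul (hc.comp this)).aestronglyMeasurable
    · filter_upwards [eventually_gt_atTop 0] with R hR
      exact Eventually.of_forall fun t _ => hb _ (rpow_pos_of_pos hR _)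
    · refine Eventually.of_forall fun t ht => ?_
      rw [Set.uIoc_of_le zero_le_one] at ht
      exact hl.comp (tendsto_rpow_atTop ht.1)
  simpa using w.add z

theorem log_asymptotics_drift (d : ℕ) (hd : 2 ≤ d) (γ C₁ C₂ : ℝ)
    (hγ : 2 * γ = (d : ℝ) + 1) (hC₁ : 0 < C₁) (hC₁₂ : C₁ ≤ C₂)
    (M : EuclideanSpace ℝ (Fin d) → ℝ) (hMcont : Continuous M)
    (hA1 : ∀ v, C₁ * Real.sqrt (1 + ‖v‖ ^ 2) ^ (-γ) ≤ M v ∧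
              M v ≤ C₂ * Real.sqrt (1 + ‖v‖ ^ 2) ^ (-γ))
    (m : EuclideanSpace ℝ (Fin d) → ℝ)
    (hA3 : ∀ s : EuclideanSpace ℝ (Fin d), s ≠ 0 →
      Tendsto (fun l : ℝ => l ^ (-γ) * M (l⁻¹ • s)) (nhdsWithin 0 (Set.Ioi 0))
        (nhds (m s))) :
    Tendsto (fun R : ℝ => (Real.log R)⁻¹ •
        ∫ v in Metric.closedBall (0 : EuclideanSpace ℝ (Fin d)) R, (M v) ^ 2 • v)
      atTop
      (nhds (∫ s : Metric.sphere (0 : EuclideanSpace ℝ (Fin d)) 1,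
        (m (s : EuclideanSpace ℝ (Fin d))) ^ 2 • (s : EuclideanSpace ℝ (Fin d))
          ∂((volume : Measure (EuclideanSpace ℝ (Fin d))).toSphere))) ∧
    Tendsto (fun ε : ℝ => (3 / |Real.log ε|) •
        ∫ v in Metric.closedBall (0 : EuclideanSpace ℝ (Fin d)) (ε ^ (-(1 : ℝ) / 3)),
          (M v) ^ 2 • v)
      (nhdsWithin 0 (Set.Ioi 0))
      (nhds (∫ s : Metric.sphere (0 : EuclideanSpace ℝ (Fin d)) 1,
        (m (s : EuclideanSpace ℝ (Fin d))) ^ 2 • (s : EuclideanSpace ℝ (Fin d))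
          ∂((volume : Measure (EuclideanSpace ℝ (Fin d))).toSphere))) := by
  have : Nonempty (Fin d) := ⟨⟨0, by omega⟩⟩
  have hγ0 : 0 < γ := by have : (0:ℝ) ≤ d := by positivity
                         linarith
  have hC₂ : 0 < C₂ := by linarith
  set σ := (volume : Measure (EuclideanSpace ℝ (Fin d))).toSphere with hσ
  set L := ∫ s : Metric.sphere (0 : EuclideanSpace ℝ (Fin d)) 1,
        (m (s : EuclideanSpace ℝ (Fin d))) ^ 2 • (s : EuclideanSpace ℝ (Fin d)) ∂σ with hL
  suffices H : Tendsto (fun R : ℝ => (Real.log R)⁻¹ •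
        ∫ v in Metric.closedBall (0 : EuclideanSpace ℝ (Fin d)) R, (M v) ^ 2 • v)
      atTop (nhds L) by
    refine ⟨H, ?_⟩
    have t : Tendsto (fun ε : ℝ => ε ^ (-(1 : ℝ) / 3)) (nhdsWithin 0 (Set.Ioi 0)) atTop :=
      tendsto_rpow_neg_nhdsGT_zero (by norm_num)
    refine (H.comp t).congr' ?_
    filter_upwards [Ioo_mem_nhdsGT (zero_lt_one' ℝ)] with ε hε
    simp only [Function.comp]
    congr 1
    rw [log_rpow hε.1, abs_of_neg (log_neg hε.1 hε.2)]
    have := (log_neg hε.1 hε.2).ne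
    field_simp
  let G : ℝ → EuclideanSpace ℝ (Fin d) := fun r =>
    ∫ s : Metric.sphere (0 : EuclideanSpace ℝ (Fin d)) 1, (M (r • (s : EuclideanSpace ℝ (Fin d)))) ^ 2 • (r • (s : EuclideanSpace ℝ (Fin d))) ∂σ
  have hG : Continuous G := by
    have := continuous_parametric_integral_of_continuous (μ := σ) (f := fun (r : ℝ) (s : Metric.sphere (0 : EuclideanSpace ℝ (Fin d)) 1) => (M (r • (s : EuclideanSpace ℝ (Fin d)))) ^ 2 • (r • (s : EuclideanSpace ℝ (Fin d)))) (by unfold Function.uncurry; fun_prop) isCompact_univ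
    simpa only [Measure.restrict_univ] using this
  have hpt : ∀ r : ℝ, 0 < r → r • (r ^ (d - 1) • G r) = 
      ∫ s : Metric.sphere (0 : EuclideanSpace ℝ (Fin d)) 1, (r ^ γ * M (r • (s : EuclideanSpace ℝ (Fin d)))) ^ 2 • (s : EuclideanSpace ℝ (Fin d)) ∂σ := by
    intro r hr
    rw [← integral_smul, ← integral_smul]
    refine integral_congr_ae (Eventually.of_forall fun s => ?_)
    simp only [smul_smul]
    congr 1
    have e1 : (r ^ γ) ^ 2 = r ^ (d + 1) := by
      rw [← rpow_natCast, ← rpow_mul hr.le, ← rpow_natCast]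
      congr 1; push_cast; linarith
    rw [mul_pow, e1]
    obtain ⟨k, rfl⟩ : ∃ k, d = k + 1 := ⟨d - 1, by omega⟩
    simp only [Nat.add_sub_cancel]
    ring
  have hbd : ∀ r : ℝ, 0 < r → ∀ s : Metric.sphere (0 : EuclideanSpace ℝ (Fin d)) 1,
      ‖(r ^ γ * M (r • (s : EuclideanSpace ℝ (Fin d)))) ^ 2 • (s : EuclideanSpace ℝ (Fin d))‖ ≤ C₂ ^ 2 := by
    intro r hr s
    have hs : ‖(s : EuclideanSpace ℝ (Fin d))‖ = 1 := by simp
    have hn : ‖r • (s : EuclideanSpace ℝ (Fin d))‖ = r := by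
      rw [norm_smul, hs, mul_one, Real.norm_of_nonneg hr.le]
    obtain ⟨a1, a2⟩ := hA1 (r • (s : EuclideanSpace ℝ (Fin d)))
    rw [hn] at a1 a2
    have hq : r ≤ √(1 + r ^ 2) := Real.le_sqrt_of_sq_le (by linarith)
    have hq2 : √(1 + r ^ 2) ^ (-γ) ≤ r ^ (-γ) := 
      rpow_le_rpow_of_nonpos hr hq (by linarith)
    have hq3 : r ^ γ * r ^ (-γ) = 1 := by
      rw [← rpow_add hr]; simp
    have hp : 0 < r ^ γ := rpow_pos_of_pos hr _
    have hM : 0 ≤ M (r • (s : EuclideanSpace ℝ (Fin d))) := le_trans (by positivity) a1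
    rw [norm_smul, hs, mul_one, norm_pow]
    rw [Real.norm_of_nonneg (by positivity)]
    gcongr
    calc r ^ γ * M (r • (s : EuclideanSpace ℝ (Fin d))) ≤ r ^ γ * (C₂ * r ^ (-γ)) := by
          gcongr; exact a2.trans (by gcongr)
      _ = C₂ := by rw [mul_left_comm, hq3, mul_one]
  have key := log_mean (fun r => r ^ (d - 1) • G r) (by fun_prop) L (C₂ ^ 2 * σ.real Set.univ) ?_ ?_
  · refine key.congr' ?_
    filter_upwards [eventually_ge_atTop 0] with R hR
    rw [polar_ball volume (fun v => (M v) ^ 2 • v) (by fun_prop) hR]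
    simp only [finrank_euclideanSpace_fin, G, hσ]
  · intro r hr
    simp only [hpt r hr]
    exact norm_integral_le_of_norm_le_const (Eventually.of_forall (hbd r hr))
  · have : Tendsto (fun r : ℝ => ∫ s : Metric.sphere (0 : EuclideanSpace ℝ (Fin d)) 1, (r ^ γ * M (r • (s : EuclideanSpace ℝ (Fin d)))) ^ 2 • (s : EuclideanSpace ℝ (Fin d)) ∂σ) atTop (nhds L) := by
      refine tendsto_integral_filter_of_dominated_convergence (fun _ => C₂ ^ 2) ?_ ?_ (integrable_const _) ?_
      · refine Eventually.of_forall fun r => Continuous.aestronglyMeasurable (by fun_prop)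
      · filter_upwards [eventually_gt_atTop 0] with r hr
        exact Eventually.of_forall (hbd r hr)
      · refine Eventually.of_forall fun s => ?_
        have hs : (s : EuclideanSpace ℝ (Fin d)) ≠ 0 := by
          intro h0
          have : ‖(s : EuclideanSpace ℝ (Fin d))‖ = 1 := by simp
          rw [h0] at this; simp at this
        have h3 := (hA3 s hs).comp tendsto_inv_atTop_nhdsGT_zero
        refine Tendsto.smul_const (Tendsto.pow (h3.congr' ?_) 2) _
        filter_upwards [eventually_gt_atTop 0] with r hr
        simp only [Function.comp, inv_inv]
        rw [inv_rpow hr.le, rpow_neg hr.le, inv_inv]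
    refine this.congr' ?_
    filter_upwards [eventually_gt_atTop 0] with r hr
    exact (hpt r hr).symm
end
end
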